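/- Let p : Fin n → EuclideanSpace ℝ (Fin d) be an injective family such that every p i is an extreme point of P := convexHull ℝ (Set.range p), and assume 0 ∈ interior P. Then there exists a symmetric matrix M : Matrix (Fin n) (Fin n) ℝ such that: (1) M i j > 0 whenever (i,j) is an edge of P; (2) M i j = 0 whenever i ≠ j and (i,j) is not an edge of P; (3) the kernel of the linear map v ↦ M.mulVec v has dimension d over ℝ; (4) for every i, ∑ j, (M i j) • (p j) = 0; (5) exactly one eigenvalue of M, counted with multiplicity in the list of n real eigenvalues of the real symmetric matrix M, is positive. -/

import Mathlib

/-- For `i ≠ j`, the pair `(i,j)` is an edge of the polytope `convexHull ℝ (Set.range p)`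
if the closed segment between `p i` and `p j` is an extreme subset of it. -/
def IsEdge {n d : ℕ} (p : Fin n → EuclideanSpace ℝ (Fin d)) (i j : Fin n) : Prop :=
  i ≠ j ∧ IsExtreme ℝ (convexHull ℝ (Set.range p)) (segment ℝ (p i) (p j))

set_option linter.unusedSectionVars false
set_option linter.unusedVariables false
open scoped InnerProductSpace
open Module

namespace Izm
section geom
variable {ι E : Type*} [Fintype ι] [DecidableEq ι] [NormedAddCommGroup E] [InnerProductSpace ℝ E]
  [FiniteDimensional ℝ E]

/-- `S` is the set of constraints tight at some point of the polar polytope. -/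
def IsF (p : ι → E) (S : Finset ι) : Prop :=
  ∃ x : E, (∀ i ∈ S, ⟪x, p i⟫_ℝ = 1) ∧ ∀ i, i ∉ S → ⟪x, p i⟫_ℝ < 1

open Classical in
/-- A relative interior point of the dual face of `S`. -/
noncomputable def vv (p : ι → E) (S : Finset ι) : E := if h : IsF p S then h.choose else 0

/-- Span of the vectors of `S`. -/
def sp (p : ι → E) (S : Finset ι) : Submodule ℝ E := Submodule.span ℝ (p '' (S : Set ι))

/-- Rank. -/
noncomputable def rk (p : ι → E) (S : Finset ι) : ℕ := finrank ℝ (sp p S)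

/-- Covering relation. -/
structure Cov (p : ι → E) (S T : Finset ι) : Prop where
  hS : IsF p S
  hT : IsF p T
  sub : S ⊆ T
  rk : rk p T = rk p S + 1

variable {p : ι → E} {S T U W : Finset ι}

lemma vv_eq (h : IsF p S) {i : ι} (hi : i ∈ S) : ⟪vv p S, p i⟫_ℝ = 1 := by
  rw [vv, dif_pos h]; exact h.choose_spec.1 i hi

lemma vv_lt (h : IsF p S) {i : ι} (hi : i ∉ S) : ⟪vv p S, p i⟫_ℝ < 1 := by
  rw [vv, dif_pos h]; exact h.choose_spec.2 i hi

lemma vv_le (h : IsF p S) (i : ι) : ⟪vv p S, p i⟫_ℝ ≤ 1 := by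
  by_cases hi : i ∈ S
  · exact (vv_eq h hi).le
  · exact (vv_lt h hi).le

lemma mem_sp {i : ι} (hi : i ∈ S) : p i ∈ sp p S :=
  Submodule.subset_span ⟨i, hi, rfl⟩

lemma sp_le {K : Submodule ℝ E} (h : ∀ i ∈ S, p i ∈ K) : sp p S ≤ K := by
  rw [sp, Submodule.span_le]; rintro _ ⟨i, hi, rfl⟩; exact h i hi

lemma sp_mono (h : S ⊆ T) : sp p S ≤ sp p T := sp_le fun _ hi => mem_sp (h hi)

lemma inner_sp {y : E} (h : ∀ i ∈ S, ⟪y, p i⟫_ℝ = 0) {z : E} (hz : z ∈ sp p S) :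
    ⟪y, z⟫_ℝ = 0 := by
  induction hz using Submodule.span_induction with
  | mem x hx => obtain ⟨i, hi, rfl⟩ := hx; exact h i hi
  | zero => simp
  | add x y _ _ hx hy => rw [inner_add_right, hx, hy, add_zero]
  | smul a x _ hx => rw [inner_smul_right, hx, mul_zero]

lemma vv_sub_inner (hS : IsF p S) (hT : IsF p T) (h : S ⊆ T) {z : E} (hz : z ∈ sp p S) :
    ⟪vv p T - vv p S, z⟫_ℝ = 0 :=
  inner_sp (fun i hi => by rw [inner_sub_left, vv_eq hS hi, vv_eq hT (h hi), sub_self]) hz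

lemma flat (hS : IsF p S) (hT : IsF p T) (h : S ⊆ T) {j : ι} (hj : j ∈ T) (hp : p j ∈ sp p S) :
    j ∈ S := by
  by_contra hjS
  have h1 := vv_sub_inner hS hT h hp
  rw [inner_sub_left, vv_eq hT hj] at h1
  have := vv_lt hS hjS
  linarith

lemma eq_of_rk_le (hS : IsF p S) (hT : IsF p T) (h : S ⊆ T) (hr : rk p T ≤ rk p S) : S = T := by
  have := Submodule.eq_of_le_of_finrank_le (sp_mono (p := p) h) hr
  refine Finset.Subset.antisymm h fun j hj => flat hS hT h hj ?_
  rw [this]; exact mem_sp hj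

lemma rk_lt (hS : IsF p S) (hT : IsF p T) (h : S ⊂ T) : rk p S < rk p T := by
  by_contra hc
  exact h.ne (eq_of_rk_le hS hT h.1 (not_lt.1 hc))

lemma perturb (hW : IsF p W) {y : E} (hy : ∀ j ∈ W, ⟪y, p j⟫_ℝ ≤ 0) :
    IsF p (W.filter fun j => ⟪y, p j⟫_ℝ = 0) := by
  have key : ∀ j, j ∉ W → ∀ᶠ ε in nhdsWithin (0 : ℝ) (Set.Ioi 0),
      ⟪vv p W, p j⟫_ℝ + ε * ⟪y, p j⟫_ℝ < 1 := by
    intro j hj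
    have hc : Filter.Tendsto (fun ε : ℝ => ⟪vv p W, p j⟫_ℝ + ε * ⟪y, p j⟫_ℝ) (nhds 0)
        (nhds (⟪vv p W, p j⟫_ℝ + 0 * ⟪y, p j⟫_ℝ)) := by
      apply Continuous.tendsto; fun_prop
    have := hc.eventually (Iio_mem_nhds (by simpa using vv_lt hW hj : _ < (1:ℝ)))
    exact nhdsWithin_le_nhds this
  have key2 : ∀ᶠ ε in nhdsWithin (0 : ℝ) (Set.Ioi 0), ∀ j, j ∉ W →
      ⟪vv p W, p j⟫_ℝ + ε * ⟪y, p j⟫_ℝ < 1 := by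
    rw [Filter.eventually_all]
    intro j
    by_cases hj : j ∈ W
    · simp [hj]
    · filter_upwards [key j hj] with ε h _ using h
  obtain ⟨ε, h1, h2⟩ := (key2.and self_mem_nhdsWithin).exists
  have hε : 0 < ε := h2
  refine ⟨vv p W + ε • y, fun i hi => ?_, fun i hi => ?_⟩
  · rw [Finset.mem_filter] at hi
    rw [inner_add_left, real_inner_smul_left, hi.2, vv_eq hW hi.1]; ring
  · rw [inner_add_left, real_inner_smul_left]
    by_cases hiW : i ∈ W
    · rw [vv_eq hW hiW]
      have h3 : ⟪y, p i⟫_ℝ ≠ 0 := fun h => hi (Finset.mem_filter.2 ⟨hiW, h⟩)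
      have h4 : ⟪y, p i⟫_ℝ < 0 := lt_of_le_of_ne (hy i hiW) h3
      nlinarith
    · exact h1 i hiW

lemma exit_face (hb : ∀ y : E, y ≠ 0 → ∃ i, 0 < ⟪y, p i⟫_ℝ) (hS : IsF p S) {y : E} (hy0 : y ≠ 0)
    (hy : ∀ j ∈ S, ⟪y, p j⟫_ℝ = 0) :
    ∃ (W : Finset ι) (t : ℝ), IsF p W ∧ S ⊂ W ∧ 0 < t ∧ (∀ j, ⟪vv p S + t • y, p j⟫_ℝ ≤ 1) ∧
      (∀ j ∈ W, ⟪vv p S + t • y, p j⟫_ℝ = 1) ∧ ∃ j ∈ W, 0 < ⟪y, p j⟫_ℝ := by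
  classical
  let A : Finset ι := Finset.univ.filter fun i => 0 < ⟪y, p i⟫_ℝ
  have hA : A.Nonempty := by
    obtain ⟨i, hi⟩ := hb y hy0
    exact ⟨i, by simp [A, hi]⟩
  obtain ⟨k, hkA, hk⟩ := Finset.exists_min_image A (fun i => (1 - ⟪vv p S, p i⟫_ℝ) / ⟪y, p i⟫_ℝ) hA
  have hk0 : 0 < ⟪y, p k⟫_ℝ := by simpa [A] using hkA
  have hkS : k ∉ S := fun h => by rw [hy k h] at hk0; exact lt_irrefl _ hk0
  set t := (1 - ⟪vv p S, p k⟫_ℝ) / ⟪y, p k⟫_ℝ with ht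
  have ht0 : 0 < t := div_pos (by linarith [vv_lt hS hkS]) hk0
  have hle : ∀ j, ⟪vv p S + t • y, p j⟫_ℝ ≤ 1 := by
    intro j
    rw [inner_add_left, real_inner_smul_left]
    by_cases hj : 0 < ⟪y, p j⟫_ℝ
    · have := hk j (by simp [A, hj])
      rw [le_div_iff₀ hj] at this
      linarith
    · have := vv_le hS j
      nlinarith
  refine ⟨Finset.univ.filter fun j => ⟪vv p S + t • y, p j⟫_ℝ = 1, t, ⟨vv p S + t • y, ?_, ?_⟩,
    ?_, ht0, hle, ?_, k, ?_, hk0⟩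
  · intro i hi; simpa using hi
  · intro i hi; exact lt_of_le_of_ne (hle i) (by simpa using hi)
  · refine Finset.ssubset_iff_of_subset (fun i hi => ?_) |>.2 ⟨k, ?_, hkS⟩
    · simp only [Finset.mem_filter, Finset.mem_univ, true_and]
      rw [inner_add_left, real_inner_smul_left, hy i hi, vv_eq hS hi]; ring
    · simp only [Finset.mem_filter, Finset.mem_univ, true_and]
      rw [inner_add_left, real_inner_smul_left, ht]; field_simp; ring
  · intro i hi; simpa using hi
  · simp only [Finset.mem_filter, Finset.mem_univ, true_and]
    rw [inner_add_left, real_inner_smul_left, ht]; field_simp; ring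

lemma max_slope (hS : IsF p S) (hW : IsF p W) (h : S ⊂ W) {y : E}
    (hy : ∀ j ∈ S, ⟪y, p j⟫_ℝ = 0) :
    ∃ (T : Finset ι) (t : ℝ), IsF p T ∧ S ⊂ T ∧ T ⊆ W ∧
      (∀ j ∈ T, ⟪y, p j⟫_ℝ = t * ⟪vv p W - vv p S, p j⟫_ℝ) ∧
      (∀ j ∈ W, ⟪y, p j⟫_ℝ ≤ t * ⟪vv p W - vv p S, p j⟫_ℝ) := by
  have hg : ∀ j ∈ W \ S, 0 < ⟪vv p W - vv p S, p j⟫_ℝ := by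
    intro j hj
    rw [Finset.mem_sdiff] at hj
    rw [inner_sub_left, vv_eq hW hj.1]; linarith [vv_lt hS hj.2]
  have hg0 : ∀ j ∈ S, ⟪vv p W - vv p S, p j⟫_ℝ = 0 := fun j hj =>
    vv_sub_inner hS hW h.1 (mem_sp hj)
  have hne : (W \ S).Nonempty := Finset.sdiff_nonempty.2 h.2
  obtain ⟨k, hkA, hk⟩ := Finset.exists_max_image (W \ S)
    (fun i => ⟪y, p i⟫_ℝ / ⟪vv p W - vv p S, p i⟫_ℝ) hne
  set t := ⟪y, p k⟫_ℝ / ⟪vv p W - vv p S, p k⟫_ℝ with ht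
  have hle : ∀ j ∈ W, ⟪y, p j⟫_ℝ ≤ t * ⟪vv p W - vv p S, p j⟫_ℝ := by
    intro j hj
    by_cases hjS : j ∈ S
    · rw [hy j hjS, hg0 j hjS, mul_zero]
    · have hj' : j ∈ W \ S := Finset.mem_sdiff.2 ⟨hj, hjS⟩
      have := hk j hj'
      rwa [div_le_iff₀ (hg j hj')] at this
  have hin : ∀ j, ⟪y - t • (vv p W - vv p S), p j⟫_ℝ =
      ⟪y, p j⟫_ℝ - t * ⟪vv p W - vv p S, p j⟫_ℝ := by
    intro j; rw [inner_sub_left, real_inner_smul_left]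
  refine ⟨_, t, perturb hW (y := y - t • (vv p W - vv p S)) ?_, ?_, Finset.filter_subset _ _, ?_,
    hle⟩
  · intro j hj; rw [hin]; linarith [hle j hj]
  · refine Finset.ssubset_iff_of_subset (fun i hi => ?_) |>.2 ⟨k, ?_, (Finset.mem_sdiff.1 hkA).2⟩
    · rw [Finset.mem_filter, hin, hy i hi, hg0 i hi]; exact ⟨h.1 hi, by ring⟩
    · rw [Finset.mem_filter, hin, ht]
      refine ⟨(Finset.mem_sdiff.1 hkA).1, ?_⟩
      rw [div_mul_cancel₀ _ (hg k hkA).ne', sub_self]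
  · intro j hj
    rw [Finset.mem_filter, hin] at hj
    linarith [hj.2]

lemma exists_cov (hS : IsF p S) (hW : IsF p W) (h : S ⊂ W) : ∃ T, Cov p S T ∧ T ⊆ W := by
  induction hn : W.card using Nat.strong_induction_on generalizing W with
  | _ n ih =>
    have hlt := rk_lt hS hW h
    by_cases hr : rk p W = rk p S + 1
    · exact ⟨W, ⟨hS, hW, h.1, hr⟩, Finset.Subset.refl _⟩
    obtain ⟨j0, hj0W, hj0S⟩ := Finset.exists_of_ssubset h
    set K := sp p S ⊔ Submodule.span ℝ {p j0} with hK
    have hfr : finrank ℝ K ≤ rk p S + 1 := by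
      refine (Submodule.finrank_add_le_finrank_add_finrank _ _).trans ?_
      have := finrank_span_le_card (R := ℝ) ({p j0} : Set E)
      simp only [Set.toFinset_singleton, Finset.card_singleton] at this
      unfold rk
      omega
    have : ∃ k ∈ W, p k ∉ K := by
      by_contra hc
      push Not at hc
      have := Submodule.finrank_mono (sp_le hc)
      unfold rk at *
      omega
    obtain ⟨k, hkW, hkK⟩ := this
    set y := p k - K.starProjection (p k) with hy
    have hyK : ∀ z ∈ K, ⟪y, z⟫_ℝ = 0 := fun z hz =>
      Submodule.starProjection_inner_eq_zero (K := K) (p k) z hz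
    have hy0 : y ≠ 0 := by
      intro h0
      apply hkK
      rw [hy, sub_eq_zero] at h0
      rw [h0]; exact Submodule.starProjection_apply_mem K _
    have hyk : 0 < ⟪y, p k⟫_ℝ := by
      have h1 : ⟪y, p k⟫_ℝ = ⟪y, y⟫_ℝ := by
        conv_rhs => rw [hy, inner_sub_right]
        rw [← hy, hyK _ (Submodule.starProjection_apply_mem K _), sub_zero]
      rw [h1]; exact real_inner_self_pos.2 hy0
    obtain ⟨T, t, hT, hST, hTW, h1, h2⟩ := max_slope hS hW h (y := y)
      (fun j hj => hyK _ (Submodule.mem_sup_left (mem_sp hj)))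
    have hgk := h2 k hkW
    have hnn : ∀ j ∈ W, 0 ≤ ⟪vv p W - vv p S, p j⟫_ℝ := by
      intro j hj; rw [inner_sub_left, vv_eq hW hj]; linarith [vv_le hS j]
    have ht : 0 < t := by
      by_contra hc
      nlinarith [hnn k hkW]
    have hj0T : j0 ∉ T := by
      intro hj
      have h3 := h1 j0 hj
      rw [hyK _ (Submodule.mem_sup_right (Submodule.mem_span_singleton_self _)), inner_sub_left,
        vv_eq hW hj0W] at h3
      have := vv_lt hS hj0S
      nlinarith
    have hTW' : T ⊂ W := (Finset.ssubset_iff_of_subset hTW).2 ⟨j0, hj0W, hj0T⟩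
    obtain ⟨T', hc, hs⟩ := ih T.card (hn ▸ Finset.card_lt_card hTW') hT hST rfl
    exact ⟨T', hc, hs.trans hTW⟩

lemma Cov.ssub (h : Cov p S T) : S ⊂ T := by
  refine h.sub.ssubset_of_ne ?_
  rintro rfl
  have := h.rk
  omega

lemma exists_u (h : Cov p S T) : ∃ u : E, u ∈ sp p T ∧ (∀ z ∈ sp p S, ⟪u, z⟫_ℝ = 0) ∧
    ⟪u, u⟫_ℝ = 1 ∧ (∀ j ∈ T, j ∉ S → 0 < ⟪u, p j⟫_ℝ) ∧
    ∀ z ∈ sp p T, z - ⟪u, z⟫_ℝ • u ∈ sp p S := by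
  obtain ⟨j, hjT, hjS⟩ := Finset.exists_of_ssubset h.ssub
  set z0 := p j - (sp p S).starProjection (p j) with hz0
  have hz0S : ∀ z ∈ sp p S, ⟪z0, z⟫_ℝ = 0 := fun z hz =>
    Submodule.starProjection_inner_eq_zero (K := sp p S) (p j) z hz
  have hz0T : z0 ∈ sp p T := Submodule.sub_mem _ (mem_sp hjT)
    (sp_mono h.sub (Submodule.starProjection_apply_mem _ _))
  have hz0n : z0 ≠ 0 := by
    intro h0
    apply hjS
    refine flat h.hS h.hT h.sub hjT ?_
    rw [hz0, sub_eq_zero] at h0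
    rw [h0]; exact Submodule.starProjection_apply_mem _ _
  have hn : 0 < ‖z0‖ := norm_pos_iff.2 hz0n
  set u := (‖z0‖)⁻¹ • z0 with hu
  have huT : u ∈ sp p T := Submodule.smul_mem _ _ hz0T
  have huS : ∀ z ∈ sp p S, ⟪u, z⟫_ℝ = 0 := fun z hz => by
    rw [hu, real_inner_smul_left, hz0S z hz, mul_zero]
  have huu : ⟪u, u⟫_ℝ = 1 := by
    rw [hu, real_inner_smul_left, real_inner_smul_right, real_inner_self_eq_norm_sq]
    field_simp
  have hdec : ∀ z ∈ sp p T, z - ⟪u, z⟫_ℝ • u ∈ sp p S := by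
    have huS' : u ∉ sp p S := fun hc => by rw [huS u hc] at huu; norm_num at huu
    have hle : sp p S ⊔ Submodule.span ℝ {u} ≤ sp p T :=
      sup_le (sp_mono h.sub) (by rw [Submodule.span_le]; simpa using huT)
    have hlt : sp p S < sp p S ⊔ Submodule.span ℝ {u} := by
      refine lt_of_le_of_ne le_sup_left fun hc => huS' ?_
      rw [hc]; exact Submodule.mem_sup_right (Submodule.mem_span_singleton_self _)
    have hfl := Submodule.finrank_lt_finrank_of_lt hlt
    have heq : sp p S ⊔ Submodule.span ℝ {u} = sp p T := by
      refine Submodule.eq_of_le_of_finrank_le hle ?_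
      have := h.rk
      unfold rk at this
      omega
    intro z hz
    rw [← heq, Submodule.mem_sup] at hz
    obtain ⟨s, hs, w, hw, rfl⟩ := hz
    obtain ⟨a, rfl⟩ := Submodule.mem_span_singleton.1 hw
    rw [inner_add_right, huS s hs, inner_smul_right, huu]
    simpa using hs
  refine ⟨u, huT, huS, huu, ?_, hdec⟩
  have hy : ∀ k ∈ T, ⟪vv p T - vv p S, p k⟫_ℝ = ⟪u, p k⟫_ℝ * ⟪vv p T - vv p S, u⟫_ℝ := by
    intro k hk
    have h1 := vv_sub_inner h.hS h.hT h.sub (hdec (p k) (mem_sp hk))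
    rw [inner_sub_right, real_inner_smul_right] at h1
    linarith
  have hpos : ∀ k ∈ T, k ∉ S → 0 < ⟪vv p T - vv p S, p k⟫_ℝ := by
    intro k hk hkS
    rw [inner_sub_left, vv_eq h.hT hk]; linarith [vv_lt h.hS hkS]
  have hju : 0 < ⟪u, p j⟫_ℝ := by
    have h1 : ⟪z0, p j⟫_ℝ = ⟪z0, z0⟫_ℝ := by
      conv_rhs => rw [hz0, inner_sub_right]
      rw [← hz0, hz0S _ (Submodule.starProjection_apply_mem _ _), sub_zero]
    rw [hu, real_inner_smul_left, h1]
    exact mul_pos (inv_pos.2 hn) (real_inner_self_pos.2 hz0n)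
  have hgu : 0 < ⟪vv p T - vv p S, u⟫_ℝ := by
    have := hpos j hjT hjS
    rw [hy j hjT] at this
    exact (mul_pos_iff_of_pos_left hju).1 this
  intro k hk hkS
  have := hpos k hk hkS
  rw [hy k hk] at this
  exact (mul_pos_iff_of_pos_right hgu).1 this

open Classical in
/-- Unit normal. -/
noncomputable def uu (p : ι → E) (S T : Finset ι) : E := 
  if h : Cov p S T then (exists_u h).choose else 0

lemma uu_spec (h : Cov p S T) : uu p S T ∈ sp p T ∧ (∀ z ∈ sp p S, ⟪uu p S T, z⟫_ℝ = 0) ∧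
    ⟪uu p S T, uu p S T⟫_ℝ = 1 ∧ (∀ j ∈ T, j ∉ S → 0 < ⟪uu p S T, p j⟫_ℝ) ∧
    ∀ z ∈ sp p T, z - ⟪uu p S T, z⟫_ℝ • uu p S T ∈ sp p S := by
  have := (exists_u h).choose_spec
  rw [uu, dif_pos h]; exact this

lemma Cov.u_mem (h : Cov p S T) : uu p S T ∈ sp p T := (uu_spec h).1
lemma Cov.u_perp (h : Cov p S T) {z : E} (hz : z ∈ sp p S) : ⟪uu p S T, z⟫_ℝ = 0 :=
  (uu_spec h).2.1 z hz
lemma Cov.u_perp' (h : Cov p S T) {z : E} (hz : z ∈ sp p S) : ⟪z, uu p S T⟫_ℝ = 0 := by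
  rw [real_inner_comm]; exact h.u_perp hz
lemma Cov.u_self (h : Cov p S T) : ⟪uu p S T, uu p S T⟫_ℝ = 1 := (uu_spec h).2.2.1
lemma Cov.u_pos (h : Cov p S T) {j : ι} (hj : j ∈ T) (hjS : j ∉ S) : 0 < ⟪uu p S T, p j⟫_ℝ :=
  (uu_spec h).2.2.2.1 j hj hjS
lemma Cov.u_dec (h : Cov p S T) {z : E} (hz : z ∈ sp p T) :
    z - ⟪uu p S T, z⟫_ℝ • uu p S T ∈ sp p S := (uu_spec h).2.2.2.2 z hz

/-- If `y` kills `S`, pairing with `sp T` is governed by `u`. -/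
lemma Cov.inner_of_zero (h : Cov p S T) {y : E} (hy : ∀ i ∈ S, ⟪y, p i⟫_ℝ = 0) {z : E}
    (hz : z ∈ sp p T) : ⟪y, z⟫_ℝ = ⟪uu p S T, z⟫_ℝ * ⟪y, uu p S T⟫_ℝ := by
  have h1 := inner_sp hy (h.u_dec hz)
  rw [inner_sub_right, real_inner_smul_right] at h1
  linarith

lemma face_cov (hS : IsF p S) (hW : IsF p W) (h : S ⊂ W) {y : E} (hy : ∀ j ∈ S, ⟪y, p j⟫_ℝ = 0)
    (hj : ∃ j ∈ W, 0 < ⟪y, p j⟫_ℝ) : ∃ T, Cov p S T ∧ T ⊆ W ∧ 0 < ⟪y, uu p S T⟫_ℝ := by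
  obtain ⟨T', t, hT', hST', hTW', h1, h2⟩ := max_slope hS hW h hy
  obtain ⟨j, hjW, hj⟩ := hj
  have hnn : ∀ j ∈ W, 0 ≤ ⟪vv p W - vv p S, p j⟫_ℝ := by
    intro j hj; rw [inner_sub_left, vv_eq hW hj]; linarith [vv_le hS j]
  have ht : 0 < t := by
    by_contra hc
    nlinarith [hnn j hjW, h2 j hjW]
  obtain ⟨T, hc, hTT⟩ := exists_cov hS hT' hST'
  refine ⟨T, hc, hTT.trans hTW', ?_⟩
  obtain ⟨k, hkT, hkS⟩ := Finset.exists_of_ssubset hc.ssub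
  have h3 := h1 k (hTT hkT)
  rw [hc.inner_of_zero hy (mem_sp hkT), inner_sub_left, vv_eq hW (hTW' (hTT hkT))] at h3
  have h4 := hc.u_pos hkT hkS
  have h5 := vv_lt hS hkS
  have : 0 < ⟪uu p S T, p k⟫_ℝ * ⟪y, uu p S T⟫_ℝ := by rw [h3]; exact mul_pos ht (by linarith)
  exact (mul_pos_iff_of_pos_left h4).1 this

lemma exists_cov_pos (hb : ∀ y : E, y ≠ 0 → ∃ i, 0 < ⟪y, p i⟫_ℝ) (hS : IsF p S) {y : E}
    (hy0 : y ≠ 0) (hy : ∀ j ∈ S, ⟪y, p j⟫_ℝ = 0) : ∃ T, Cov p S T ∧ 0 < ⟪y, uu p S T⟫_ℝ := by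
  obtain ⟨W, t, hW, hSW, -, -, -, hj⟩ := exit_face hb hS hy0 hy
  obtain ⟨T, h1, -, h2⟩ := face_cov hS hW hSW hy hj
  exact ⟨T, h1, h2⟩

end geom
end Izm

namespace Izm
section geom2
variable {ι E : Type*} [Fintype ι] [DecidableEq ι] [NormedAddCommGroup E] [InnerProductSpace ℝ E]
  [FiniteDimensional ℝ E]

/-- Support numbers. -/
noncomputable def hh (p : ι → E) (S T : Finset ι) : ℝ := ⟪vv p T - vv p S, uu p S T⟫_ℝ

variable {p : ι → E} {S T U W : Finset ι}

lemma vdiff_zero (hS : IsF p S) (hT : IsF p T) (h : S ⊆ T) : ∀ i ∈ S, ⟪vv p T - vv p S, p i⟫_ℝ = 0 :=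
  fun i hi => vv_sub_inner hS hT h (mem_sp hi)

lemma hh_pos (h : Cov p S T) : 0 < hh p S T := by
  obtain ⟨j, hjT, hjS⟩ := Finset.exists_of_ssubset h.ssub
  have h1 := h.inner_of_zero (vdiff_zero h.hS h.hT h.sub) (mem_sp hjT)
  rw [inner_sub_left, vv_eq h.hT hjT] at h1
  have h2 := vv_lt h.hS hjS
  have h3 := h.u_pos hjT hjS
  exact (mul_pos_iff_of_pos_left h3).1 (by rw [hh, ← h1]; linarith)

lemma hh_eq (h : Cov p S T) (hW : IsF p W) (hTW : T ⊆ W) :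
    ⟪vv p W - vv p S, uu p S T⟫_ℝ = hh p S T := by
  have := vv_sub_inner h.hT hW hTW h.u_mem
  rw [hh]
  simp only [inner_sub_left] at *
  linarith

lemma slope_le (h : Cov p S T) {z : E} (hz : ∀ i ∈ S, ⟪z, p i⟫_ℝ = 1) (hz1 : ∀ i ∈ T, ⟪z, p i⟫_ℝ ≤ 1) :
    ⟪z - vv p S, uu p S T⟫_ℝ ≤ hh p S T := by
  obtain ⟨j, hjT, hjS⟩ := Finset.exists_of_ssubset h.ssub
  have h1 := h.inner_of_zero (y := vv p T - z)
    (fun i hi => by rw [inner_sub_left, hz i hi, vv_eq h.hT (h.sub hi), sub_self]) (mem_sp hjT)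
  rw [inner_sub_left, vv_eq h.hT hjT] at h1
  have h3 := h.u_pos hjT hjS
  have : 0 ≤ ⟪vv p T - z, uu p S T⟫_ℝ := by
    by_contra hc
    have := hz1 j hjT
    nlinarith
  rw [hh]
  simp only [inner_sub_left] at *
  linarith

lemma slope_lt (h : Cov p S T) (hW : IsF p W) (hSW : S ⊆ W) (hTW : ¬ T ⊆ W) :
    ⟪vv p W - vv p S, uu p S T⟫_ℝ < hh p S T := by
  obtain ⟨j, hjT, hjW⟩ := Finset.not_subset.1 hTW
  have hjS : j ∉ S := fun hj => hjW (hSW hj)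
  have h1 := h.inner_of_zero (y := vv p T - vv p W)
    (fun i hi => by rw [inner_sub_left, vv_eq hW (hSW hi), vv_eq h.hT (h.sub hi), sub_self])
    (mem_sp hjT)
  rw [inner_sub_left, vv_eq h.hT hjT] at h1
  have h3 := h.u_pos hjT hjS
  have h2 := vv_lt hW hjW
  have : 0 < ⟪vv p T - vv p W, uu p S T⟫_ℝ :=
    (mul_pos_iff_of_pos_left h3).1 (by rw [← h1]; linarith)
  rw [hh]
  simp only [inner_sub_left] at *
  linarith

lemma Cov.eq_of_sub (h : Cov p S T) (h' : Cov p S W) (hs : T ⊆ W) : T = W :=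
  eq_of_rk_le h.hT h'.hT hs (by rw [h.rk, h'.rk])

lemma slope_lt' (h : Cov p S T) (h' : Cov p S W) (hne : T ≠ W) :
    ⟪vv p W - vv p S, uu p S T⟫_ℝ < hh p S T :=
  slope_lt h h'.hT h'.sub fun hs => hne (h.eq_of_sub h' hs)

lemma eq_zero_of_perp {K : Submodule ℝ E} {z : E} (hz : z ∈ K) (h : ∀ y ∈ K, ⟪z, y⟫_ℝ = 0) : z = 0 :=
  inner_self_eq_zero.1 (h z hz)

lemma ab_perp (h1 : Cov p S T) (h2 : Cov p T U) : ⟪uu p T U, uu p S T⟫_ℝ = 0 := h2.u_perp h1.u_mem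
lemma ab_perp' (h1 : Cov p S T) (h2 : Cov p T U) : ⟪uu p S T, uu p T U⟫_ℝ = 0 := h2.u_perp' h1.u_mem

lemma dec1 (h1 : Cov p S T) {z : E} (hz : z ∈ sp p T) (hp : ∀ y ∈ sp p S, ⟪z, y⟫_ℝ = 0) :
    z = ⟪z, uu p S T⟫_ℝ • uu p S T := by
  have h3 := h1.u_dec hz
  have := eq_zero_of_perp h3 fun y hy => by
    rw [inner_sub_left, real_inner_smul_left, hp y hy, h1.u_perp hy]; ring
  rw [sub_eq_zero] at this
  conv_lhs => rw [this]
  rw [real_inner_comm]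

lemma dec2 (h1 : Cov p S T) (h2 : Cov p T U) {z : E} (hz : z ∈ sp p U)
    (hp : ∀ y ∈ sp p S, ⟪z, y⟫_ℝ = 0) :
    z = ⟪z, uu p S T⟫_ℝ • uu p S T + ⟪z, uu p T U⟫_ℝ • uu p T U := by
  have h3 := dec1 h1 (h2.u_dec hz) fun y hy => by
    rw [inner_sub_left, real_inner_smul_left, hp y hy, h2.u_perp (sp_mono h1.sub hy)]; ring
  rw [inner_sub_left, real_inner_smul_left, ab_perp h1 h2, mul_zero, sub_zero, sub_eq_iff_eq_add] at h3
  conv_lhs => rw [h3]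
  rw [real_inner_comm z (uu p T U)]

lemma dec3 (h1 : Cov p S T) (h2 : Cov p T U) (h3 : Cov p U W) {z : E} (hz : z ∈ sp p W)
    (hp : ∀ y ∈ sp p S, ⟪z, y⟫_ℝ = 0) :
    z = ⟪z, uu p S T⟫_ℝ • uu p S T + ⟪z, uu p T U⟫_ℝ • uu p T U + ⟪z, uu p U W⟫_ℝ • uu p U W := by
  have h4 := dec2 h1 h2 (h3.u_dec hz) fun y hy => by
    rw [inner_sub_left, real_inner_smul_left, hp y hy,
      h3.u_perp (sp_mono h2.sub (sp_mono h1.sub hy))]; ring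
  rw [inner_sub_left, real_inner_smul_left, h3.u_perp (sp_mono h2.sub h1.u_mem), mul_zero, sub_zero,
    inner_sub_left, real_inner_smul_left, ab_perp h2 h3, mul_zero, sub_zero, sub_eq_iff_eq_add] at h4
  conv_lhs => rw [h4]
  rw [real_inner_comm z (uu p U W)]

/-- positivity of the off-frame inner product -/
lemma frame_pos {T' : Finset ι} (h1 : Cov p S T) (h2 : Cov p T U) (h1' : Cov p S T')
    (h2' : Cov p T' U) (hne : T ≠ T') : 0 < ⟪uu p S T', uu p T U⟫_ℝ := by
  have : ¬ T' ⊆ T := fun hs => hne (h1'.eq_of_sub h1 hs).symm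
  obtain ⟨j, hjT', hjT⟩ := Finset.not_subset.1 this
  have h3 := h2.u_pos (h2'.sub hjT') hjT
  have h4 := inner_sp (S := S) (y := uu p T U) (fun i hi => h2.u_perp (mem_sp (h1.sub hi)))
    (h1'.u_dec (mem_sp hjT'))
  rw [inner_sub_right, real_inner_smul_right] at h4
  have h5 := h1'.u_pos hjT' fun hj => hjT (h1.sub hj)
  have h6 : 0 < ⟪uu p S T', p j⟫_ℝ * ⟪uu p T U, uu p S T'⟫_ℝ := by linarith
  rw [real_inner_comm]
  exact (mul_pos_iff_of_pos_left h5).1 h6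

lemma frame {T' : Finset ι} (h1 : Cov p S T) (h2 : Cov p T U) (h1' : Cov p S T')
    (h2' : Cov p T' U) (hne : T ≠ T') : ∃ c s : ℝ, 0 < s ∧ c ^ 2 + s ^ 2 = 1 ∧
      uu p S T' = c • uu p S T + s • uu p T U ∧ uu p T' U = s • uu p S T - c • uu p T U := by
  have hs := frame_pos h1 h2 h1' h2' hne
  have hx := frame_pos h1' h2' h1 h2 hne.symm
  have hA := dec2 h1 h2 (sp_mono h2'.sub h1'.u_mem) (fun y hy => h1'.u_perp hy)
  have hB := dec2 h1 h2 h2'.u_mem (fun y hy => h2'.u_perp (sp_mono h1'.sub hy))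
  rw [real_inner_comm] at hx
  set c := ⟪uu p S T', uu p S T⟫_ℝ
  set s := ⟪uu p S T', uu p T U⟫_ℝ
  set x := ⟪uu p T' U, uu p S T⟫_ℝ
  set y := ⟪uu p T' U, uu p T U⟫_ℝ
  have e1 := h1'.u_self
  have e2 := h2'.u_self
  have e3 := ab_perp' h1' h2'
  rw [hA] at e1
  rw [hB] at e2
  rw [hA, hB] at e3
  simp only [inner_add_left, inner_add_right, real_inner_smul_left, real_inner_smul_right, h1.u_self,
    h2.u_self, ab_perp h1 h2, ab_perp' h1 h2] at e1 e2 e3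
  have hxs : x = s := by
    have : x ^ 2 = s ^ 2 := by
      have h5 : c * x = - (s * y) := by linarith
      have h6 : (c * x) ^ 2 = (s * y) ^ 2 := by rw [h5]; ring
      nlinarith
    exact (pow_left_inj₀ hx.le hs.le two_ne_zero).1 this
  have hyc : y = -c := by
    have : s * (y + c) = 0 := by rw [hxs] at e3; linarith
    rcases mul_eq_zero.1 this with h | h
    · exact absurd h hs.ne'
    · linarith
  refine ⟨c, s, hs, by linarith, hA, ?_⟩
  rw [hB, hxs, hyc, neg_smul, sub_eq_add_neg]

open Classical in
/-- covers of S -/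
noncomputable def cv (p : ι → E) (S : Finset ι) : Finset (Finset ι) :=
  Finset.univ.filter fun T => Cov p S T
open Classical in
/-- elements between -/
noncomputable def btw (p : ι → E) (S U : Finset ι) : Finset (Finset ι) :=
  Finset.univ.filter fun T => Cov p S T ∧ Cov p T U
open Classical in
/-- second covers of S -/
noncomputable def cv2 (p : ι → E) (S : Finset ι) : Finset (Finset ι) :=
  Finset.univ.filter fun U => ∃ T, Cov p S T ∧ Cov p T U

@[simp] lemma mem_cv : T ∈ cv p S ↔ Cov p S T := by simp [cv]
@[simp] lemma mem_btw : T ∈ btw p S U ↔ Cov p S T ∧ Cov p T U := by simp [btw]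
@[simp] lemma mem_cv2 : U ∈ cv2 p S ↔ ∃ T, Cov p S T ∧ Cov p T U := by simp [cv2]

lemma sum_swap {A : Type*} [AddCommMonoid A] (f : Finset ι → Finset ι → A) :
    ∑ T ∈ cv p S, ∑ U ∈ cv p T, f T U = ∑ U ∈ cv2 p S, ∑ T ∈ btw p S U, f T U := by
  apply Finset.sum_comm'
  intro x y
  simp only [mem_cv, mem_btw, mem_cv2]
  constructor
  · rintro ⟨a, b⟩; exact ⟨⟨a, b⟩, x, a, b⟩
  · rintro ⟨⟨a, b⟩, _⟩; exact ⟨a, b⟩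

lemma cov_of_le (hS : IsF p S) (hT : IsF p T) (h : S ⊆ T) (hr : rk p T = rk p S + 1) : Cov p S T :=
  ⟨hS, hT, h, hr⟩

lemma btw_other (h1 : Cov p S T) (h2 : Cov p T U) : ∃ T', Cov p S T' ∧ Cov p T' U ∧ T ≠ T' ∧
    btw p S U = {T, T'} := by
  have hSU : S ⊂ U := h1.ssub.trans h2.ssub
  obtain ⟨R, t, hR, hSR, hRU, e1, e2⟩ := max_slope h1.hS h2.hT hSU (y := uu p T U)
    (fun j hj => h2.u_perp (mem_sp (h1.sub hj)))
  obtain ⟨j, hjU, hjT⟩ := Finset.exists_of_ssubset h2.ssub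
  have hnn : ∀ j ∈ U, 0 ≤ ⟪vv p U - vv p S, p j⟫_ℝ := by
    intro j hj; rw [inner_sub_left, vv_eq h2.hT hj]; linarith [vv_le h1.hS j]
  have ht : 0 < t := by
    by_contra hc
    nlinarith [hnn j hjU, e2 j hjU, h2.u_pos hjU hjT]
  obtain ⟨T', hc, hTR⟩ := exists_cov h1.hS hR hSR
  have hne : T ≠ T' := by
    rintro rfl
    obtain ⟨k, hkT, hkS⟩ := Finset.exists_of_ssubset hc.ssub
    have h3 := e1 k (hTR hkT)
    rw [h2.u_perp (mem_sp hkT), inner_sub_left, vv_eq h2.hT (hRU (hTR hkT))] at h3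
    have h5 := vv_lt h1.hS hkS
    nlinarith
  have hc2 : Cov p T' U := cov_of_le hc.hT h2.hT (hTR.trans hRU) (by rw [h2.rk, h1.rk, hc.rk])
  refine ⟨T', hc, hc2, hne, ?_⟩
  ext V
  simp only [mem_btw, Finset.mem_insert, Finset.mem_singleton]
  constructor
  · rintro ⟨g1, g2⟩
    by_contra hV
    push Not at hV
    obtain ⟨c, s, hs, -, eA, eB⟩ := frame h1 h2 hc hc2 hne
    obtain ⟨c', s', hs', -, eA', eB'⟩ := frame h1 h2 g1 g2 hV.1.symm
    have q1 := frame_pos hc hc2 g1 g2 hV.2.symm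
    have q2 := frame_pos g1 g2 hc hc2 hV.2
    rw [eA', eB] at q1
    rw [eA, eB'] at q2
    simp only [inner_add_left, inner_add_right, inner_sub_right, real_inner_smul_left,
      real_inner_smul_right, h1.u_self, h2.u_self, ab_perp h1 h2, ab_perp' h1 h2] at q1 q2
    linarith
  · rintro (rfl | rfl)
    · exact ⟨h1, h2⟩
    · exact ⟨hc, hc2⟩

lemma btw_sum {A : Type*} [AddCommMonoid A] (h1 : Cov p S T) (h2 : Cov p T U) {T' : Finset ι}
    (hne : T ≠ T') (hb : btw p S U = {T, T'}) (f : Finset ι → A) :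
    ∑ V ∈ btw p S U, f V = f T + f T' := by
  rw [hb, Finset.sum_pair hne]

/-- symmetry of the flag sums -/
lemma btw_symm (h1 : Cov p S T) (h2 : Cov p T U) (g w : E) :
    ∑ V ∈ btw p S U, ⟪g, uu p S V⟫_ℝ * ⟪w, uu p V U⟫_ℝ =
      ∑ V ∈ btw p S U, ⟪w, uu p S V⟫_ℝ * ⟪g, uu p V U⟫_ℝ := by
  obtain ⟨T', h1', h2', hne, hb⟩ := btw_other h1 h2
  rw [btw_sum h1 h2 hne hb, btw_sum h1 h2 hne hb]
  obtain ⟨c, s, hs, h, eA, eB⟩ := frame h1 h2 h1' h2' hne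
  rw [eA, eB]
  simp only [inner_add_right, inner_sub_right, real_inner_smul_right]
  linear_combination (⟪w, uu p S T⟫_ℝ * ⟪g, uu p T U⟫_ℝ-⟪g, uu p S T⟫_ℝ * ⟪w, uu p T U⟫_ℝ) * h

lemma exists_perp {K : Submodule ℝ E} (h : finrank ℝ K < finrank ℝ E) :
    ∃ y : E, y ≠ 0 ∧ ∀ z ∈ K, ⟪y, z⟫_ℝ = 0 := by
  have : Kᗮ ≠ ⊥ := by
    intro hc
    rw [Submodule.orthogonal_eq_bot_iff] at hc
    rw [hc, finrank_top] at h
    exact lt_irrefl _ h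
  obtain ⟨y, hy, hy0⟩ := Submodule.exists_mem_ne_zero_of_ne_bot this
  exact ⟨y, hy0, fun z hz => Submodule.inner_left_of_mem_orthogonal hz hy⟩

lemma cv_nonempty (hb : ∀ y : E, y ≠ 0 → ∃ i, 0 < ⟪y, p i⟫_ℝ) (hS : IsF p S)
    (h : rk p S < finrank ℝ E) : ∃ T, Cov p S T := by
  obtain ⟨y, hy0, hy⟩ := exists_perp h
  obtain ⟨T, hT, -⟩ := exists_cov_pos hb hS hy0 fun j hj => hy _ (mem_sp hj)
  exact ⟨T, hT⟩

lemma sp_top (h : rk p S = finrank ℝ E) : sp p S = ⊤ := Submodule.eq_top_of_finrank_eq h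

lemma top_other (hb : ∀ y : E, y ≠ 0 → ∃ i, 0 < ⟪y, p i⟫_ℝ) (h1 : Cov p S T)
    (hd : rk p T = finrank ℝ E) : ∃ T', Cov p S T' ∧ T ≠ T' ∧ cv p S = {T, T'} ∧
      uu p S T' = - uu p S T := by
  have hall : ∀ V, Cov p S V → uu p S V = ⟪uu p S V, uu p S T⟫_ℝ • uu p S T := fun V hV =>
    dec1 h1 (by rw [sp_top hd]; trivial) fun y hy => hV.u_perp hy
  have hsq : ∀ V, Cov p S V → ⟪uu p S V, uu p S T⟫_ℝ = 1 ∨ ⟪uu p S V, uu p S T⟫_ℝ = -1 := by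
    intro V hV
    have e1 := hV.u_self
    rw [hall V hV] at e1
    rw [real_inner_smul_left, real_inner_smul_right, h1.u_self] at e1
    exact mul_self_eq_one_iff.1 (by linarith)
  have huniq : ∀ V V', Cov p S V → Cov p S V' → uu p S V = uu p S V' → V = V' := by
    intro V V' hV hV' he
    by_contra hne
    have a1 := slope_lt' hV hV' hne
    have a2 := slope_lt' hV' hV (Ne.symm hne)
    unfold hh at a1 a2
    rw [he] at a1
    linarith
  obtain ⟨T', hT', hpos⟩ := exists_cov_pos hb h1.hS (y := - uu p S T)
    (by intro h; have := h1.u_self; rw [neg_eq_zero] at h; rw [h] at this; simp at this)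
    (fun j hj => by rw [inner_neg_left, h1.u_perp (mem_sp hj), neg_zero])
  rw [inner_neg_left, real_inner_comm] at hpos
  have hm1 : ⟪uu p S T', uu p S T⟫_ℝ = -1 := by
    rcases hsq T' hT' with h | h
    · linarith
    · exact h
  have heq : uu p S T' = - uu p S T := by rw [hall T' hT', hm1]; simp
  have hne : T ≠ T' := by
    rintro rfl
    rw [h1.u_self] at hm1; norm_num at hm1
  refine ⟨T', hT', hne, ?_, heq⟩
  ext V
  simp only [mem_cv, Finset.mem_insert, Finset.mem_singleton]
  constructor
  · intro hV
    rcases hsq V hV with h | h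
    · left; apply huniq V T hV h1; rw [hall V hV, h, one_smul]
    · right; apply huniq V T' hV hT'; rw [hall V hV, h, heq]; simp
  · rintro (rfl | rfl)
    · exact h1
    · exact hT'

/-- Connectivity of the link. -/
lemma conn (hb : ∀ y : E, y ≠ 0 → ∃ i, 0 < ⟪y, p i⟫_ℝ) (hd : rk p S + 2 ≤ finrank ℝ E)
    {X : Type*} (f : Finset ι → X)
    (hf : ∀ T T' U, Cov p S T → Cov p S T' → Cov p T U → Cov p T' U → f T = f T')
    {T₁ k : Finset ι} (hT₁ : Cov p S T₁) (hk : Cov p S k) : f T₁ = f k := by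
  classical
  by_contra hne
  have hS := hk.hS
  set ρ : Finset ι → ℝ := fun T => ⟪vv p k - vv p S, uu p S T⟫_ℝ / hh p S T with hρ
  obtain ⟨T0, hT0, hmax⟩ := Finset.exists_max_image ((cv p S).filter fun T => f T = f T₁) ρ
    ⟨T₁, by simp [hT₁]⟩
  simp only [Finset.mem_filter, mem_cv] at hT0 hmax
  have c0 := hT0.1
  have h0k : T0 ≠ k := by rintro rfl; exact hne hT0.2.symm
  set m := ρ T0 with hm
  have hp0 := hh_pos c0
  have hm1 : m < 1 := by
    rw [hm, hρ]; simp only; rw [div_lt_one hp0]; exact slope_lt' c0 hk h0k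
  have hmh : ⟪vv p k - vv p S, uu p S T0⟫_ℝ = m * hh p S T0 := by
    rw [hm, hρ]; simp only; rw [div_mul_cancel₀ _ hp0.ne']
  set y' := (vv p k - vv p S) - m • (vv p T0 - vv p S) with hy'
  have hy'0 : ∀ j ∈ T0, ⟪y', p j⟫_ℝ = 0 := by
    intro j hj
    have z1 : ∀ i ∈ S, ⟪y', p i⟫_ℝ = 0 := by
      intro i hi
      rw [hy', inner_sub_left, real_inner_smul_left, vdiff_zero hS hk.hT hk.sub i hi,
        vdiff_zero hS c0.hT c0.sub i hi]; ring
    rw [c0.inner_of_zero z1 (mem_sp hj), hy', inner_sub_left, real_inner_smul_left, hmh]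
    unfold hh; ring
  -- values
  have hval : ∀ T, Cov p S T → ⟪y', uu p S T⟫_ℝ =
      ⟪vv p k - vv p S, uu p S T⟫_ℝ - m * ⟪vv p T0 - vv p S, uu p S T⟫_ℝ := by
    intro T hT; rw [hy', inner_sub_left, real_inner_smul_left]
  have hρle : ∀ T' U, Cov p S T' → Cov p T0 U → Cov p T' U →
      ⟪vv p k - vv p S, uu p S T'⟫_ℝ ≤ m * hh p S T' := by
    intro T' U h1 h2 h3
    have := hmax T' ⟨h1, (hf T' T0 U h1 c0 h3 h2).trans hT0.2⟩
    rw [hρ] at this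
    simp only at this
    rwa [div_le_iff₀ (hh_pos h1)] at this
  have hσk := slope_lt' hk c0 h0k.symm
  have hpk := hh_pos hk
  have hkk : ⟪vv p k - vv p S, uu p S k⟫_ℝ = hh p S k := rfl
  by_cases hz : y' = 0
  · obtain ⟨U, hU⟩ := cv_nonempty hb c0.hT (by rw [c0.rk]; omega)
    obtain ⟨T', g1, g2, gne, -⟩ := btw_other c0 hU
    have v1 := hval k hk
    have v2 := hval T' g1
    rw [hz, inner_zero_left] at v1 v2
    rw [hkk] at v1
    have l1 := hρle T' U g1 hU g2
    have l2 := slope_lt' g1 c0 gne.symm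
    have hm0 : m < 0 := by
      by_contra hc
      nlinarith
    nlinarith
  · obtain ⟨W, t, hW, hSW, ht, hle, heq, hj⟩ := exit_face hb c0.hT hz hy'0
    obtain ⟨U, hU, hUW, -⟩ := face_cov c0.hT hW hSW hy'0 hj
    obtain ⟨T', g1, g2, gne, -⟩ := btw_other c0 hU
    have l1 := hρle T' U g1 hU g2
    have l2 := slope_lt' g1 c0 gne.symm
    have zS : ∀ i ∈ S, ⟪vv p T0 + t • y', p i⟫_ℝ = 1 := fun i hi => by
      rw [inner_add_left, real_inner_smul_left, hy'0 i (c0.sub hi), vv_eq c0.hT (c0.sub hi)]; ring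
    have e1 : ⟪vv p T0 + t • y' - vv p S, uu p S T'⟫_ℝ = hh p S T' := by
      have := inner_sp (S := T') (y := vv p T0 + t • y' - vv p T') (fun i hi => by
        rw [inner_sub_left, heq i (hUW (g2.sub hi)), vv_eq g1.hT hi, sub_self]) g1.u_mem
      unfold hh
      simp only [inner_sub_left] at *
      linarith
    have e2 := slope_le hk zS fun i _ => hle i
    have e3 : ∀ T, ⟪vv p T0 + t • y' - vv p S, uu p S T⟫_ℝ =
        ⟪vv p T0 - vv p S, uu p S T⟫_ℝ + t * ⟪y', uu p S T⟫_ℝ := by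
      intro T
      simp only [inner_sub_left, inner_add_left, real_inner_smul_left]; ring
    rw [e3, hval _ g1] at e1
    rw [e3, hval _ hk, hkk] at e2
    set σ := ⟪vv p T0 - vv p S, uu p S T'⟫_ℝ
    set σk := ⟪vv p T0 - vv p S, uu p S k⟫_ℝ
    set h' := hh p S T'
    set hk' := hh p S k
    have q1 : 1 ≤ t * m := by
      by_contra hc
      push Not at hc
      have : t * ⟪vv p k - vv p S, uu p S T'⟫_ℝ ≤ t * (m * h') := mul_le_mul_of_nonneg_left l1 ht.le
      nlinarith
    have q2 : t * m < t := by nlinarith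
    nlinarith

end geom2
end Izm

namespace Izm
section form
variable {ι E : Type*} [Fintype ι] [DecidableEq ι] [NormedAddCommGroup E] [InnerProductSpace ℝ E]
  [FiniteDimensional ℝ E]

/-- weights with fuel -/
noncomputable def wt (p : ι → E) : ℕ → Finset ι → ℝ
  | 0, _ => 1
  | k + 1, S => (∑ T ∈ cv p S, hh p S T * wt p k T) / (k + 1)

/-- corank -/
noncomputable def RR (p : ι → E) (S : Finset ι) : ℕ := finrank ℝ E - rk p S

/-- weights (normalised volumes of faces) -/
noncomputable def cc (p : ι → E) (S : Finset ι) : ℝ := wt p (RR p S) S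

variable {p : ι → E} {S T U W : Finset ι}

lemma rk_le (p : ι → E) (S : Finset ι) : rk p S ≤ finrank ℝ E := Submodule.finrank_le _

lemma Cov.RR (h : Cov p S T) : RR p S = RR p T + 1 := by
  have := h.rk
  have := rk_le p T
  unfold Izm.RR; omega

lemma rk_lt_of_RR {k : ℕ} (h : RR p S = k + 1) : rk p S < finrank ℝ E := by
  unfold RR at h; omega

lemma rk_eq_of_RR (h : RR p S = 0) : rk p S = finrank ℝ E := by
  have := rk_le p S
  unfold RR at h; omega

lemma cc_zero (h : RR p S = 0) : cc p S = 1 := by rw [cc, h, wt]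

lemma cc_rec {k : ℕ} (h : RR p S = k + 1) : ((k : ℝ) + 1) * cc p S = ∑ T ∈ cv p S, hh p S T * cc p T := by
  rw [cc, h, wt, mul_div_cancel₀ _ (by positivity)]
  refine Finset.sum_congr rfl fun T hT => ?_
  have := (mem_cv.1 hT).RR
  rw [cc, show RR p T = k by omega]


lemma cc_pos (hb : ∀ y : E, y ≠ 0 → ∃ i, 0 < ⟪y, p i⟫_ℝ) (hS : IsF p S) : 0 < cc p S := by
  induction hk : RR p S generalizing S with
  | zero => rw [cc_zero hk]; norm_num
  | succ k ih =>
    have h1 := cc_rec hk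
    obtain ⟨T, hT⟩ := cv_nonempty hb hS (rk_lt_of_RR hk)
    have h2 : 0 < ∑ T ∈ cv p S, hh p S T * cc p T := by
      refine Finset.sum_pos (fun T hT => ?_) ⟨T, mem_cv.2 hT⟩
      rw [mem_cv] at hT
      have := hT.RR
      exact mul_pos (hh_pos hT) (ih hT.hT (by omega))
    rw [← h1] at h2
    exact (mul_pos_iff_of_pos_left (by positivity)).1 h2

lemma balance (hb : ∀ y : E, y ≠ 0 → ∃ i, 0 < ⟪y, p i⟫_ℝ) (hS : IsF p S) {k : ℕ} (hk : RR p S = k + 1) (y : E) :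
    ∑ T ∈ cv p S, cc p T * ⟪y, uu p S T⟫_ℝ = 0 := by
  induction k generalizing S y with
  | zero =>
    obtain ⟨T, hT⟩ := cv_nonempty hb hS (rk_lt_of_RR hk)
    have hT0 : RR p T = 0 := by have := hT.RR; omega
    obtain ⟨T', hT', hne, hcv, hu⟩ := top_other hb hT (rk_eq_of_RR hT0)
    have hT0' : RR p T' = 0 := by have := hT'.RR; omega
    rw [hcv, Finset.sum_pair hne, hu, cc_zero hT0, cc_zero hT0', inner_neg_right]; ring
  | succ k ih =>
    have h0 : ∀ T ∈ cv p S, ∀ y, ∑ U ∈ cv p T, cc p U * ⟪y, uu p T U⟫_ℝ = 0 := by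
      intro T hT y
      rw [mem_cv] at hT
      have := hT.RR
      exact ih hT.hT (by omega) y
    have h1 : ∀ T ∈ cv p S, ((k : ℝ) + 1) * cc p T =
        ∑ U ∈ cv p T, cc p U * ⟪vv p U - vv p S, uu p T U⟫_ℝ := by
      intro T hT
      have h2 := h0 T hT (vv p T - vv p S)
      rw [mem_cv] at hT
      have := hT.RR
      rw [cc_rec (k := k) (by omega), ← add_zero (∑ T_1 ∈ cv p T, _), ← h2, ← Finset.sum_add_distrib]
      refine Finset.sum_congr rfl fun U hU => ?_
      unfold hh
      simp only [inner_sub_left]; ring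
    have h2 : ((k : ℝ) + 1) * ∑ T ∈ cv p S, cc p T * ⟪y, uu p S T⟫_ℝ =
        ∑ T ∈ cv p S, ∑ U ∈ cv p T, cc p U * (⟪y, uu p S T⟫_ℝ * ⟪vv p U - vv p S, uu p T U⟫_ℝ) := by
      rw [Finset.mul_sum]
      refine Finset.sum_congr rfl fun T hT => ?_
      rw [← mul_assoc, h1 T hT, Finset.sum_mul]
      refine Finset.sum_congr rfl fun U hU => ?_
      ring
    have h3 : ∑ T ∈ cv p S, ∑ U ∈ cv p T,
        cc p U * (⟪y, uu p S T⟫_ℝ * ⟪vv p U - vv p S, uu p T U⟫_ℝ) =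
        ∑ T ∈ cv p S, ∑ U ∈ cv p T, cc p U * (hh p S T * ⟪y, uu p T U⟫_ℝ) := by
      rw [sum_swap, sum_swap]
      refine Finset.sum_congr rfl fun U hU => ?_
      obtain ⟨T, hT1, hT2⟩ := mem_cv2.1 hU
      rw [← Finset.mul_sum, ← Finset.mul_sum, btw_symm hT1 hT2]
      congr 1
      refine Finset.sum_congr rfl fun V hV => ?_
      rw [mem_btw] at hV
      rw [hh_eq hV.1 hV.2.hT hV.2.sub]
    have h4 : ∑ T ∈ cv p S, ∑ U ∈ cv p T, cc p U * (hh p S T * ⟪y, uu p T U⟫_ℝ) = 0 := by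
      refine Finset.sum_eq_zero fun T hT => ?_
      have := h0 T hT y
      rw [show (0 : ℝ) = hh p S T * 0 by ring, ← this, Finset.mul_sum]
      refine Finset.sum_congr rfl fun U hU => ?_
      ring
    rw [h3, h4] at h2
    have : (k : ℝ) + 1 ≠ 0 := by positivity
    exact (mul_eq_zero.1 h2).resolve_left this

lemma cc_rec' (hb : ∀ y : E, y ≠ 0 → ∃ i, 0 < ⟪y, p i⟫_ℝ) (hS : IsF p S) {k : ℕ} (hk : RR p S = k + 1) (q : E) :
    ((k : ℝ) + 1) * cc p S = ∑ T ∈ cv p S, cc p T * ⟪vv p T - q, uu p S T⟫_ℝ := by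
  have h2 := balance hb hS hk (vv p S - q)
  rw [cc_rec hk, ← add_zero (∑ T_1 ∈ cv p S, _), ← h2, ← Finset.sum_add_distrib]
  refine Finset.sum_congr rfl fun U hU => ?_
  unfold hh
  simp only [inner_sub_left]; ring


lemma lift_exists (h1 : Cov p S T) (h2 : Cov p T U) (x : Finset ι → ℝ) :
    ∃ w : E, ∀ V ∈ btw p S U, ⟪w, uu p S V⟫_ℝ = x V := by
  obtain ⟨T', h1', h2', hne, hb⟩ := btw_other h1 h2
  obtain ⟨c, s, hs, h, eA, eB⟩ := frame h1 h2 h1' h2' hne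
  refine ⟨x T • uu p S T + ((x T' - c * x T) / s) • uu p T U, ?_⟩
  rw [hb]
  intro V hV
  simp only [Finset.mem_insert, Finset.mem_singleton] at hV
  rcases hV with rfl | rfl
  · simp only [inner_add_left, real_inner_smul_left, h1.u_self, ab_perp h1 h2]; ring
  · rw [eA]
    simp only [inner_add_left, inner_add_right, real_inner_smul_left, real_inner_smul_right,
      h1.u_self, ab_perp h1 h2, ab_perp' h1 h2, h2.u_self]
    field_simp; ring

open Classical in
/-- a vector realising `x` on the diamond -/
noncomputable def lift (p : ι → E) (S U : Finset ι) (x : Finset ι → ℝ) : E :=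
  if h : ∃ w : E, ∀ V ∈ btw p S U, ⟪w, uu p S V⟫_ℝ = x V then h.choose else 0

lemma lift_spec (h1 : Cov p S T) (h2 : Cov p T U) (x : Finset ι → ℝ) {V : Finset ι}
    (g1 : Cov p S V) (g2 : Cov p V U) : ⟪lift p S U x, uu p S V⟫_ℝ = x V := by
  have h := lift_exists h1 h2 x
  rw [lift, dif_pos h]
  exact h.choose_spec V (mem_btw.2 ⟨g1, g2⟩)

/-- restriction -/
noncomputable def res (p : ι → E) (S : Finset ι) (x : Finset ι → ℝ) (T U : Finset ι) : ℝ :=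
  ⟪lift p S U x, uu p T U⟫_ℝ

lemma plane_uniq (h1 : Cov p S T) (h2 : Cov p T U) {w w' : E}
    (hw : ∀ V, Cov p S V → Cov p V U → ⟪w, uu p S V⟫_ℝ = ⟪w', uu p S V⟫_ℝ) :
    ⟪w, uu p T U⟫_ℝ = ⟪w', uu p T U⟫_ℝ := by
  obtain ⟨T', h1', h2', hne, hb⟩ := btw_other h1 h2
  obtain ⟨c, s, hs, h, eA, eB⟩ := frame h1 h2 h1' h2' hne
  have a1 := hw T h1 h2
  have a2 := hw T' h1' h2'
  rw [eA] at a2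
  simp only [inner_add_right, real_inner_smul_right] at a2
  rw [a1] at a2
  exact mul_left_cancel₀ hs.ne' (by linarith)

lemma res_eq (h1 : Cov p S T) (h2 : Cov p T U) {x : Finset ι → ℝ} {w : E}
    (hw : ∀ V, Cov p S V → Cov p V U → ⟪w, uu p S V⟫_ℝ = x V) :
    res p S x T U = ⟪w, uu p T U⟫_ℝ :=
  plane_uniq h1 h2 fun V g1 g2 => by rw [hw V g1 g2, lift_spec h1 h2 x g1 g2]

lemma res_add (h1 : Cov p S T) (h2 : Cov p T U) (x y : Finset ι → ℝ) :
    res p S (x + y) T U = res p S x T U + res p S y T U := by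
  rw [res_eq h1 h2 (x := x + y) (w := lift p S U x + lift p S U y), inner_add_left]; rfl
  intro V g1 g2
  rw [inner_add_left, lift_spec h1 h2 x g1 g2, lift_spec h1 h2 y g1 g2]; rfl

lemma res_smul (h1 : Cov p S T) (h2 : Cov p T U) (a : ℝ) (x : Finset ι → ℝ) :
    res p S (a • x) T U = a * res p S x T U := by
  rw [res_eq h1 h2 (x := a • x) (w := a • lift p S U x), real_inner_smul_left]; rfl
  intro V g1 g2
  rw [real_inner_smul_left, lift_spec h1 h2 x g1 g2]; rfl

lemma res_congr (h1 : Cov p S T) (h2 : Cov p T U) {x y : Finset ι → ℝ}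
    (h : ∀ V, Cov p S V → x V = y V) : res p S x T U = res p S y T U := by
  rw [res_eq h1 h2 (x := x) (w := lift p S U y)]; rfl
  intro V g1 g2
  rw [lift_spec h1 h2 y g1 g2, h V g1]

lemma res_lin (h1 : Cov p S T) (h2 : Cov p T U) (y : E) :
    res p S (fun V => ⟪y, uu p S V⟫_ℝ) T U = ⟪y, uu p T U⟫_ℝ :=
  res_eq h1 h2 fun V _ _ => rfl

lemma res_hh (h1 : Cov p S T) (h2 : Cov p T U) :
    res p S (hh p S) T U = ⟪vv p U - vv p S, uu p T U⟫_ℝ :=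
  res_eq h1 h2 fun V g1 g2 => hh_eq g1 g2.hT g2.sub

/-- mixed face functional -/
noncomputable def al (p : ι → E) (S : Finset ι) (x : Finset ι → ℝ) (T : Finset ι) : ℝ :=
  ∑ U ∈ cv p T, cc p U * res p S x T U

/-- The quadratic form -/
noncomputable def AA (p : ι → E) (S : Finset ι) (x y : Finset ι → ℝ) : ℝ :=
  ∑ T ∈ cv p S, x T * al p S y T

lemma al_add (h1 : Cov p S T) (x y : Finset ι → ℝ) :
    al p S (x + y) T = al p S x T + al p S y T := by
  unfold al
  rw [← Finset.sum_add_distrib]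
  refine Finset.sum_congr rfl fun U hU => ?_
  rw [res_add h1 (mem_cv.1 hU)]; ring

lemma al_smul (h1 : Cov p S T) (a : ℝ) (x : Finset ι → ℝ) :
    al p S (a • x) T = a * al p S x T := by
  unfold al
  rw [Finset.mul_sum]
  refine Finset.sum_congr rfl fun U hU => ?_
  rw [res_smul h1 (mem_cv.1 hU)]; ring

lemma al_congr (h1 : Cov p S T) {x y : Finset ι → ℝ} (h : ∀ V, Cov p S V → x V = y V) :
    al p S x T = al p S y T := by
  unfold al
  refine Finset.sum_congr rfl fun U hU => ?_
  rw [res_congr h1 (mem_cv.1 hU) h]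

lemma AA_symm (x y : Finset ι → ℝ) : AA p S x y = AA p S y x := by
  have key : ∀ x y, AA p S x y = ∑ U ∈ cv2 p S, cc p U *
      ∑ T ∈ btw p S U, ⟪lift p S U x, uu p S T⟫_ℝ * ⟪lift p S U y, uu p T U⟫_ℝ := by
    intro x y
    unfold AA al
    simp_rw [Finset.mul_sum]
    rw [sum_swap]
    refine Finset.sum_congr rfl fun U hU => ?_
    refine Finset.sum_congr rfl fun T hT => ?_
    rw [mem_btw] at hT
    rw [lift_spec hT.1 hT.2 x hT.1 hT.2]
    unfold res; ring
  rw [key, key]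
  refine Finset.sum_congr rfl fun U hU => ?_
  obtain ⟨T, hT1, hT2⟩ := mem_cv2.1 hU
  rw [btw_symm hT1 hT2]

lemma AA_add_left (x y z : Finset ι → ℝ) : AA p S (x + y) z = AA p S x z + AA p S y z := by
  unfold AA
  rw [← Finset.sum_add_distrib]
  refine Finset.sum_congr rfl fun U hU => ?_
  rw [Pi.add_apply]; ring

lemma AA_smul_left (a : ℝ) (x z : Finset ι → ℝ) : AA p S (a • x) z = a * AA p S x z := by
  unfold AA
  rw [Finset.mul_sum]
  refine Finset.sum_congr rfl fun U hU => ?_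
  rw [Pi.smul_apply, smul_eq_mul]; ring

lemma AA_add_right (x y z : Finset ι → ℝ) : AA p S z (x + y) = AA p S z x + AA p S z y := by
  rw [AA_symm, AA_add_left, AA_symm x, AA_symm y]

lemma AA_smul_right (a : ℝ) (x z : Finset ι → ℝ) : AA p S z (a • x) = a * AA p S z x := by
  rw [AA_symm, AA_smul_left, AA_symm x]

lemma AA_congr {x y x' y' : Finset ι → ℝ} (h : ∀ V, Cov p S V → x V = y V)
    (h' : ∀ V, Cov p S V → x' V = y' V) : AA p S x x' = AA p S y y' := by
  unfold AA
  refine Finset.sum_congr rfl fun U hU => ?_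
  rw [h U (mem_cv.1 hU), al_congr (mem_cv.1 hU) h']

lemma AA_comb (t : ℝ) (x y : Finset ι → ℝ) :
    AA p S (x + t • y) (x + t • y) = AA p S x x + 2 * t * AA p S x y + t ^ 2 * AA p S y y := by
  simp only [AA_add_left, AA_add_right, AA_smul_left, AA_smul_right]
  rw [AA_symm y x]; ring

/-- linear data -/
def Lin (p : ι → E) (S : Finset ι) (x : Finset ι → ℝ) : Prop :=
  ∃ y : E, ∀ T, Cov p S T → x T = ⟪y, uu p S T⟫_ℝ

/-- hyperbolicity -/
def KK (p : ι → E) (S : Finset ι) : Prop :=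
  ∀ x, AA p S x (hh p S) = 0 → AA p S x x ≤ 0 ∧ (AA p S x x = 0 → Lin p S x)


lemma al_hh (hb : ∀ y : E, y ≠ 0 → ∃ i, 0 < ⟪y, p i⟫_ℝ) (h1 : Cov p S T) {k : ℕ} (hk : RR p S = k + 2) :
    al p S (hh p S) T = ((k : ℝ) + 1) * cc p T := by
  have := h1.RR
  rw [cc_rec' hb h1.hT (k := k) (by omega) (vv p S)]
  unfold al
  refine Finset.sum_congr rfl fun U hU => ?_
  rw [res_hh h1 (mem_cv.1 hU)]

lemma al_lin (hb : ∀ y : E, y ≠ 0 → ∃ i, 0 < ⟪y, p i⟫_ℝ) (h1 : Cov p S T) {k : ℕ} (hk : RR p S = k + 2) (y : E) :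
    al p S (fun V => ⟪y, uu p S V⟫_ℝ) T = 0 := by
  have := h1.RR
  rw [← balance hb h1.hT (k := k) (by omega) y]
  unfold al
  refine Finset.sum_congr rfl fun U hU => ?_
  rw [res_lin h1 (mem_cv.1 hU)]

lemma AA_hh (hb : ∀ y : E, y ≠ 0 → ∃ i, 0 < ⟪y, p i⟫_ℝ) {k : ℕ} (hk : RR p S = k + 2) (x : Finset ι → ℝ) :
    AA p S x (hh p S) = ((k : ℝ) + 1) * ∑ T ∈ cv p S, x T * cc p T := by
  unfold AA
  rw [Finset.mul_sum]
  refine Finset.sum_congr rfl fun T hT => ?_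
  rw [al_hh hb (mem_cv.1 hT) hk]; ring

lemma AA_hh_hh (hb : ∀ y : E, y ≠ 0 → ∃ i, 0 < ⟪y, p i⟫_ℝ) {k : ℕ} (hk : RR p S = k + 2) :
    AA p S (hh p S) (hh p S) = ((k : ℝ) + 1) * (((k : ℝ) + 2) * cc p S) := by
  rw [AA_hh hb hk]
  congr 1
  have := cc_rec (k := k + 1) (p := p) (S := S) (by omega)
  push_cast at this
  rw [← this]; ring

lemma AA_hh_pos (hb : ∀ y : E, y ≠ 0 → ∃ i, 0 < ⟪y, p i⟫_ℝ) (hS : IsF p S) {k : ℕ} (hk : RR p S = k + 2) : 0 < AA p S (hh p S) (hh p S) := by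
  rw [AA_hh_hh hb hk]
  have := cc_pos hb hS
  positivity

lemma AA_lin (hb : ∀ y : E, y ≠ 0 → ∃ i, 0 < ⟪y, p i⟫_ℝ) {k : ℕ} (hk : RR p S = k + 2) (x : Finset ι → ℝ) (y : E) :
    AA p S x (fun V => ⟪y, uu p S V⟫_ℝ) = 0 := by
  unfold AA
  refine Finset.sum_eq_zero fun T hT => ?_
  rw [al_lin hb (mem_cv.1 hT) hk, mul_zero]

lemma null_al (hb : ∀ y : E, y ≠ 0 → ∃ i, 0 < ⟪y, p i⟫_ℝ) (hS : IsF p S) {k : ℕ} (hk : RR p S = k + 2)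
    (hneg : ∀ x, AA p S x (hh p S) = 0 → AA p S x x ≤ 0) {x : Finset ι → ℝ}
    (hx : AA p S x (hh p S) = 0) (hxx : AA p S x x = 0) (hT : Cov p S T) : al p S x T = 0 := by
  have hpos := AA_hh_pos hb hS hk
  have hz : ∀ z, AA p S z (hh p S) = 0 → AA p S x z = 0 := by
    intro z hz
    have h1 : ∀ t : ℝ, 2 * t * AA p S x z + t ^ 2 * AA p S z z ≤ 0 := by
      intro t
      have := hneg (x + t • z) (by rw [AA_add_left, AA_smul_left, hx, hz]; ring)
      rw [AA_comb, hxx] at this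
      linarith
    by_contra hne
    set q := AA p S x z
    set r := AA p S z z
    have hr : r ≤ 0 := hneg z hz
    have h2 := h1 (q / (1 - r))
    have h3 : 0 < 1 - r := by linarith
    have h4 : 2 * (q / (1 - r)) * q + (q / (1 - r)) ^ 2 * r = (q / (1 - r)) ^ 2 * (2 - r) := by
      field_simp; ring
    rw [h4] at h2
    have : 0 < (q / (1 - r)) ^ 2 := by positivity
    nlinarith
  have h5 : ∀ z, AA p S x z = 0 := by
    intro z
    set t := AA p S z (hh p S) / AA p S (hh p S) (hh p S) with ht
    have := hz (z + (-t) • hh p S) (by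
      rw [AA_add_left, AA_smul_left, ht]; field_simp; ring)
    rw [AA_add_right, AA_smul_right, hx] at this
    linarith
  have h6 := h5 (Pi.single T 1)
  rw [AA_symm] at h6
  unfold AA at h6
  rw [Finset.sum_eq_single T] at h6
  · simpa using h6
  · intro V _ hV; rw [Pi.single_eq_of_ne hV]; ring
  · intro h; exact absurd (mem_cv.2 hT) h

lemma AF (hb : ∀ y : E, y ≠ 0 → ∃ i, 0 < ⟪y, p i⟫_ℝ) (hS : IsF p S) {k : ℕ} (hk : RR p S = k + 2) (hK : KK p S) (x : Finset ι → ℝ) :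
    AA p S x x * AA p S (hh p S) (hh p S) ≤ AA p S x (hh p S) ^ 2 := by
  have hpos := AA_hh_pos hb hS hk
  set t := AA p S x (hh p S) / AA p S (hh p S) (hh p S) with ht
  have h1 := (hK (x + (-t) • hh p S) (by rw [AA_add_left, AA_smul_left, ht]; field_simp; ring)).1
  rw [AA_comb, ht] at h1
  set q := AA p S x (hh p S)
  set r := AA p S (hh p S) (hh p S)
  have h2 : AA p S x x + 2 * -(q / r) * q + (-(q / r)) ^ 2 * r = AA p S x x - q ^ 2 / r := by
    field_simp; ring
  rw [h2] at h1
  rw [← le_div_iff₀ hpos]; linarith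

end form
end Izm

namespace Izm
section base
variable {ι E : Type*} [Fintype ι] [DecidableEq ι] [NormedAddCommGroup E] [InnerProductSpace ℝ E]
  [FiniteDimensional ℝ E]
variable {p : ι → E} {S T U W : Finset ι}

lemma plane_zero_perp (h1 : Cov p S T) (h2 : Cov p T U) {w z : E} (ha : ⟪w, uu p S T⟫_ℝ = 0)
    (hb : ⟪w, uu p T U⟫_ℝ = 0) (hz : z ∈ sp p U) (hp : ∀ y ∈ sp p S, ⟪z, y⟫_ℝ = 0) : ⟪w, z⟫_ℝ = 0 := by
  rw [dec2 h1 h2 hz hp, inner_add_right, real_inner_smul_right, real_inner_smul_right, ha, hb]; ring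

lemma plane_zero (h1 : Cov p S T) (h2 : Cov p T U) {w z : E} (ha : ⟪w, uu p S T⟫_ℝ = 0)
    (hb : ⟪w, uu p T U⟫_ℝ = 0) (hw : ∀ y ∈ sp p S, ⟪w, y⟫_ℝ = 0) (hz : z ∈ sp p U) : ⟪w, z⟫_ℝ = 0 := by
  have h3 := hw _ (h1.u_dec (h2.u_dec hz))
  simp only [inner_sub_right, real_inner_smul_right, ha, hb] at h3
  linarith

lemma glue (hb : ∀ y : E, y ≠ 0 → ∃ i, 0 < ⟪y, p i⟫_ℝ) (hd : rk p S + 2 ≤ finrank ℝ E)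
    (x : Finset ι → ℝ) (Y : Finset ι → E) (hY1 : ∀ T, Cov p S T → ⟪Y T, uu p S T⟫_ℝ = x T)
    (hY2 : ∀ T, Cov p S T → ∀ z ∈ sp p S, ⟪Y T, z⟫_ℝ = 0)
    (hY3 : ∀ T U, Cov p S T → Cov p T U → ⟪Y T, uu p T U⟫_ℝ = res p S x T U)
    (hY4 : ∀ T T' U W, Cov p S T → Cov p S T' → Cov p T U → Cov p T' U → Cov p U W → T ≠ T' →
      ⟪Y T, uu p U W⟫_ℝ = ⟪Y T', uu p U W⟫_ℝ) : Lin p S x := by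
  have key : ∀ T T' U, Cov p S T → Cov p S T' → Cov p T U → Cov p T' U → Y T = Y T' := by
    intro T T' U h1 h1' h2 h2'
    by_contra hne
    have hTT : T ≠ T' := by rintro rfl; exact hne rfl
    have pl : ∀ V, Cov p S V → Cov p V U → ∀ z ∈ sp p U, (∀ y ∈ sp p S, ⟪z, y⟫_ℝ = 0) →
        ⟪Y V, z⟫_ℝ = ⟪lift p S U x, z⟫_ℝ := by
      intro V g1 g2 z hz hp
      have := plane_zero_perp g1 g2 (w := Y V - lift p S U x)
        (by rw [inner_sub_left, hY1 V g1, lift_spec g1 g2 x g1 g2, sub_self])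
        (by rw [inner_sub_left, hY3 V U g1 g2, res, sub_self]) hz hp
      rw [inner_sub_left] at this; linarith
    have pl2 : ∀ z ∈ sp p U, (∀ y ∈ sp p S, ⟪z, y⟫_ℝ = 0) → ⟪Y T - Y T', z⟫_ℝ = 0 := by
      intro z hz hp
      rw [inner_sub_left, pl T h1 h2 z hz hp, pl T' h1' h2' z hz hp, sub_self]
    have hz : ∀ z ∈ sp p U, ⟪Y T - Y T', z⟫_ℝ = 0 := fun z hz => plane_zero h1 h2
      (pl2 _ (sp_mono h2.sub h1.u_mem) fun y hy => h1.u_perp hy)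
      (pl2 _ h2.u_mem fun y hy => h2.u_perp (sp_mono h1.sub hy))
      (fun y hy => by rw [inner_sub_left, hY2 T h1 y hy, hY2 T' h1' y hy, sub_self]) hz
    obtain ⟨W, hW, hpos⟩ := exists_cov_pos hb h2.hT (sub_ne_zero.2 hne) fun j hj => hz _ (mem_sp hj)
    rw [inner_sub_left, hY4 T T' U W h1 h1' h2 h2' hW hTT, sub_self] at hpos
    exact lt_irrefl _ hpos
  by_cases hex : ∃ T₁, Cov p S T₁
  · obtain ⟨T₁, hT₁⟩ := hex
    refine ⟨Y T₁, fun T hT => ?_⟩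
    rw [← hY1 T hT, conn hb hd Y key hT hT₁]
  · exact ⟨0, fun T hT => absurd ⟨T, hT⟩ hex⟩

lemma generic (B : Finset E) (hB : ∀ b ∈ B, b ≠ 0) : ∃ e : E, ∀ b ∈ B, ⟪b, e⟫_ℝ ≠ 0 := by
  classical
  have h := Subspace.biUnion_ne_univ_of_top_notMem (k := ℝ) (E := E)
    (s := (B : Set E).toFinset.image fun b => (ℝ ∙ b)ᗮ) (by
      intro hc
      simp only [Finset.mem_image, Set.mem_toFinset, Finset.mem_coe] at hc
      obtain ⟨b, hb, hb2⟩ := hc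
      have : b ∈ (ℝ ∙ b)ᗮ := by rw [hb2]; trivial
      rw [Submodule.mem_orthogonal_singleton_iff_inner_right] at this
      exact hB b hb (inner_self_eq_zero.1 this))
  obtain ⟨e, he⟩ := (Set.ne_univ_iff_exists_notMem _).1 h
  refine ⟨e, fun b hb hc => he ?_⟩
  simp only [Set.mem_iUnion, Finset.mem_image, Set.mem_toFinset, Finset.mem_coe]
  exact ⟨_, ⟨b, hb, rfl⟩, Submodule.mem_orthogonal_singleton_iff_inner_right.2 hc⟩

lemma generic_e (S : Finset ι) : ∃ e : E, (∀ y ∈ sp p S, ⟪e, y⟫_ℝ = 0) ∧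
    ∀ T U, Cov p S T → Cov p T U → ⟪uu p T U, e⟫_ℝ ≠ 0 := by
  classical
  obtain ⟨e, he⟩ := generic (E := E)
    ((Finset.univ.filter fun q : Finset ι × Finset ι => Cov p S q.1 ∧ Cov p q.1 q.2).image
      fun q => uu p q.1 q.2) (by
      intro b hb
      simp only [Finset.mem_image, Finset.mem_filter, Finset.mem_univ, true_and] at hb
      obtain ⟨q, hq, rfl⟩ := hb
      intro h0
      have := hq.2.u_self
      rw [h0] at this; simp at this)
  refine ⟨e - (sp p S).starProjection e, fun y hy =>
    Submodule.starProjection_inner_eq_zero (K := sp p S) e y hy, fun T U h1 h2 => ?_⟩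
  rw [inner_sub_right, h2.u_perp (sp_mono h1.sub (Submodule.starProjection_apply_mem _ _)), sub_zero]
  apply he
  simp only [Finset.mem_image, Finset.mem_filter, Finset.mem_univ, true_and]
  exact ⟨(T, U), ⟨h1, h2⟩, rfl⟩

lemma vv_inj (hS : IsF p S) (hT : IsF p T) (h : vv p S = vv p T) : S = T := by
  have key : ∀ S T, IsF p S → IsF p T → vv p S = vv p T → S ⊆ T := by
    intro S T hS hT h i hi
    by_contra hc
    have := vv_lt hT hc
    rw [← h, vv_eq hS hi] at this
    exact lt_irrefl _ this
  exact Finset.Subset.antisymm (key S T hS hT h) (key T S hT hS h.symm)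


/-- Flag frame combination -/
lemma frame_comb (hb : ∀ y : E, y ≠ 0 → ∃ i, 0 < ⟪y, p i⟫_ℝ) {T' : Finset ι} (h1 : Cov p S T) (h2 : Cov p T U) (h1' : Cov p S T')
    (h2' : Cov p T' U) (hne : T ≠ T') {e : E} (he : ∀ y ∈ sp p S, ⟪e, y⟫_ℝ = 0) (heU : e ∈ sp p U) :
    ∃ s : ℝ, 0 < s ∧ ∀ w : E, ⟪uu p T' U, e⟫_ℝ * ⟪w, uu p S T⟫_ℝ + ⟪uu p T U, e⟫_ℝ * ⟪w, uu p S T'⟫_ℝ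
      = s * ⟪w, e⟫_ℝ := by
  obtain ⟨c, s, hs, h, eA, eB⟩ := frame h1 h2 h1' h2' hne
  refine ⟨s, hs, fun w => ?_⟩
  have hd := dec2 h1 h2 heU he
  conv_rhs => rw [hd]
  rw [eA, eB]
  simp only [inner_add_right, inner_sub_left, real_inner_smul_left, real_inner_smul_right]
  rw [real_inner_comm e (uu p S T), real_inner_comm e (uu p T U)]
  ring

lemma base_form (hb : ∀ y : E, y ≠ 0 → ∃ i, 0 < ⟪y, p i⟫_ℝ) (hk : RR p S = 2) {e : E} (he : ∀ y ∈ sp p S, ⟪e, y⟫_ℝ = 0)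
    (hg : ∀ T U, Cov p S T → Cov p T U → ⟪uu p T U, e⟫_ℝ ≠ 0) (x : Finset ι → ℝ)
    (hx : ∀ T T' U, Cov p S T → Cov p T U → Cov p S T' → Cov p T' U → T ≠ T' →
      0 < ⟪uu p T U, e⟫_ℝ * ⟪uu p T' U, e⟫_ℝ → ⟪lift p S U x, e⟫_ℝ = 0) : AA p S x x ≤ 0 := by
  have hU0 : ∀ T U, Cov p S T → Cov p T U → RR p U = 0 := by
    intro T U h1 h2
    have := h1.RR; have := h2.RR; omega
  have htop : ∀ T U, Cov p S T → Cov p T U → e ∈ sp p U := by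
    intro T U h1 h2
    rw [sp_top (rk_eq_of_RR (hU0 T U h1 h2))]; trivial
  have h1 : AA p S x x = ∑ T ∈ cv p S, ∑ U ∈ cv p T, x T * ⟪lift p S U x, e⟫_ℝ / ⟪uu p T U, e⟫_ℝ := by
    unfold AA al
    refine Finset.sum_congr rfl fun T hT => ?_
    rw [mem_cv] at hT
    have hz : ∑ U ∈ cv p T, (⟪uu p T U, e⟫_ℝ)⁻¹ = 0 := by
      have hTT := hT.RR
      obtain ⟨U, hU⟩ := cv_nonempty hb hT.hT (rk_lt_of_RR (k := 0) (by omega))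
      obtain ⟨U', hU', hne, hcv, hu⟩ := top_other hb hU (rk_eq_of_RR (hU0 T U hT hU))
      rw [hcv, Finset.sum_pair hne, hu, inner_neg_left, inv_neg, add_neg_cancel]
    have : ∑ U ∈ cv p T, x T * ⟪lift p S U x, e⟫_ℝ / ⟪uu p T U, e⟫_ℝ =
        ∑ U ∈ cv p T, (x T * ⟪lift p S U x, e⟫_ℝ / ⟪uu p T U, e⟫_ℝ -
          ⟪e, uu p S T⟫_ℝ * x T ^ 2 * (⟪uu p T U, e⟫_ℝ)⁻¹) := by
      rw [Finset.sum_sub_distrib, ← Finset.mul_sum, hz]; ring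
    rw [this, Finset.mul_sum]
    refine Finset.sum_congr rfl fun U hU => ?_
    rw [mem_cv] at hU
    rw [cc_zero (hU0 T U hT hU), one_mul]
    have hn := hg T U hT hU
    have hd := dec2 hT hU (htop T U hT hU) he
    have h3 : ⟪lift p S U x, e⟫_ℝ = ⟪e, uu p S T⟫_ℝ * x T + ⟪uu p T U, e⟫_ℝ * res p S x T U := by
      conv_lhs => rw [hd]
      rw [inner_add_right, real_inner_smul_right, real_inner_smul_right, lift_spec hT hU x hT hU,
        real_inner_comm e (uu p T U)]; rfl
    rw [h3]
    field_simp; ring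
  rw [h1, sum_swap]
  refine Finset.sum_nonpos fun U hU => ?_
  obtain ⟨T, h1, h2⟩ := mem_cv2.1 hU
  obtain ⟨T', h1', h2', hne, hbt⟩ := btw_other h1 h2
  rw [btw_sum h1 h2 hne hbt]
  obtain ⟨s, hs, hw⟩ := frame_comb hb h1 h2 h1' h2' hne he (htop T U h1 h2)
  have hw' := hw (lift p S U x)
  rw [lift_spec h1 h2 x h1 h2, lift_spec h1 h2 x h1' h2'] at hw'
  have n1 := hg T U h1 h2
  have n2 := hg T' U h1' h2'
  have hx' := hx T T' U h1 h2 h1' h2' hne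
  set β := ⟪uu p T U, e⟫_ℝ
  set β' := ⟪uu p T' U, e⟫_ℝ
  set q := ⟪lift p S U x, e⟫_ℝ
  have h4 : x T * q / β + x T' * q / β' = s * q ^ 2 / (β * β') := by
    have : x T * q / β + x T' * q / β' = (β' * x T + β * x T') * q / (β * β') := by
      field_simp
    rw [this, hw']; ring
  rw [h4]
  rcases lt_or_gt_of_ne (mul_ne_zero n1 n2) with hneg | hpos
  · exact div_nonpos_of_nonneg_of_nonpos (by positivity) hneg.le
  · rw [hx' hpos]; simp

lemma base_max (hb : ∀ y : E, y ≠ 0 → ∃ i, 0 < ⟪y, p i⟫_ℝ) (hk : RR p S = 2) {e : E} (he : ∀ y ∈ sp p S, ⟪e, y⟫_ℝ = 0) {T' V : Finset ι}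
    (h1 : Cov p S T) (h2 : Cov p T U) (h1' : Cov p S T') (h2' : Cov p T' U) (hne : T ≠ T')
    (hp1 : 0 < ⟪uu p T U, e⟫_ℝ) (hp2 : 0 < ⟪uu p T' U, e⟫_ℝ) (hV : IsF p V) (hSV : S ⊆ V)
    (hUV : U ≠ V) : ⟪vv p V, e⟫_ℝ < ⟪vv p U, e⟫_ℝ := by
  have hU0 : sp p U = ⊤ := sp_top (rk_eq_of_RR (by have := h1.RR; have := h2.RR; omega))
  obtain ⟨s, hs, hw⟩ := frame_comb hb h1 h2 h1' h2' hne he (by rw [hU0]; trivial)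
  have hw' := hw (vv p U - vv p V)
  have le1 : ∀ R, Cov p S R → Cov p R U → 0 ≤ ⟪vv p U - vv p V, uu p S R⟫_ℝ := by
    intro R g1 g2
    have := slope_le g1 (z := vv p V) (fun i hi => vv_eq hV (hSV hi)) (fun i _ => vv_le hV i)
    rw [← hh_eq g1 g2.hT g2.sub] at this
    simp only [inner_sub_left] at *
    linarith
  have l1 := le1 T h1 h2
  have l2 := le1 T' h1' h2'
  have l3 : 0 < s * ⟪vv p U - vv p V, e⟫_ℝ := by
    rw [← hw']
    rcases l1.lt_or_eq with hlt | heq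
    · have := mul_pos hp2 hlt
      have := mul_nonneg hp1.le l2
      linarith
    rcases l2.lt_or_eq with hlt' | heq'
    · have := mul_pos hp1 hlt'
      have := mul_nonneg hp2.le l1
      linarith
    exfalso
    apply hUV
    apply vv_inj h2.hT hV
    have hbtw := (btw_other h1 h2)
    have hz : ⟪vv p U - vv p V, uu p T U⟫_ℝ = ⟪(0 : E), uu p T U⟫_ℝ := by
      apply plane_uniq h1 h2
      obtain ⟨T'', g1, g2, gne, gb⟩ := hbtw
      have hT' : T' ∈ btw p S U := mem_btw.2 ⟨h1', h2'⟩
      rw [gb] at hT'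
      simp only [Finset.mem_insert, Finset.mem_singleton] at hT'
      have : T' = T'' := hT'.resolve_left hne.symm
      subst this
      intro R r1 r2
      have hR : R ∈ btw p S U := mem_btw.2 ⟨r1, r2⟩
      rw [gb] at hR
      simp only [Finset.mem_insert, Finset.mem_singleton] at hR
      rw [inner_zero_left]
      rcases hR with rfl | rfl
      · exact heq.symm
      · exact heq'.symm
    rw [inner_zero_left] at hz
    have hall : ∀ z, ⟪vv p U - vv p V, z⟫_ℝ = 0 := fun z => plane_zero h1 h2 heq.symm hz
      (fun y hy => inner_sp (fun i hi => by
        rw [inner_sub_left, vv_eq h2.hT (h2.sub (h1.sub hi)), vv_eq hV (hSV hi), sub_self]) hy)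
      (by rw [hU0]; trivial)
    exact sub_eq_zero.1 (inner_self_eq_zero.1 (hall _))
  have := (mul_pos_iff_of_pos_left hs).1 l3
  rw [inner_sub_left] at this
  linarith

lemma base_neg (hb : ∀ y : E, y ≠ 0 → ∃ i, 0 < ⟪y, p i⟫_ℝ) (hS : IsF p S) (hk : RR p S = 2) {x : Finset ι → ℝ} (hxh : AA p S x (hh p S) = 0) :
    AA p S x x ≤ 0 := by
  obtain ⟨e, he, hg⟩ := generic_e (p := p) S
  obtain ⟨T0, hT0⟩ := cv_nonempty hb hS (rk_lt_of_RR (k := 1) (by omega))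
  obtain ⟨U0, hU0⟩ := cv_nonempty hb hT0.hT (rk_lt_of_RR (k := 0) (by have := hT0.RR; omega))
  have he0 : ⟪e, e⟫_ℝ ≠ 0 := by
    intro h
    have := hg T0 U0 hT0 hU0
    rw [inner_self_eq_zero.1 h, inner_zero_right] at this
    exact this rfl
  have hne : (cv2 p S).Nonempty := ⟨U0, mem_cv2.2 ⟨T0, hT0, hU0⟩⟩
  obtain ⟨M, hM, hMmax⟩ := Finset.exists_max_image (cv2 p S) (fun U => ⟪vv p U - vv p S, e⟫_ℝ) hne
  obtain ⟨N, hN, hNmin⟩ := Finset.exists_min_image (cv2 p S) (fun U => ⟪vv p U - vv p S, e⟫_ℝ) hne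
  set q : Finset ι → ℝ := fun U => ⟪lift p S U x, e⟫_ℝ with hq
  set g : Finset ι → ℝ := fun U => ⟪vv p U - vv p S, e⟫_ℝ with hgg
  set a : ℝ := (q M - q N) / (g M - g N) with ha
  set τ : ℝ := (q M - a * g M) / ⟪e, e⟫_ℝ with hτ
  set x' : Finset ι → ℝ := (x + (-a) • hh p S) + (-τ) • (fun V => ⟪e, uu p S V⟫_ℝ) with hx'
  have e1 : AA p S x' x' = AA p S x x + a ^ 2 * AA p S (hh p S) (hh p S) := by
    rw [hx', AA_comb, AA_comb, hxh, AA_lin hb (k := 0) hk, AA_lin hb (k := 0) hk]; ring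
  have hpos := AA_hh_pos hb hS (k := 0) hk
  have hq' : ∀ T U, Cov p S T → Cov p T U → ⟪lift p S U x', e⟫_ℝ = q U - a * g U - τ * ⟪e, e⟫_ℝ := by
    intro T U h1 h2
    have hU : sp p U = ⊤ := sp_top (rk_eq_of_RR (by have := h1.RR; have := h2.RR; omega))
    have hA : ∀ V, Cov p S V → Cov p V U → ⟪lift p S U x, uu p S V⟫_ℝ - a * ⟪vv p U - vv p S, uu p S V⟫_ℝ
        - τ * ⟪e, uu p S V⟫_ℝ = x' V := by
      intro V g1 g2
      rw [lift_spec g1 g2 x g1 g2, hh_eq g1 g2.hT g2.sub, hx']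
      simp only [Pi.add_apply, Pi.smul_apply, smul_eq_mul]; ring
    have hA' : ∀ V, Cov p S V → Cov p V U → ⟪lift p S U x - a • (vv p U - vv p S) - τ • e, uu p S V⟫_ℝ
        = x' V := by
      intro V g1 g2
      rw [← hA V g1 g2, inner_sub_left, inner_sub_left, real_inner_smul_left, real_inner_smul_left]
    have hB := res_eq h1 h2 hA'
    have := plane_zero_perp h1 h2
      (w := lift p S U x' - (lift p S U x - a • (vv p U - vv p S) - τ • e)) (z := e)
      (by rw [inner_sub_left, hA' T h1 h2, lift_spec h1 h2 x' h1 h2, sub_self])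
      (by rw [inner_sub_left, ← hB, res, sub_self]) (by rw [hU]; trivial) he
    rw [inner_sub_left, sub_eq_zero] at this
    rw [this, inner_sub_left, inner_sub_left, real_inner_smul_left, real_inner_smul_left]
  have hτ' : τ * ⟪e, e⟫_ℝ = q M - a * g M := by rw [hτ, div_mul_cancel₀ _ he0]
  have hfin : AA p S x' x' ≤ 0 := by
    refine base_form hb hk he hg x' fun T T' U h1 h2 h1' h2' hne hpp => ?_
    rw [hq' T U h1 h2, hτ']
    have sub2 : ∀ U ∈ cv2 p S, IsF p U ∧ S ⊆ U := by
      intro U hU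
      obtain ⟨T, t1, t2⟩ := mem_cv2.1 hU
      exact ⟨t2.hT, t1.sub.trans t2.sub⟩
    have hUm : U ∈ cv2 p S := mem_cv2.2 ⟨T, h1, h2⟩
    rcases pos_and_pos_or_neg_and_neg_of_mul_pos hpp with ⟨b1, b2⟩ | ⟨b1, b2⟩
    · have : U = M := by
        by_contra hc
        have l1 := base_max hb hk he h1 h2 h1' h2' hne b1 b2 (sub2 M hM).1 (sub2 M hM).2 hc
        have l2 := hMmax U hUm
        simp only [inner_sub_left] at l2
        linarith
      rw [this]; ring
    · have he' : ∀ y ∈ sp p S, ⟪-e, y⟫_ℝ = 0 := fun y hy => by rw [inner_neg_left, he y hy, neg_zero]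
      have bm : ∀ V ∈ cv2 p S, U ≠ V → g U < g V := by
        intro V hV hc
        have l1 := base_max hb hk he' h1 h2 h1' h2' hne (by rw [inner_neg_right]; linarith)
          (by rw [inner_neg_right]; linarith) (sub2 V hV).1 (sub2 V hV).2 hc
        rw [inner_neg_right, inner_neg_right] at l1
        simp only [hgg, inner_sub_left]
        linarith
      have hUN : U = N := by
        by_contra hc
        have l1 := bm N hN hc
        have l2 := hNmin U hUm
        exact absurd l1 (not_lt.2 l2)
      by_cases hMN : U = M
      · rw [hMN]; ring
      · have l1 := bm M hM hMN
        have l2 : g M - g N ≠ 0 := by rw [← hUN]; linarith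
        have : a * (g M - g N) = q M - q N := by rw [ha, div_mul_cancel₀ _ l2]
        rw [hUN]; linarith
  nlinarith [sq_nonneg a]

lemma KK_base (hb : ∀ y : E, y ≠ 0 → ∃ i, 0 < ⟪y, p i⟫_ℝ) (hS : IsF p S) (hk : RR p S = 2) : KK p S := by
  intro x hx
  refine ⟨base_neg hb hS hk hx, fun h0 => ?_⟩
  have hal := fun T (hT : Cov p S T) => null_al hb hS (k := 0) hk
    (fun x hx => base_neg hb hS hk hx) hx h0 hT
  have hU0 : ∀ T U, Cov p S T → Cov p T U → RR p U = 0 := by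
    intro T U h1 h2
    have := h1.RR; have := h2.RR; omega
  have hex : ∀ T, ∃ U, Cov p S T → Cov p T U := by
    intro T
    by_cases hT : Cov p S T
    · obtain ⟨U0, hU0⟩ := cv_nonempty hb hT.hT (rk_lt_of_RR (k := 0) (by have := hT.RR; omega))
      exact ⟨U0, fun _ => hU0⟩
    · exact ⟨T, fun h => absurd h hT⟩
  choose Um hUm using hex
  refine glue hb (by unfold RR at hk; omega) x
    (fun T => x T • uu p S T + res p S x T (Um T) • uu p T (Um T)) ?_ ?_ ?_ ?_
  · intro T hT
    have hU := hUm T hT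
    simp only [inner_add_left, real_inner_smul_left, hT.u_self, ab_perp hT hU]; ring
  · intro T hT z hz
    have hU := hUm T hT
    simp only [inner_add_left, real_inner_smul_left, hT.u_perp hz, hU.u_perp (sp_mono hT.sub hz)]; ring
  · intro T U hT hTU
    have hU := hUm T hT
    obtain ⟨U', hU', hne, hcv, hu⟩ := top_other hb hU (rk_eq_of_RR (hU0 T _ hT hU))
    have hz := hal T hT
    unfold al at hz
    rw [hcv, Finset.sum_pair hne, cc_zero (hU0 T _ hT hU), cc_zero (hU0 T _ hT hU')] at hz
    have hm : U ∈ cv p T := mem_cv.2 hTU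
    rw [hcv] at hm
    simp only [Finset.mem_insert, Finset.mem_singleton] at hm
    rcases hm with rfl | rfl
    · simp only [inner_add_left, real_inner_smul_left, hU.u_self, ab_perp' hT hU]; ring
    · rw [hu]
      simp only [inner_add_left, real_inner_smul_left, inner_neg_right, hU.u_self, ab_perp' hT hU]
      linarith
  · intro T T' U W h1 _ h2 _ h3
    have := hU0 T U h1 h2
    have := h3.RR
    omega

end base
end Izm

namespace Izm
section polygon
variable {ι E : Type*} [Fintype ι] [DecidableEq ι] [NormedAddCommGroup E] [InnerProductSpace ℝ E]
  [FiniteDimensional ℝ E]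
variable {p : ι → E} {S T U W : Finset ι}

open Classical in
/-- rank one part of a rank three interval -/
noncomputable def FT (p : ι → E) (S W : Finset ι) : Finset (Finset ι) :=
  Finset.univ.filter fun T => Cov p S T ∧ ∃ U, Cov p T U ∧ Cov p U W
open Classical in
/-- rank two part of a rank three interval -/
noncomputable def FU (p : ι → E) (S W : Finset ι) : Finset (Finset ι) :=
  Finset.univ.filter fun U => Cov p U W ∧ ∃ T, Cov p S T ∧ Cov p T U

lemma mem_FT : T ∈ FT p S W ↔ Cov p S T ∧ ∃ U, Cov p T U ∧ Cov p U W := by simp [FT]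
lemma mem_FU : U ∈ FU p S W ↔ Cov p U W ∧ ∃ T, Cov p S T ∧ Cov p T U := by simp [FU]

lemma flag_swap (f : Finset ι → Finset ι → ℝ) :
    ∑ T ∈ FT p S W, ∑ U ∈ btw p T W, f T U = ∑ U ∈ FU p S W, ∑ T ∈ btw p S U, f T U := by
  apply Finset.sum_comm'
  intro x y
  simp only [mem_FT, mem_btw, mem_FU]
  constructor
  · rintro ⟨⟨a, _⟩, b, c⟩; exact ⟨⟨a, b⟩, c, x, a, b⟩
  · rintro ⟨⟨a, b⟩, c, _⟩; exact ⟨⟨a, y, b, c⟩, b, c⟩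

lemma Tsym (f : Finset ι → ℝ) (y z : Finset ι → E) :
    ∑ T ∈ FT p S W, ∑ U ∈ btw p T W, f T * (⟪y T, uu p T U⟫_ℝ * ⟪z T, uu p U W⟫_ℝ) =
    ∑ T ∈ FT p S W, ∑ U ∈ btw p T W, f T * (⟪z T, uu p T U⟫_ℝ * ⟪y T, uu p U W⟫_ℝ) := by
  refine Finset.sum_congr rfl fun T hT => ?_
  obtain ⟨h1, U, h2, h3⟩ := mem_FT.1 hT
  rw [← Finset.mul_sum, ← Finset.mul_sum, btw_symm h2 h3]

lemma Usym (f : Finset ι → ℝ) (y z : Finset ι → E) :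
    ∑ T ∈ FT p S W, ∑ U ∈ btw p T W, f U * (⟪y U, uu p S T⟫_ℝ * ⟪z U, uu p T U⟫_ℝ) =
    ∑ T ∈ FT p S W, ∑ U ∈ btw p T W, f U * (⟪z U, uu p S T⟫_ℝ * ⟪y U, uu p T U⟫_ℝ) := by
  rw [flag_swap, flag_swap]
  refine Finset.sum_congr rfl fun U hU => ?_
  obtain ⟨h1, T, h2, h3⟩ := mem_FU.1 hU
  rw [← Finset.mul_sum, ← Finset.mul_sum, btw_symm h2 h3]

/-- consistency on planes -/
def Cons (p : ι → E) (S W : Finset ι) (ω L : Finset ι → E) : Prop :=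
  ∀ T U, Cov p S T → Cov p T U → Cov p U W →
    ⟪ω T, uu p S T⟫_ℝ = ⟪L U, uu p S T⟫_ℝ ∧ ⟪ω T, uu p T U⟫_ℝ = ⟪L U, uu p T U⟫_ℝ

/-- defect -/
noncomputable def DD (p : ι → E) (S W : Finset ι) (g : E) (ω : Finset ι → E) : ℝ :=
  ∑ T ∈ FT p S W, ∑ U ∈ btw p T W, (⟪g, uu p S T⟫_ℝ * (⟪ω T, uu p T U⟫_ℝ * ⟪ω T, uu p U W⟫_ℝ) -
    ⟪ω T, uu p S T⟫_ℝ * (⟪ω T, uu p T U⟫_ℝ * ⟪g, uu p U W⟫_ℝ))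

/-- defect, second form -/
noncomputable def EE (p : ι → E) (S W : Finset ι) (g : E) (ω : Finset ι → E) : ℝ :=
  ∑ T ∈ FT p S W, ∑ U ∈ btw p T W, ⟪ω T, uu p U W⟫_ℝ * (⟪g, uu p S T⟫_ℝ * ⟪ω T, uu p T U⟫_ℝ -
    ⟪g, uu p T U⟫_ℝ * ⟪ω T, uu p S T⟫_ℝ)

lemma DD_eq_EE (g : E) (ω : Finset ι → E) : DD p S W g ω = EE p S W g ω := by
  have h1 := Tsym (p := p) (S := S) (W := W) (fun T => ⟪ω T, uu p S T⟫_ℝ) ω (fun _ => g)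
  have h2 : DD p S W g ω =
    ∑ T ∈ FT p S W, ∑ U ∈ btw p T W, (⟪g, uu p S T⟫_ℝ * (⟪ω T, uu p T U⟫_ℝ * ⟪ω T, uu p U W⟫_ℝ)) -
    ∑ T ∈ FT p S W, ∑ U ∈ btw p T W,
      ⟪ω T, uu p S T⟫_ℝ * (⟪ω T, uu p T U⟫_ℝ * ⟪g, uu p U W⟫_ℝ) := by
    unfold DD; simp only [Finset.sum_sub_distrib]
  rw [h2, h1, EE]
  simp only [← Finset.sum_sub_distrib]
  refine Finset.sum_congr rfl fun T hT => Finset.sum_congr rfl fun U hU => ?_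
  ring

lemma Cons.zero_t {ω L : Finset ι → E} (h : Cons p S W ω L) (f : Finset ι → ℝ) (g : E) :
    ∑ T ∈ FT p S W, ∑ U ∈ btw p T W, f U * (⟪g, uu p S T⟫_ℝ * ⟪ω T, uu p T U⟫_ℝ -
      ⟪g, uu p T U⟫_ℝ * ⟪ω T, uu p S T⟫_ℝ) = 0 := by
  have h1 := Usym (p := p) (S := S) (W := W) f (fun _ => g) L
  rw [← sub_eq_zero, ← Finset.sum_sub_distrib] at h1
  rw [← h1]
  refine Finset.sum_congr rfl fun T hT => ?_
  rw [← Finset.sum_sub_distrib]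
  refine Finset.sum_congr rfl fun U hU => ?_
  rw [mem_btw] at hU
  have := h T U (mem_FT.1 hT).1 hU.1 hU.2
  rw [this.1, this.2]; ring

lemma Cons.const (w : E) : Cons p S W (fun _ => w) (fun _ => w) := fun _ _ _ _ _ => ⟨rfl, rfl⟩

lemma Cons.sub {ω L : Finset ι → E} (h : Cons p S W ω L) (w : E) :
    Cons p S W (fun T => ω T - w) (fun U => L U - w) := by
  intro T U h1 h2 h3
  have := h T U h1 h2 h3
  simp only [inner_sub_left]
  rw [this.1, this.2]
  exact ⟨rfl, rfl⟩

lemma EE_inv {ω L : Finset ι → E} (h : Cons p S W ω L) (g w : E) :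
    EE p S W g (fun T => ω T - w) = EE p S W g ω := by
  have z1 := h.zero_t (fun U => ⟪w, uu p U W⟫_ℝ) g
  have z2 := (Cons.const (p := p) (S := S) (W := W) w).zero_t (fun U => ⟪w, uu p U W⟫_ℝ) g
  have z3 : ∑ T ∈ FT p S W, ∑ U ∈ btw p T W, ⟪ω T, uu p U W⟫_ℝ * (⟪g, uu p S T⟫_ℝ * ⟪w, uu p T U⟫_ℝ -
      ⟪g, uu p T U⟫_ℝ * ⟪w, uu p S T⟫_ℝ) = 0 := by
    have t1 := Tsym (p := p) (S := S) (W := W) (fun T => ⟪g, uu p S T⟫_ℝ) (fun _ => w) ω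
    have t2 := Tsym (p := p) (S := S) (W := W) (fun T => ⟪w, uu p S T⟫_ℝ) (fun _ => g) ω
    have t3 := Tsym (p := p) (S := S) (W := W) (fun T => ⟪ω T, uu p S T⟫_ℝ) (fun _ => g) (fun _ => w)
    have u1 := h.zero_t (fun U => ⟪w, uu p U W⟫_ℝ) g
    have u2 := h.zero_t (fun U => ⟪g, uu p U W⟫_ℝ) w
    simp only [mul_sub, Finset.sum_sub_distrib] at *
    have r1 : ∀ A B C : Finset ι → Finset ι → ℝ,
      ∑ T ∈ FT p S W, ∑ U ∈ btw p T W, A T U * (B T U * C T U) =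
      ∑ T ∈ FT p S W, ∑ U ∈ btw p T W, B T U * (C T U * A T U) := by
      intro A B C
      refine Finset.sum_congr rfl fun T hT => Finset.sum_congr rfl fun U hU => ?_
      ring
    have r2 : ∀ A B C : Finset ι → Finset ι → ℝ,
      ∑ T ∈ FT p S W, ∑ U ∈ btw p T W, A T U * (B T U * C T U) =
      ∑ T ∈ FT p S W, ∑ U ∈ btw p T W, C T U * (B T U * A T U) := by
      intro A B C
      refine Finset.sum_congr rfl fun T hT => Finset.sum_congr rfl fun U hU => ?_
      ring
    rw [r1 (fun T U => ⟪ω T, uu p U W⟫_ℝ) (fun T U => ⟪g, uu p S T⟫_ℝ) (fun T U => ⟪w, uu p T U⟫_ℝ),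
      r2 (fun T U => ⟪ω T, uu p U W⟫_ℝ) (fun T U => ⟪g, uu p T U⟫_ℝ) (fun T U => ⟪w, uu p S T⟫_ℝ)]
    rw [r1 (fun T U => ⟪w, uu p U W⟫_ℝ) (fun T U => ⟪g, uu p S T⟫_ℝ) (fun T U => ⟪ω T, uu p T U⟫_ℝ),
      r2 (fun T U => ⟪w, uu p U W⟫_ℝ) (fun T U => ⟪g, uu p T U⟫_ℝ) (fun T U => ⟪ω T, uu p S T⟫_ℝ)] at u1
    rw [r1 (fun T U => ⟪g, uu p U W⟫_ℝ) (fun T U => ⟪w, uu p S T⟫_ℝ) (fun T U => ⟪ω T, uu p T U⟫_ℝ),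
      r2 (fun T U => ⟪g, uu p U W⟫_ℝ) (fun T U => ⟪w, uu p T U⟫_ℝ) (fun T U => ⟪ω T, uu p S T⟫_ℝ)] at u2
    linarith
  have e : EE p S W g (fun T => ω T - w) - EE p S W g ω =
      - (∑ T ∈ FT p S W, ∑ U ∈ btw p T W, ⟪w, uu p U W⟫_ℝ * (⟪g, uu p S T⟫_ℝ * ⟪ω T, uu p T U⟫_ℝ -
      ⟪g, uu p T U⟫_ℝ * ⟪ω T, uu p S T⟫_ℝ)) -
      (∑ T ∈ FT p S W, ∑ U ∈ btw p T W, ⟪ω T, uu p U W⟫_ℝ * (⟪g, uu p S T⟫_ℝ * ⟪w, uu p T U⟫_ℝ -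
      ⟪g, uu p T U⟫_ℝ * ⟪w, uu p S T⟫_ℝ)) +
      (∑ T ∈ FT p S W, ∑ U ∈ btw p T W, ⟪w, uu p U W⟫_ℝ * (⟪g, uu p S T⟫_ℝ * ⟪w, uu p T U⟫_ℝ -
      ⟪g, uu p T U⟫_ℝ * ⟪w, uu p S T⟫_ℝ)) := by
    unfold EE
    rw [← Finset.sum_neg_distrib]
    simp only [← Finset.sum_sub_distrib, ← Finset.sum_add_distrib, ← Finset.sum_neg_distrib]
    refine Finset.sum_congr rfl fun T hT => Finset.sum_congr rfl fun U hU => ?_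
    simp only [inner_sub_left]
    ring
  rw [z1, z2, z3] at e
  linarith

/-- positivity of facet normals -/
lemma n_pos (h1 : Cov p S T) (hTW : T ⊆ W) (hSU : S ⊆ U) (h3 : Cov p U W) (hn : ¬ T ⊆ U) :
    0 < ⟪uu p S T, uu p U W⟫_ℝ := by
  obtain ⟨j, hjT, hjU⟩ := Finset.not_subset.1 hn
  have e1 := h3.u_pos (hTW hjT) hjU
  have e2 := h1.u_pos hjT fun hj => hjU (hSU hj)
  have e3 := h1.inner_of_zero (y := uu p U W) (fun i hi => h3.u_perp (mem_sp (hSU hi))) (mem_sp hjT)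
  rw [e3] at e1
  rw [real_inner_comm]
  exact (mul_pos_iff_of_pos_left e2).1 e1

lemma link_pos {U₁ U₂ T' : Finset ι} (h1 : Cov p S T) (h2 : Cov p T U₁) (h3 : Cov p U₁ W)
    (h1' : Cov p S T') (h2' : Cov p T' U₁) (hne : T ≠ T') (g2 : Cov p T' U₂) (g3 : Cov p U₂ W)
    (hU : U₁ ≠ U₂) : 0 < ⟪uu p S T, uu p U₂ W⟫_ℝ := by
  obtain ⟨c, s, hs, h, eA, eB⟩ := frame h1' h2' h1 h2 hne.symm
  have := frame_pos g2 g3 h2' h3 hU.symm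
  rw [eA, inner_add_left, real_inner_smul_left, real_inner_smul_left,
    g3.u_perp' (sp_mono g2.sub h1'.u_mem)]
  have := mul_pos hs this
  linarith

lemma cov_of_sub (h1 : Cov p S T) (h2 : Cov p T U) {V : Finset ι} (hV : Cov p S V) (hs : V ⊆ U) :
    Cov p V U := ⟨hV.hT, h2.hT, hs, by rw [h2.rk, h1.rk, hV.rk]⟩

/-- main positivity: one facet normal -/
lemma EE_facet {ω L : Finset ι → E} (hc : Cons p S W ω L) {T0 T0' U0 : Finset ι}
    (a1 : Cov p S T0) (a2 : Cov p T0 U0) (a3 : Cov p U0 W) (b1 : Cov p S T0') (b2 : Cov p T0' U0)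
    (hne : T0 ≠ T0') : 0 ≤ EE p S W (uu p U0 W) ω ∧ (EE p S W (uu p U0 W) ω = 0 → ∀ T ∈ FT p S W,
      ¬ T ⊆ U0 → ⟪ω T - ω T0, uu p S T0 + uu p S T0'⟫_ℝ = 0) := by
  set e := uu p S T0 + uu p S T0' with he
  set g := uu p U0 W with hg
  have hc' := hc.sub (ω T0)
  set ω' : Finset ι → E := fun T => ω T - ω T0 with hω'
  set L' : Finset ι → E := fun U => L U - ω T0 with hL'
  rw [← EE_inv hc g (ω T0)]
  have heU : e ∈ sp p U0 := Submodule.add_mem _ (sp_mono a2.sub a1.u_mem) (sp_mono b2.sub b1.u_mem)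
  have heW : e ∈ sp p W := sp_mono a3.sub heU
  have heS : ∀ y ∈ sp p S, ⟪e, y⟫_ℝ = 0 := fun y hy => by
    rw [he, inner_add_left, a1.u_perp hy, b1.u_perp hy, add_zero]
  have hge : ⟪g, e⟫_ℝ = 0 := a3.u_perp heU
  have hnu0 : ∀ U, Cov p U W → (∃ T, Cov p S T ∧ Cov p T U) → U ≠ U0 → 0 < ⟪e, uu p U W⟫_ℝ := by
    rintro U hU ⟨T, t1, t2⟩ hneU
    have hSU : S ⊆ U := t1.sub.trans t2.sub
    have nn : ∀ V, Cov p S V → V ⊆ W → 0 ≤ ⟪uu p S V, uu p U W⟫_ℝ := by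
      intro V hV hVW
      by_cases hs : V ⊆ U
      · rw [hU.u_perp' (sp_mono hs hV.u_mem)]
      · exact (n_pos hV hVW hSU hU hs).le
    have q1 := nn T0 a1 (a2.sub.trans a3.sub)
    have q2 := nn T0' b1 (b2.sub.trans a3.sub)
    rw [he, inner_add_left]
    by_cases hs : T0 ⊆ U
    · have := link_pos b1 b2 a3 a1 a2 hne.symm (cov_of_sub t1 t2 a1 hs) hU hneU.symm
      linarith
    · have := n_pos a1 (a2.sub.trans a3.sub) hSU hU hs
      linarith
  -- consistency on the plane
  have hplane : ∀ T U, Cov p S T → Cov p T U → Cov p U W → ∀ z ∈ sp p U,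
      (∀ y ∈ sp p S, ⟪z, y⟫_ℝ = 0) → ⟪ω' T, z⟫_ℝ = ⟪L' U, z⟫_ℝ := by
    intro T U h1 h2 h3 z hz hp
    have := hc' T U h1 h2 h3
    have q := plane_zero_perp h1 h2 (w := ω' T - L' U) (by rw [inner_sub_left, this.1, sub_self])
      (by rw [inner_sub_left, this.2, sub_self]) hz hp
    rw [inner_sub_left] at q; linarith
  have hp0 : ∀ T ∈ FT p S W, T ⊆ U0 → ⟪ω' T, e⟫_ℝ = 0 := by
    intro T hT hs
    have t1 := (mem_FT.1 hT).1
    rw [hplane T U0 t1 (cov_of_sub a1 a2 t1 hs) a3 e heU heS, ← hplane T0 U0 a1 a2 a3 e heU heS, hω']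
    simp
  -- rewriting of EE
  set tt : Finset ι → Finset ι → ℝ := fun T U => ⟪g, uu p S T⟫_ℝ * ⟪ω' T, uu p T U⟫_ℝ -
    ⟪g, uu p T U⟫_ℝ * ⟪ω' T, uu p S T⟫_ℝ with htt
  have key : EE p S W g ω' =
      ∑ T ∈ FT p S W, ⟪ω' T, e⟫_ℝ * ∑ U ∈ btw p T W, (⟪e, uu p U W⟫_ℝ)⁻¹ * tt T U := by
    have z := hc'.zero_t (fun U => (⟪e, uu p U W⟫_ℝ)⁻¹ * ⟪L' U, e - ⟪e, uu p U W⟫_ℝ • uu p U W⟫_ℝ) g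
    rw [← add_zero (EE p S W g ω'), ← z, EE, ← Finset.sum_add_distrib]
    refine Finset.sum_congr rfl fun T hT => ?_
    rw [← Finset.sum_add_distrib, Finset.mul_sum]
    refine Finset.sum_congr rfl fun U hU => ?_
    rw [mem_btw] at hU
    obtain ⟨h2, h3⟩ := hU
    have h1 := (mem_FT.1 hT).1
    change ⟪ω' T, uu p U W⟫_ℝ * tt T U + _ * tt T U = _
    by_cases hUU : U = U0
    · have : tt T U = 0 := by
        rw [htt]; simp only
        rw [hg, a3.u_perp (by rw [← hUU]; exact sp_mono h2.sub h1.u_mem),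
          a3.u_perp (by rw [← hUU]; exact h2.u_mem)]; ring
      rw [this]; ring
    · have hν := hnu0 U h3 ⟨T, h1, h2⟩ hUU
      have hdecU : e - ⟪e, uu p U W⟫_ℝ • uu p U W ∈ sp p U := by
        rw [real_inner_comm]; exact h3.u_dec heW
      rw [← hplane T U h1 h2 h3 _ hdecU (fun y hy => by
        rw [inner_sub_left, real_inner_smul_left, heS y hy,
          h3.u_perp (sp_mono h2.sub (sp_mono h1.sub hy))]; ring),
        inner_sub_right, real_inner_smul_right]
      field_simp; ring
  have term : ∀ T ∈ FT p S W, ¬ T ⊆ U0 → ∃ κ : ℝ, 0 < κ ∧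
      ∑ U ∈ btw p T W, (⟪e, uu p U W⟫_ℝ)⁻¹ * tt T U = κ * ⟪ω' T, e⟫_ℝ := by
    intro T hT hn
    obtain ⟨h1, U, h2, h3⟩ := mem_FT.1 hT
    obtain ⟨U', h2', h3', hneU, hbt⟩ := btw_other h2 h3
    have hTW : T ⊆ W := h2.sub.trans h3.sub
    have hgp : 0 < ⟪g, uu p S T⟫_ℝ := by
      rw [real_inner_comm]; exact n_pos h1 hTW (a1.sub.trans a2.sub) a3 hn
    have ν1 := hnu0 U h3 ⟨T, h1, h2⟩ (by rintro rfl; exact hn h2.sub)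
    have ν2 := hnu0 U' h3' ⟨T, h1, h2'⟩ (by rintro rfl; exact hn h2'.sub)
    obtain ⟨c, s, hs, h, eA, eB⟩ := frame h2 h3 h2' h3' hneU
    have hd := dec3 h1 h2 h3 heW heS
    refine ⟨s * ⟪g, uu p S T⟫_ℝ * (⟪e, uu p U W⟫_ℝ)⁻¹ * (⟪e, uu p U' W⟫_ℝ)⁻¹, by positivity, ?_⟩
    rw [btw_sum h2 h3 hneU hbt]
    have e1 : ⟪g, e⟫_ℝ = ⟪e, uu p S T⟫_ℝ * ⟪g, uu p S T⟫_ℝ + ⟪e, uu p T U⟫_ℝ * ⟪g, uu p T U⟫_ℝ +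
        ⟪e, uu p U W⟫_ℝ * ⟪g, uu p U W⟫_ℝ := by
      conv_lhs => rw [hd]
      simp only [inner_add_right, real_inner_smul_right]
    have e2 : ⟪ω' T, e⟫_ℝ = ⟪e, uu p S T⟫_ℝ * ⟪ω' T, uu p S T⟫_ℝ + ⟪e, uu p T U⟫_ℝ * ⟪ω' T, uu p T U⟫_ℝ +
        ⟪e, uu p U W⟫_ℝ * ⟪ω' T, uu p U W⟫_ℝ := by
      conv_lhs => rw [hd]
      simp only [inner_add_right, real_inner_smul_right]
    rw [hge] at e1
    have e3 : ⟪e, uu p U' W⟫_ℝ = s * ⟪e, uu p T U⟫_ℝ - c * ⟪e, uu p U W⟫_ℝ := by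
      rw [eB, inner_sub_right, real_inner_smul_right, real_inner_smul_right]
    have e4 : ∀ w : E, ⟪w, uu p T U'⟫_ℝ = c * ⟪w, uu p T U⟫_ℝ + s * ⟪w, uu p U W⟫_ℝ := by
      intro w
      rw [eA, inner_add_right, real_inner_smul_right, real_inner_smul_right]
    have e5 : ⟪e, uu p U' W⟫_ℝ * tt T U + ⟪e, uu p U W⟫_ℝ * tt T U' =
        s * ⟪g, uu p S T⟫_ℝ * ⟪ω' T, e⟫_ℝ := by
      rw [htt]; simp only
      rw [e3, e4, e4, e2]
      linear_combination (s * ⟪ω' T, uu p S T⟫_ℝ) * e1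
    field_simp
    linarith
  have nonneg : ∀ T ∈ FT p S W,
      0 ≤ ⟪ω' T, e⟫_ℝ * ∑ U ∈ btw p T W, (⟪e, uu p U W⟫_ℝ)⁻¹ * tt T U := by
    intro T hT
    by_cases hs : T ⊆ U0
    · rw [hp0 T hT hs, zero_mul]
    · obtain ⟨κ, hκ, e⟩ := term T hT hs
      rw [e]
      nlinarith [mul_nonneg hκ.le (mul_self_nonneg ⟪ω' T, uu p S T0 + uu p S T0'⟫_ℝ)]
  rw [key]
  refine ⟨Finset.sum_nonneg nonneg, fun h0 T hT hs => ?_⟩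
  have := (Finset.sum_eq_zero_iff_of_nonneg nonneg).1 h0 T hT
  obtain ⟨κ, hκ, e⟩ := term T hT hs
  rw [e] at this
  have h5 : κ * (⟪ω' T, uu p S T0 + uu p S T0'⟫_ℝ * ⟪ω' T, uu p S T0 + uu p S T0'⟫_ℝ) = 0 := by
    linarith
  exact mul_self_eq_zero.1 ((mul_eq_zero.1 h5).resolve_left hκ.ne')

/-- decomposition of an interior vector of the dual cone -/
lemma g_decomp {g : E} (hg : ∀ T ∈ FT p S W, 0 < ⟪g, uu p S T⟫_ℝ) (hne : (FT p S W).Nonempty) :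
    ∃ (γ : Finset ι → ℝ) (κ : ℝ), 0 < κ ∧ (∀ U ∈ FU p S W, 0 < γ U) ∧
      ∀ z ∈ sp p W, (∀ y ∈ sp p S, ⟪z, y⟫_ℝ = 0) → κ * ⟪g, z⟫_ℝ = ∑ U ∈ FU p S W, γ U * ⟪uu p U W, z⟫_ℝ := by
  set K := sp p W ⊓ (sp p S)ᗮ with hK
  set g' := K.starProjection g with hg'
  have hK' : ∀ z, z ∈ K ↔ z ∈ sp p W ∧ ∀ y ∈ sp p S, ⟪z, y⟫_ℝ = 0 := by
    intro z
    rw [hK, Submodule.mem_inf, Submodule.mem_orthogonal']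
  have hgz : ∀ z ∈ K, ⟪g', z⟫_ℝ = ⟪g, z⟫_ℝ := by
    intro z hz
    have := Submodule.starProjection_inner_eq_zero (K := K) g z hz
    rw [inner_sub_left] at this; linarith
  have hg'K : g' ∈ K := Submodule.starProjection_apply_mem _ _
  obtain ⟨g1, g2⟩ := (hK' g').1 hg'K
  have haK : ∀ T ∈ FT p S W, uu p S T ∈ K := by
    intro T hT
    obtain ⟨h1, U, h2, h3⟩ := mem_FT.1 hT
    exact (hK' _).2 ⟨sp_mono (h2.sub.trans h3.sub) h1.u_mem, fun y hy => h1.u_perp hy⟩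
  have hga : ∀ T ∈ FT p S W, 0 < ⟪g', uu p S T⟫_ℝ := fun T hT => by rw [hgz _ (haK T hT)]; exact hg T hT
  -- gamma
  have hγ : ∀ U, ∃ γ : ℝ, U ∈ FU p S W → 0 < γ ∧ ∀ y ∈ K,
      ∑ T ∈ btw p S U, (⟪y, uu p U W⟫_ℝ * ⟪g', uu p T U⟫_ℝ - ⟪y, uu p T U⟫_ℝ * ⟪g', uu p U W⟫_ℝ) *
        (⟪g', uu p S T⟫_ℝ)⁻¹ = γ * (⟪y, uu p U W⟫_ℝ * ⟪g', g'⟫_ℝ - ⟪g', uu p U W⟫_ℝ * ⟪y, g'⟫_ℝ) := by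
    intro U
    by_cases hU : U ∈ FU p S W
    swap
    · exact ⟨0, fun h => absurd h hU⟩
    obtain ⟨h3, T, h1, h2⟩ := mem_FU.1 hU
    obtain ⟨T', h1', h2', hneT, hbt⟩ := btw_other h1 h2
    obtain ⟨c, s, hs, h, eA, eB⟩ := frame h1 h2 h1' h2' hneT
    have p1 := hga T (mem_FT.2 ⟨h1, U, h2, h3⟩)
    have p2 := hga T' (mem_FT.2 ⟨h1', U, h2', h3⟩)
    refine ⟨s * (⟪g', uu p S T⟫_ℝ)⁻¹ * (⟪g', uu p S T'⟫_ℝ)⁻¹, fun _ => ⟨by positivity, fun y hy => ?_⟩⟩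
    rw [btw_sum h1 h2 hneT hbt]
    have hd := dec3 h1 h2 h3 g1 g2
    have i1 : ∀ w : E, ⟪w, g'⟫_ℝ = ⟪g', uu p S T⟫_ℝ * ⟪w, uu p S T⟫_ℝ + ⟪g', uu p T U⟫_ℝ * ⟪w, uu p T U⟫_ℝ +
        ⟪g', uu p U W⟫_ℝ * ⟪w, uu p U W⟫_ℝ := by
      intro w
      conv_lhs => rw [hd]
      simp only [inner_add_right, real_inner_smul_right]
    have i2 : ∀ w : E, ⟪w, uu p S T'⟫_ℝ = c * ⟪w, uu p S T⟫_ℝ + s * ⟪w, uu p T U⟫_ℝ := by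
      intro w; rw [eA, inner_add_right, real_inner_smul_right, real_inner_smul_right]
    have i3 : ∀ w : E, ⟪w, uu p T' U⟫_ℝ = s * ⟪w, uu p S T⟫_ℝ - c * ⟪w, uu p T U⟫_ℝ := by
      intro w; rw [eB, inner_sub_right, real_inner_smul_right, real_inner_smul_right]
    rw [i1 y, i1 g']
    have := i2 g'
    field_simp
    rw [this, i3, i3]
    ring
  choose γ hγ using hγ
  have ident : ∀ y ∈ K, ⟪g', g'⟫_ℝ * ∑ U ∈ FU p S W, γ U * ⟪uu p U W, y⟫_ℝ =
      (∑ U ∈ FU p S W, γ U * ⟪g', uu p U W⟫_ℝ) * ⟪y, g'⟫_ℝ := by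
    intro y hy
    have z1 := Tsym (p := p) (S := S) (W := W) (fun T => (⟪g', uu p S T⟫_ℝ)⁻¹) (fun _ => g') (fun _ => y)
    rw [← sub_eq_zero, ← Finset.sum_sub_distrib] at z1
    have z2 : ∑ T ∈ FT p S W, ∑ U ∈ btw p T W, (⟪y, uu p U W⟫_ℝ * ⟪g', uu p T U⟫_ℝ -
        ⟪y, uu p T U⟫_ℝ * ⟪g', uu p U W⟫_ℝ) * (⟪g', uu p S T⟫_ℝ)⁻¹ = 0 := by
      rw [← z1]
      refine Finset.sum_congr rfl fun T hT => ?_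
      rw [← Finset.sum_sub_distrib]
      refine Finset.sum_congr rfl fun U hU => ?_
      ring
    rw [flag_swap] at z2
    rw [← sub_eq_zero, ← z2, Finset.mul_sum, Finset.sum_mul, ← Finset.sum_sub_distrib]
    refine Finset.sum_congr rfl fun U hU => ?_
    rw [(hγ U hU).2 y hy, real_inner_comm y (uu p U W)]
    ring
  obtain ⟨T, hT⟩ := hne
  have hT' := hT
  obtain ⟨h1, U, h2, h3⟩ := mem_FT.1 hT
  have gpos : 0 < ⟪g', g'⟫_ℝ := by
    rw [real_inner_self_pos]
    intro h0
    have := hga T hT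
    rw [h0, inner_zero_left] at this
    exact lt_irrefl _ this
  have nn : ∀ U ∈ FU p S W, 0 ≤ γ U * ⟪uu p U W, uu p S T⟫_ℝ := by
    intro V hV
    obtain ⟨t3, T', t1, t2⟩ := mem_FU.1 hV
    refine mul_nonneg (hγ V hV).1.le ?_
    rw [real_inner_comm]
    by_cases hs : T ⊆ V
    · rw [t3.u_perp' (sp_mono hs h1.u_mem)]
    · exact (n_pos h1 (h2.sub.trans h3.sub) (t1.sub.trans t2.sub) t3 hs).le
  have hsum : 0 < ∑ U ∈ FU p S W, γ U * ⟪uu p U W, uu p S T⟫_ℝ := by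
    obtain ⟨T', h1', h2', hneT, -⟩ := btw_other h1 h2
    obtain ⟨U₂, k2, k3, hneU, -⟩ := btw_other h2' h3
    have hm : U₂ ∈ FU p S W := mem_FU.2 ⟨k3, T', h1', k2⟩
    refine Finset.sum_pos' nn ⟨U₂, hm, mul_pos (hγ U₂ hm).1 ?_⟩
    rw [real_inner_comm]
    exact link_pos h1 h2 h3 h1' h2' hneT k2 k3 hneU
  have hid := ident _ (haK T hT)
  refine ⟨fun U => ⟪g', g'⟫_ℝ * γ U, ∑ U ∈ FU p S W, γ U * ⟪g', uu p U W⟫_ℝ, ?_, ?_, ?_⟩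
  · have h5 : 0 < (∑ U ∈ FU p S W, γ U * ⟪g', uu p U W⟫_ℝ) * ⟪uu p S T, g'⟫_ℝ := by
      rw [← hid]; exact mul_pos gpos hsum
    rw [real_inner_comm] at h5
    exact (mul_pos_iff_of_pos_right (hga T hT)).1 h5
  · intro V hV; exact mul_pos gpos (hγ V hV).1
  · intro z hz hzS
    have hzK : z ∈ K := (hK' z).2 ⟨hz, hzS⟩
    rw [← hgz z hzK, real_inner_comm z g', ← ident z hzK, Finset.mul_sum]
    refine Finset.sum_congr rfl fun V hV => ?_
    ring

lemma polygon {ω L : Finset ι → E} (hc : Cons p S W ω L) {g : E}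
    (hg : ∀ T ∈ FT p S W, 0 < ⟪g, uu p S T⟫_ℝ) : 0 ≤ DD p S W g ω ∧ (DD p S W g ω = 0 →
      ∀ T T' U, Cov p S T → Cov p S T' → Cov p T U → Cov p T' U → Cov p U W → T ≠ T' →
        ⟪ω T, uu p U W⟫_ℝ = ⟪ω T', uu p U W⟫_ℝ) := by
  rw [DD_eq_EE]
  by_cases hne : (FT p S W).Nonempty
  swap
  · rw [Finset.not_nonempty_iff_eq_empty] at hne
    refine ⟨by rw [EE, hne]; simp, fun _ T T' U h1 h1' h2 h2' h3 _ => ?_⟩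
    have : T ∈ FT p S W := mem_FT.2 ⟨h1, U, h2, h3⟩
    rw [hne] at this
    exact absurd this (Finset.notMem_empty _)
  obtain ⟨γ, κ, hκ, hγ, hz⟩ := g_decomp hg hne
  have hlin : κ * EE p S W g ω = ∑ U ∈ FU p S W, γ U * EE p S W (uu p U W) ω := by
    unfold EE
    simp_rw [Finset.mul_sum]
    rw [Finset.sum_comm]
    refine Finset.sum_congr rfl fun T hT => ?_
    rw [Finset.sum_comm]
    refine Finset.sum_congr rfl fun U hU => ?_
    rw [mem_btw] at hU
    have h1 := (mem_FT.1 hT).1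
    have q1 := hz (uu p S T) (sp_mono (hU.1.sub.trans hU.2.sub) h1.u_mem) fun y hy => h1.u_perp hy
    have q2 := hz (uu p T U) (sp_mono hU.2.sub hU.1.u_mem) fun y hy => hU.1.u_perp (sp_mono h1.sub hy)
    have : κ * (⟪ω T, uu p U W⟫_ℝ * (⟪g, uu p S T⟫_ℝ * ⟪ω T, uu p T U⟫_ℝ -
        ⟪g, uu p T U⟫_ℝ * ⟪ω T, uu p S T⟫_ℝ)) = ⟪ω T, uu p U W⟫_ℝ * ((κ * ⟪g, uu p S T⟫_ℝ) *
        ⟪ω T, uu p T U⟫_ℝ - (κ * ⟪g, uu p T U⟫_ℝ) * ⟪ω T, uu p S T⟫_ℝ) := by ring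
    rw [this, q1, q2, Finset.sum_mul, Finset.sum_mul, ← Finset.sum_sub_distrib, Finset.mul_sum]
    refine Finset.sum_congr rfl fun V hV => ?_
    ring
  have hfac : ∀ U ∈ FU p S W, 0 ≤ γ U * EE p S W (uu p U W) ω := by
    intro U hU
    obtain ⟨h3, T, h1, h2⟩ := mem_FU.1 hU
    obtain ⟨T', h1', h2', hneT, -⟩ := btw_other h1 h2
    exact mul_nonneg (hγ U hU).le (EE_facet hc h1 h2 h3 h1' h2' hneT).1
  constructor
  · have := Finset.sum_nonneg hfac
    rw [← hlin] at this
    exact (mul_nonneg_iff_of_pos_left hκ).1 this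
  · intro h0 T T' U h1 h1' h2 h2' h3 hneT
    rw [h0, mul_zero] at hlin
    have hall := (Finset.sum_eq_zero_iff_of_nonneg hfac).1 hlin.symm
    -- U0 = other facet at T
    obtain ⟨U0, k2, k3, hneU, -⟩ := btw_other h2 h3
    obtain ⟨R, r1, r2, hneR, -⟩ := btw_other h1 k2
    have hm : U0 ∈ FU p S W := mem_FU.2 ⟨k3, T, h1, k2⟩
    have hE : EE p S W (uu p U0 W) ω = 0 := (mul_eq_zero.1 (hall U0 hm)).resolve_left (hγ U0 hm).ne'
    have hn : ¬ T' ⊆ U0 := by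
      intro hs
      have := link_pos h1' h2' h3 h1 h2 hneT.symm k2 k3 hneU
      rw [k3.u_perp' (sp_mono hs h1'.u_mem)] at this
      exact lt_irrefl _ this
    have q := (EE_facet hc h1 k2 k3 r1 r2 hneR).2 hE T' (mem_FT.2 ⟨h1', U, h2', h3⟩) hn
    set e := uu p S T + uu p S R with he
    have heW : e ∈ sp p W := Submodule.add_mem _ (sp_mono (h2.sub.trans h3.sub) h1.u_mem)
      (sp_mono (r2.sub.trans k3.sub) r1.u_mem)
    have heS : ∀ y ∈ sp p S, ⟪e, y⟫_ℝ = 0 := fun y hy => by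
      rw [he, inner_add_left, h1.u_perp hy, r1.u_perp hy, add_zero]
    have hpl : ∀ z ∈ sp p U, (∀ y ∈ sp p S, ⟪z, y⟫_ℝ = 0) → ⟪ω T' - ω T, z⟫_ℝ = 0 := by
      intro z hz hp
      have c1 := hc T U h1 h2 h3
      have c2 := hc T' U h1' h2' h3
      have d1 := plane_zero_perp h1 h2 (w := ω T - L U) (by rw [inner_sub_left, c1.1, sub_self])
        (by rw [inner_sub_left, c1.2, sub_self]) hz hp
      have d2 := plane_zero_perp h1' h2' (w := ω T' - L U) (by rw [inner_sub_left, c2.1, sub_self])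
        (by rw [inner_sub_left, c2.2, sub_self]) hz hp
      simp only [inner_sub_left] at *
      linarith
    rw [dec3 h1 h2 h3 heW heS, inner_add_right, inner_add_right, real_inner_smul_right,
      real_inner_smul_right, real_inner_smul_right,
      hpl _ (sp_mono h2.sub h1.u_mem) (fun y hy => h1.u_perp hy),
      hpl _ h2.u_mem (fun y hy => h2.u_perp (sp_mono h1.sub hy))] at q
    have hpos : 0 < ⟪e, uu p U W⟫_ℝ := by
      rw [he, inner_add_left, h3.u_perp' (sp_mono h2.sub h1.u_mem), zero_add]
      exact link_pos r1 r2 k3 h1 k2 hneR.symm h2 h3 hneU.symm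
    have : ⟪e, uu p U W⟫_ℝ * ⟪ω T' - ω T, uu p U W⟫_ℝ = 0 := by linarith
    have := (mul_eq_zero.1 this).resolve_left hpos.ne'
    rw [inner_sub_left] at this
    linarith

end polygon
end Izm

namespace Izm
section step
variable {ι E : Type*} [Fintype ι] [DecidableEq ι] [NormedAddCommGroup E] [InnerProductSpace ℝ E]
  [FiniteDimensional ℝ E]
variable {p : ι → E} {S T U W : Finset ι}

lemma triple_swap (F : Finset ι → Finset ι → Finset ι → ℝ) :
    ∑ T ∈ cv p S, ∑ U ∈ cv p T, ∑ W ∈ cv p U, F T U W =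
    ∑ W, ∑ T ∈ FT p S W, ∑ U ∈ btw p T W, F T U W := by
  have h1 : ∀ T, ∑ U ∈ cv p T, ∑ W ∈ cv p U, F T U W = ∑ W, ∑ U ∈ btw p T W, F T U W := by
    intro T
    apply Finset.sum_comm'
    intro U W
    simp [mem_cv, mem_btw]
  simp_rw [h1]
  rw [Finset.sum_comm]
  refine Finset.sum_congr rfl fun W _ => ?_
  symm
  apply Finset.sum_subset
  · intro T hT; exact mem_cv.2 (mem_FT.1 hT).1
  · intro T hT hT'
    apply Finset.sum_eq_zero
    intro U hU
    rw [mem_btw] at hU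
    exact absurd (mem_FT.2 ⟨mem_cv.1 hT, U, hU⟩) hT'

/-- local lifts -/
noncomputable def om (p : ι → E) (S : Finset ι) (x : Finset ι → ℝ) (W T : Finset ι) : E :=
  lift p T W (res p S x T) + (x T - ⟪lift p T W (res p S x T), uu p S T⟫_ℝ) • uu p S T

lemma om_a (x : Finset ι → ℝ) (h1 : Cov p S T) : ⟪om p S x W T, uu p S T⟫_ℝ = x T := by
  rw [om, inner_add_left, real_inner_smul_left, h1.u_self]; ring

lemma om_b (x : Finset ι → ℝ) (h1 : Cov p S T) (h2 : Cov p T U) (h3 : Cov p U W) :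
    ⟪om p S x W T, uu p T U⟫_ℝ = res p S x T U := by
  rw [om, inner_add_left, real_inner_smul_left, lift_spec h2 h3 _ h2 h3, ab_perp' h1 h2]
  ring

lemma om_n (x : Finset ι → ℝ) (h1 : Cov p S T) (h2 : Cov p T U) (h3 : Cov p U W) :
    ⟪om p S x W T, uu p U W⟫_ℝ = res p T (res p S x T) U W := by
  rw [om, inner_add_left, real_inner_smul_left,
    h3.u_perp' (sp_mono h2.sub h1.u_mem), res]
  ring

lemma om_cons (x : Finset ι → ℝ) : Cons p S W (om p S x W) (fun U => lift p S U x) := by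
  intro T U h1 h2 h3
  rw [om_a x h1, om_b x h1 h2 h3, lift_spec h1 h2 x h1 h2]
  exact ⟨rfl, rfl⟩

lemma L_eq (hb : ∀ y : E, y ≠ 0 → ∃ i, 0 < ⟪y, p i⟫_ℝ) {k : ℕ} (hk : RR p S = k + 3) (x : Finset ι → ℝ) :
    ∑ T ∈ cv p S, hh p S T * AA p T (res p S x T) (res p S x T) - ((k:ℝ) + 1) * AA p S x x =
    ∑ W, cc p W * DD p S W (vv p W - vv p S) (om p S x W) := by
  have e1 : ∑ T ∈ cv p S, hh p S T * AA p T (res p S x T) (res p S x T) =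
      ∑ T ∈ cv p S, ∑ U ∈ cv p T, ∑ W ∈ cv p U,
        hh p S T * (res p S x T U * (cc p W * res p T (res p S x T) U W)) := by
    unfold AA al
    simp_rw [Finset.mul_sum]
  have e2 : ((k:ℝ) + 1) * AA p S x x = ∑ T ∈ cv p S, ∑ U ∈ cv p T, ∑ W ∈ cv p U,
        x T * (res p S x T U * (cc p W * ⟪vv p W - vv p S, uu p U W⟫_ℝ)) := by
    unfold AA al
    rw [Finset.mul_sum]
    refine Finset.sum_congr rfl fun T hT => ?_
    rw [Finset.mul_sum, Finset.mul_sum]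
    refine Finset.sum_congr rfl fun U hU => ?_
    rw [mem_cv] at hT hU
    have q1 := hT.RR
    have q2 := hU.RR
    have := cc_rec' hb hU.hT (k := k) (by omega) (vv p S)
    rw [← Finset.mul_sum, ← Finset.mul_sum, ← this]; ring
  rw [e1, e2, triple_swap, triple_swap, ← Finset.sum_sub_distrib]
  refine Finset.sum_congr rfl fun W _ => ?_
  unfold DD
  rw [Finset.mul_sum, ← Finset.sum_sub_distrib]
  refine Finset.sum_congr rfl fun T hT => ?_
  rw [Finset.mul_sum, ← Finset.sum_sub_distrib]
  refine Finset.sum_congr rfl fun U hU => ?_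
  have h1 := (mem_FT.1 hT).1
  rw [mem_btw] at hU
  rw [om_a x h1, om_b x h1 hU.1 hU.2, om_n x h1 hU.1 hU.2,
    hh_eq h1 hU.2.hT (hU.1.sub.trans hU.2.sub)]
  ring

lemma DD_nonneg (hb : ∀ y : E, y ≠ 0 → ∃ i, 0 < ⟪y, p i⟫_ℝ) (x : Finset ι → ℝ) (W : Finset ι) :
    0 ≤ DD p S W (vv p W - vv p S) (om p S x W) ∧ (DD p S W (vv p W - vv p S) (om p S x W) = 0 → 
      ∀ T T' U, Cov p S T → Cov p S T' → Cov p T U → Cov p T' U → Cov p U W → T ≠ T' →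
        ⟪om p S x W T, uu p U W⟫_ℝ = ⟪om p S x W T', uu p U W⟫_ℝ) := by
  apply polygon (om_cons x)
  intro T hT
  obtain ⟨h1, U, h2, h3⟩ := mem_FT.1 hT
  rw [hh_eq h1 h3.hT (h2.sub.trans h3.sub)]
  exact hh_pos h1

lemma ccDD_nonneg (hb : ∀ y : E, y ≠ 0 → ∃ i, 0 < ⟪y, p i⟫_ℝ) (x : Finset ι → ℝ) (W : Finset ι) :
    0 ≤ cc p W * DD p S W (vv p W - vv p S) (om p S x W) := by
  by_cases hne : (FT p S W).Nonempty
  · obtain ⟨T, hT⟩ := hne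
    obtain ⟨h1, U, h2, h3⟩ := mem_FT.1 hT
    exact mul_nonneg (cc_pos hb h3.hT).le (DD_nonneg hb x W).1
  · rw [Finset.not_nonempty_iff_eq_empty] at hne
    rw [DD, hne]; simp

lemma L_le (hb : ∀ y : E, y ≠ 0 → ∃ i, 0 < ⟪y, p i⟫_ℝ) {k : ℕ} (hk : RR p S = k + 3) (x : Finset ι → ℝ) :
    ((k:ℝ) + 1) * AA p S x x ≤ ∑ T ∈ cv p S, hh p S T * AA p T (res p S x T) (res p S x T) := by
  have := L_eq hb hk x
  have h2 : 0 ≤ ∑ W, cc p W * DD p S W (vv p W - vv p S) (om p S x W) :=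
    Finset.sum_nonneg fun W _ => ccDD_nonneg hb x W
  linarith

lemma AA_res (hb : ∀ y : E, y ≠ 0 → ∃ i, 0 < ⟪y, p i⟫_ℝ) {k : ℕ} (hk : RR p S = k + 3) (x : Finset ι → ℝ)
    (h1 : Cov p S T) : AA p T (res p S x T) (hh p T) = ((k:ℝ)+1) * al p S x T := by
  have := h1.RR
  rw [AA_hh hb (k := k) (by omega), al]
  congr 1
  refine Finset.sum_congr rfl fun U hU => ?_
  ring

lemma AA_le_al (hb : ∀ y : E, y ≠ 0 → ∃ i, 0 < ⟪y, p i⟫_ℝ) {k : ℕ} (hk : RR p S = k + 3)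
    (hK : ∀ T, Cov p S T → KK p T) (x : Finset ι → ℝ) :
    AA p S x x ≤ ∑ T ∈ cv p S, al p S x T ^ 2 / (((k:ℝ)+2) * cc p T / hh p S T) := by
  have h1 := L_le hb hk x
  have h2 : ∑ T ∈ cv p S, hh p S T * AA p T (res p S x T) (res p S x T) ≤
      ((k:ℝ)+1) * ∑ T ∈ cv p S, al p S x T ^ 2 / (((k:ℝ)+2) * cc p T / hh p S T) := by
    rw [Finset.mul_sum]
    refine Finset.sum_le_sum fun T hT => ?_
    rw [mem_cv] at hT
    have q := hT.RR
    have a1 := AF hb hT.hT (k := k) (by omega) (hK T hT) (res p S x T)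
    rw [AA_res hb hk x hT, AA_hh_hh hb (k := k) (by omega)] at a1
    have hc := cc_pos hb hT.hT
    have hh' := hh_pos hT
    have : AA p T (res p S x T) (res p S x T) ≤ ((k:ℝ)+1) * al p S x T ^ 2 / (((k:ℝ)+2) * cc p T) := by
      rw [le_div_iff₀ (by positivity)]
      have hk1 : (0:ℝ) < k + 1 := by positivity
      nlinarith
    calc _ ≤ hh p S T * (((k:ℝ)+1) * al p S x T ^ 2 / (((k:ℝ)+2) * cc p T)) := by gcongr
      _ = _ := by field_simp
  have hk1 : (0:ℝ) < k + 1 := by positivity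
  exact le_of_mul_le_mul_left (h1.trans h2) hk1

end step
end Izm

namespace Izm

lemma spectral_neg {F : Type*} [NormedAddCommGroup F] [InnerProductSpace ℝ F] [FiniteDimensional ℝ F]
    (A : F →ₗ[ℝ] F) (hA : A.IsSymmetric) (h1 : ∀ x, ⟪A x, x⟫_ℝ ≤ ⟪x, x⟫_ℝ)
    (h2 : ∀ x, ⟪A x, x⟫_ℝ ≤ ⟪A x, A x⟫_ℝ) (x : F) (h3 : ∀ v, A v = v → ⟪v, x⟫_ℝ = 0) :
    ⟪A x, x⟫_ℝ ≤ 0 := by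
  set v := hA.eigenvectorBasis rfl with hv
  set l := hA.eigenvalues rfl with hl
  have hAv : ∀ i, A (v i) = l i • v i := fun i => by
    exact hA.apply_eigenvectorBasis rfl i
  have hvv : ∀ i, ⟪v i, v i⟫_ℝ = 1 := fun i => by
    rw [real_inner_self_eq_norm_sq, v.norm_eq_one]; norm_num
  rw [← v.sum_inner_mul_inner (A x) x]
  apply Finset.sum_nonpos
  intro i _
  have e : ⟪A x, v i⟫_ℝ = l i * ⟪v i, x⟫_ℝ := by
    rw [hA x (v i), hAv, real_inner_smul_right, real_inner_comm]
  rw [e]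
  have a1 := h1 (v i)
  have a2 := h2 (v i)
  rw [hAv, real_inner_smul_left, hvv] at a1
  rw [hAv] at a2
  simp only [real_inner_smul_left, real_inner_smul_right, hvv] at a2
  by_cases h : l i ≤ 0
  · nlinarith [mul_self_nonneg ⟪v i, x⟫_ℝ]
  · have : l i = 1 := by nlinarith
    rw [h3 (v i) (by rw [hAv, this, one_smul])]; simp

section step
variable {ι E : Type*} [Fintype ι] [DecidableEq ι] [NormedAddCommGroup E] [InnerProductSpace ℝ E]
  [FiniteDimensional ℝ E]
variable {p : ι → E} {S T U W : Finset ι}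

lemma res_two (h1 : Cov p S T) (h2 : Cov p T U) {T' : Finset ι} (h1' : Cov p S T') (h2' : Cov p T' U)
    (hne : T ≠ T') : ∃ c s : ℝ, 0 < s ∧ ∀ x, res p S x T U = (x T' - c * x T) / s ∧
      res p S x T' U = (x T - c * x T') / s := by
  obtain ⟨c, s, hs, h, eA, eB⟩ := frame h1 h2 h1' h2' hne
  refine ⟨c, s, hs, fun x => ?_⟩
  have a1 := lift_spec h1 h2 x h1 h2
  have a2 := lift_spec h1 h2 x h1' h2'
  unfold res
  rw [eA, inner_add_right, real_inner_smul_right, real_inner_smul_right, a1] at a2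
  rw [eB, inner_sub_right, real_inner_smul_right, real_inner_smul_right, a1]
  constructor
  · rw [eq_div_iff hs.ne']; linarith
  · rw [eq_div_iff hs.ne', ← a2]; linear_combination (x T) * h

lemma rayleigh (hb : ∀ y : E, y ≠ 0 → ∃ i, 0 < ⟪y, p i⟫_ℝ) {k : ℕ} (hk : RR p S = k + 2)
    (hS : IsF p S) (x : Finset ι → ℝ) :
    AA p S x x ≤ ∑ T ∈ cv p S, ((k:ℝ)+1) * cc p T / hh p S T * x T ^ 2 ∧
    (AA p S x x = ∑ T ∈ cv p S, ((k:ℝ)+1) * cc p T / hh p S T * x T ^ 2 →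
      ∃ t : ℝ, ∀ T, Cov p S T → x T = t * hh p S T) := by
  have e : ∑ T ∈ cv p S, ((k:ℝ)+1) * cc p T / hh p S T * x T ^ 2 - AA p S x x =
      ∑ U ∈ cv2 p S, ∑ T ∈ btw p S U, cc p U * (x T ^ 2 / hh p S T * res p S (hh p S) T U -
        x T * res p S x T U) := by
    rw [← sum_swap]
    unfold AA
    rw [← Finset.sum_sub_distrib]
    refine Finset.sum_congr rfl fun T hT => ?_
    rw [mem_cv] at hT
    rw [← al_hh hb hT hk]
    unfold al
    rw [Finset.mul_sum, Finset.sum_div, Finset.sum_mul, ← Finset.sum_sub_distrib]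
    refine Finset.sum_congr rfl fun U hU => ?_
    ring
  have term : ∀ U T T', Cov p S T → Cov p T U → Cov p S T' → Cov p T' U → T ≠ T' →
      btw p S U = {T, T'} → ∃ s, 0 < s ∧
      ∑ T ∈ btw p S U, cc p U * (x T ^ 2 / hh p S T * res p S (hh p S) T U -
        x T * res p S x T U) = s * (x T / hh p S T - x T' / hh p S T') ^ 2 := by
    intro U T T' h1 h2 h1' h2' hne hbt
    obtain ⟨c, s, hs, hr⟩ := res_two h1 h2 h1' h2' hne
    have p1 := hh_pos h1
    have p2 := hh_pos h1'
    refine ⟨cc p U * hh p S T * hh p S T' / s, ?_, ?_⟩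
    · have := cc_pos hb h2.hT
      positivity
    rw [hbt, Finset.sum_pair hne, (hr x).1, (hr x).2, (hr (hh p S)).1, (hr (hh p S)).2]
    field_simp
    ring
  have nn : ∀ U ∈ cv2 p S, 0 ≤ ∑ T ∈ btw p S U, cc p U * (x T ^ 2 / hh p S T * res p S (hh p S) T U -
        x T * res p S x T U) := by
    intro U hU
    obtain ⟨T, h1, h2⟩ := mem_cv2.1 hU
    obtain ⟨T', h1', h2', hne, hbt⟩ := btw_other h1 h2
    obtain ⟨s, hs, hh⟩ := term U T T' h1 h2 h1' h2' hne hbt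
    rw [hh]; positivity
  constructor
  · have := Finset.sum_nonneg nn
    linarith
  · intro heq
    rw [heq, sub_self] at e
    have hz := (Finset.sum_eq_zero_iff_of_nonneg nn).1 e.symm
    obtain ⟨T₀, hT₀⟩ := cv_nonempty hb hS (rk_lt_of_RR hk)
    refine ⟨x T₀ / hh p S T₀, fun T hT => ?_⟩
    have : x T / hh p S T = x T₀ / hh p S T₀ := by
      refine conn hb (S := S) (by have := rk_le p S; unfold RR at hk; omega) (fun T => x T / hh p S T) ?_ hT hT₀
      intro T T' U h1 h1' h2 h2'
      by_cases hne : T = T'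
      · rw [hne]
      obtain ⟨T'', h1'', h2'', hne', hbt⟩ := btw_other h1 h2
      have : T' = T'' := by
        have : T' ∈ btw p S U := mem_btw.2 ⟨h1', h2'⟩
        rw [hbt, Finset.mem_insert, Finset.mem_singleton] at this
        tauto
      subst this
      obtain ⟨s, hs, hh⟩ := term U T T' h1 h2 h1' h2' hne hbt
      rw [hz U (mem_cv2.2 ⟨T, h1, h2⟩)] at hh
      have := (mul_eq_zero.1 hh.symm).resolve_left hs.ne'
      have := pow_eq_zero_iff (two_ne_zero) |>.1 this
      simpa [sub_eq_zero] using this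
    have h0 := hh_pos hT
    rw [← this]; field_simp

end step
end Izm

namespace Izm
section step
variable {ι E : Type*} [Fintype ι] [DecidableEq ι] [NormedAddCommGroup E] [InnerProductSpace ℝ E]
  [FiniteDimensional ℝ E]
variable {p : ι → E} {S T U W : Finset ι}

lemma sum_cv (f g : Finset ι → ℝ) (hg : ∀ T, T ∉ cv p S → g T = 0) (h : ∀ T ∈ cv p S, f T = g T) :
    ∑ T ∈ cv p S, f T = ∑ T, g T := by
  rw [Finset.sum_congr rfl h]
  exact Finset.sum_subset (Finset.subset_univ _) fun T _ hT => hg T hT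

/-- the abstract negativity statement -/
lemma AA_neg (hb : ∀ y : E, y ≠ 0 → ∃ i, 0 < ⟪y, p i⟫_ℝ) {D : Finset ι → ℝ} (hD : ∀ T, Cov p S T → 0 < D T)
    (h1 : ∀ x, AA p S x x ≤ ∑ T ∈ cv p S, D T * x T ^ 2)
    (h1' : ∀ x, AA p S x x = ∑ T ∈ cv p S, D T * x T ^ 2 → ∃ t : ℝ, ∀ T, Cov p S T → x T = t * hh p S T)
    (h2 : ∀ x, AA p S x x ≤ ∑ T ∈ cv p S, al p S x T ^ 2 / D T) (x : Finset ι → ℝ)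
    (hx : ∑ T ∈ cv p S, x T * (D T * hh p S T) = 0) : AA p S x x ≤ 0 := by
  classical
  set q : Finset ι → ℝ := fun T => if T ∈ cv p S then 1 / √(D T) else 0 with hq
  have hq0 : ∀ T, T ∉ cv p S → q T = 0 := fun T hT => if_neg hT
  have hq1 : ∀ T, T ∈ cv p S → q T = 1 / √(D T) := fun T hT => if_pos hT
  have hq2 : ∀ T ∈ cv p S, q T ^ 2 * D T = 1 := fun T hT => by
    have := hD T (mem_cv.1 hT)
    rw [hq1 T hT, div_pow, Real.sq_sqrt this.le]; field_simp
  have hq3 : ∀ T ∈ cv p S, q T ^ 2 = 1 / D T := fun T hT => by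
    have := hD T (mem_cv.1 hT)
    rw [hq1 T hT, div_pow, Real.sq_sqrt this.le]; field_simp
  let ex : EuclideanSpace ℝ (Finset ι) → Finset ι → ℝ := fun z T => q T * z T
  have ex_add : ∀ y z, ex (y + z) = ex y + ex z := fun y z => by
    funext T; simp [ex, mul_add]
  have ex_smul : ∀ (a : ℝ) z, ex (a • z) = a • ex z := fun a z => by
    funext T; simp [ex]; ring
  let A : EuclideanSpace ℝ (Finset ι) →ₗ[ℝ] EuclideanSpace ℝ (Finset ι) :=
    { toFun := fun z => WithLp.toLp 2 fun T => q T * al p S (ex z) T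
      map_add' := by
        intro y z
        ext T
        simp only [PiLp.add_apply]
        by_cases hT : T ∈ cv p S
        · rw [ex_add, al_add (mem_cv.1 hT)]; ring
        · rw [hq0 T hT]; simp
      map_smul' := by
        intro a z
        ext T
        simp only [PiLp.smul_apply, RingHom.id_apply, smul_eq_mul]
        by_cases hT : T ∈ cv p S
        · rw [ex_smul, al_smul (mem_cv.1 hT)]; ring
        · rw [hq0 T hT]; simp }
  have hAT : ∀ z T, A z T = q T * al p S (ex z) T := fun z T => rfl
  have inn : ∀ y z, ⟪A y, z⟫_ℝ = AA p S (ex z) (ex y) := by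
    intro y z
    rw [PiLp.inner_apply, AA]
    symm
    apply sum_cv
    · intro T hT; rw [hAT, hq0 T hT]; simp
    · intro T hT
      rw [hAT]; simp [ex]; ring
  have hsym : A.IsSymmetric := by
    intro y z
    rw [inn, real_inner_comm, inn, AA_symm]
  have nrm : ∀ z, ∑ T ∈ cv p S, D T * ex z T ^ 2 = ∑ T ∈ cv p S, z T ^ 2 := by
    intro z
    refine Finset.sum_congr rfl fun T hT => ?_
    simp only [ex]
    linear_combination (z T) ^ 2 * hq2 T hT
  have self : ∀ z : EuclideanSpace ℝ (Finset ι), ⟪z, z⟫_ℝ = ∑ T, z T ^ 2 := by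
    intro z
    rw [PiLp.inner_apply]
    refine Finset.sum_congr rfl fun T hT => ?_
    simp [sq]
  set z : EuclideanSpace ℝ (Finset ι) := WithLp.toLp 2 fun T => √(D T) * x T with hz
  have hexz : ∀ T, Cov p S T → ex z T = x T := by
    intro T hT
    have := hD T hT
    have : 0 < √(D T) := Real.sqrt_pos.2 this
    simp only [ex, hz]
    rw [hq1 T (mem_cv.2 hT)]; field_simp
  have main := spectral_neg A hsym ?_ ?_ z ?_
  · rw [inn, AA_congr hexz hexz] at main
    exact main
  · intro y
    rw [inn, self]
    refine (h1 _).trans ?_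
    rw [nrm]
    exact Finset.sum_le_sum_of_subset_of_nonneg (Finset.subset_univ _) fun T _ _ => sq_nonneg _
  · intro y
    rw [inn, self]
    refine (h2 _).trans (le_of_eq ?_)
    apply sum_cv
    · intro T hT; rw [hAT, hq0 T hT]; simp
    · intro T hT; rw [hAT, mul_pow, hq3 T hT]; ring
  · intro v hv
    have hv0 : ∀ T, T ∉ cv p S → v T = 0 := by
      intro T hT
      rw [← hv, hAT, hq0 T hT, zero_mul]
    obtain ⟨t, ht⟩ := h1' (ex v) (by
      rw [← inn, hv, self, nrm]
      symm
      apply sum_cv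
      · intro T hT; rw [hv0 T hT]; simp
      · intro T hT; rfl)
    have : ⟪v, z⟫_ℝ = ∑ T ∈ cv p S, t * (x T * (D T * hh p S T)) := by
      rw [PiLp.inner_apply]
      symm
      apply sum_cv
      · intro T hT; rw [hv0 T hT]; simp
      · intro T hT
        have h3 := ht T (mem_cv.1 hT)
        have hDT := hD T (mem_cv.1 hT)
        have h4 : 0 < √(D T) := Real.sqrt_pos.2 hDT
        have h5 : √(D T) * √(D T) = D T := Real.mul_self_sqrt hDT.le
        simp only [ex] at h3
        rw [hq1 T hT] at h3
        have h6 : v T = t * hh p S T * √(D T) := by rw [← h3]; field_simp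
        simp [hz, h6]
        linear_combination (-(t * x T * hh p S T)) * h5
    rw [this, ← Finset.mul_sum, hx, mul_zero]

lemma KK_step (hb : ∀ y : E, y ≠ 0 → ∃ i, 0 < ⟪y, p i⟫_ℝ) (hS : IsF p S) {k : ℕ} (hk : RR p S = k + 3)
    (hK : ∀ T, Cov p S T → KK p T) : KK p S := by
  have hneg : ∀ x, AA p S x (hh p S) = 0 → AA p S x x ≤ 0 := by
    intro x hx
    refine AA_neg hb (D := fun T => (((k+1:ℕ):ℝ) + 1) * cc p T / hh p S T) ?_ ?_ ?_ ?_ x ?_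
    · intro T hT
      have h1 := hh_pos hT
      have h2 := cc_pos hb hT.hT
      positivity
    · intro x; exact (rayleigh hb (k := k + 1) hk hS x).1
    · intro x; exact (rayleigh hb (k := k + 1) hk hS x).2
    · intro x
      have := AA_le_al hb hk hK x
      refine this.trans (le_of_eq (Finset.sum_congr rfl fun T hT => ?_))
      push_cast
      ring_nf
    · rw [AA_hh hb (k := k + 1) hk] at hx
      rw [← hx, Finset.mul_sum]
      refine Finset.sum_congr rfl fun T hT => ?_
      have h1 := hh_pos (mem_cv.1 hT)
      field_simp
  intro x hx
  refine ⟨hneg x hx, fun hxx => ?_⟩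
  have hal : ∀ T, Cov p S T → al p S x T = 0 := fun T hT => null_al hb hS (k := k + 1) hk hneg hx hxx hT
  have hr0 : ∀ T, Cov p S T → AA p T (res p S x T) (hh p T) = 0 := fun T hT => by
    rw [AA_res hb hk x hT, hal T hT, mul_zero]
  have hLe := L_eq hb hk x
  rw [hxx, mul_zero, sub_zero] at hLe
  have hnn : ∀ W ∈ (Finset.univ : Finset (Finset ι)), 0 ≤ cc p W * DD p S W (vv p W - vv p S) (om p S x W) :=
    fun W _ => ccDD_nonneg hb x W
  have hnp : ∀ T ∈ cv p S, hh p S T * AA p T (res p S x T) (res p S x T) ≤ 0 := fun T hT => by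
    have hT := mem_cv.1 hT
    exact mul_nonpos_of_nonneg_of_nonpos (hh_pos hT).le (hK T hT _ (hr0 T hT)).1
  have s1 := Finset.sum_nonneg hnn
  have s2 := Finset.sum_nonpos hnp
  have z1 := (Finset.sum_eq_zero_iff_of_nonneg hnn).1 (by linarith)
  have z2 := (Finset.sum_eq_zero_iff_of_nonpos hnp).1 (by linarith)
  have hlin : ∀ T, Cov p S T → Lin p T (res p S x T) := by
    intro T hT
    refine (hK T hT _ (hr0 T hT)).2 ?_
    exact (mul_eq_zero.1 (z2 T (mem_cv.2 hT))).resolve_left (hh_pos hT).ne'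
  choose! y hy using hlin
  let Y : Finset ι → E := fun T => (y T - (sp p T).starProjection (y T)) + x T • uu p S T
  have hYp : ∀ T z, z ∈ sp p T → ⟪y T - (sp p T).starProjection (y T), z⟫_ℝ = 0 := by
    intro T z hz
    exact (sp p T).starProjection_inner_eq_zero (y T) z hz
  have hYn : ∀ T U W, Cov p S T → Cov p U W → T ⊆ U → ⟪Y T, uu p U W⟫_ℝ = ⟪y T, uu p U W⟫_ℝ := by
    intro T U W h1 h3 h2
    simp only [Y]
    rw [inner_add_left, inner_sub_left, real_inner_smul_left, h3.u_perp' (sp_mono h2 h1.u_mem),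
      h3.u_perp' (sp_mono h2 ((sp p T).starProjection_apply_mem (y T)))]
    ring
  refine glue hb (by have := rk_le p S; unfold RR at hk; omega) x Y ?_ ?_ ?_ ?_
  · intro T hT
    simp only [Y]
    rw [inner_add_left, hYp T _ hT.u_mem, real_inner_smul_left, hT.u_self]; ring
  · intro T hT z hz
    simp only [Y]
    rw [inner_add_left, hYp T _ (sp_mono hT.sub hz), real_inner_smul_left, hT.u_perp hz]; ring
  · intro T U h1 h2
    rw [hYn T T U h1 h2 (Finset.Subset.refl _), hy T h1 U h2]
  · intro T T' U W h1 h1' h2 h2' h3 hne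
    rw [hYn T U W h1 h3 h2.sub, hYn T' U W h1' h3 h2'.sub]
    have hD : DD p S W (vv p W - vv p S) (om p S x W) = 0 :=
      (mul_eq_zero.1 (z1 W (Finset.mem_univ _))).resolve_left (cc_pos hb h3.hT).ne'
    have := (DD_nonneg hb x W).2 hD T T' U h1 h1' h2 h2' h3 hne
    rw [om_n x h1 h2 h3, om_n x h1' h2' h3, res_congr h2 h3 (hy T h1), res_congr h2' h3 (hy T' h1'),
      res_lin h2 h3, res_lin h2' h3] at this
    exact this

theorem KK_all (hb : ∀ y : E, y ≠ 0 → ∃ i, 0 < ⟪y, p i⟫_ℝ) {k : ℕ} : ∀ {S : Finset ι}, IsF p S →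
    RR p S = k + 2 → KK p S := by
  induction k with
  | zero => intro S hS hk; exact KK_base hb hS hk
  | succ k ih =>
    intro S hS hk
    refine KK_step hb hS (k := k) hk fun T hT => ih hT.hT ?_
    have := hT.RR
    omega

end step
end Izm

namespace Izm
section faces
variable {ι E : Type*} [Fintype ι] [DecidableEq ι] [NormedAddCommGroup E] [InnerProductSpace ℝ E]
  [FiniteDimensional ℝ E]
variable {p : ι → E} {S T U W : Finset ι}

lemma hb_of_interior (h0 : (0 : E) ∈ interior (convexHull ℝ (Set.range p))) :
    ∀ y : E, y ≠ 0 → ∃ i, 0 < ⟪y, p i⟫_ℝ := by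
  intro y hy
  by_contra! hc
  have hsub : convexHull ℝ (Set.range p) ⊆ {z | ⟪y, z⟫_ℝ ≤ 0} := by
    apply convexHull_min
    · rintro _ ⟨i, rfl⟩; exact hc i
    · exact convex_halfSpace_le (innerₗ E y).isLinear 0
  have hev : ∀ᶠ t in nhdsWithin (0:ℝ) (Set.Ioi 0), t • y ∈ convexHull ℝ (Set.range p) := by
    have hc : Filter.Tendsto (fun t : ℝ => t • y) (nhds 0) (nhds ((0:ℝ) • y)) := by
      apply Continuous.tendsto; fun_prop
    rw [zero_smul] at hc
    have := hc.eventually (mem_interior_iff_mem_nhds.1 h0)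
    exact this.filter_mono nhdsWithin_le_nhds
  obtain ⟨t, ht, ht0⟩ := (hev.and self_mem_nhdsWithin).exists
  have h1 : ⟪y, t • y⟫_ℝ ≤ 0 := hsub ht
  rw [real_inner_smul_right] at h1
  have h2 : 0 < ⟪y, y⟫_ℝ := real_inner_self_pos.2 hy
  have h3 : (0:ℝ) < t := ht0
  nlinarith [mul_pos h3 h2]

lemma edge_of_isF {i j : ι} (h : IsF p {i, j}) :
    IsExtreme ℝ (convexHull ℝ (Set.range p)) (segment ℝ (p i) (p j)) := by
  obtain ⟨x, hx1, hx2⟩ := h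
  have hconv : Convex ℝ (segment ℝ (p i) (p j)) := convex_segment _ _
  have hsub : convexHull ℝ (Set.range p) ⊆ {y | ⟪x, y⟫_ℝ ≤ 1 ∧ (⟪x, y⟫_ℝ = 1 → y ∈ segment ℝ (p i) (p j))} := by
    apply convexHull_min
    · rintro _ ⟨k, rfl⟩
      by_cases hk : k ∈ ({i, j} : Finset ι)
      · refine ⟨(hx1 k hk).le, fun _ => ?_⟩
        rw [Finset.mem_insert, Finset.mem_singleton] at hk
        rcases hk with rfl | rfl
        · exact left_mem_segment _ _ _
        · exact right_mem_segment _ _ _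
      · exact ⟨(hx2 k hk).le, fun h => absurd h (hx2 k hk).ne⟩
    · rw [convex_iff_forall_pos]
      rintro y1 ⟨a1, b1⟩ y2 ⟨a2, b2⟩ a b ha hb hab
      simp only [Set.mem_ofPred_eq, inner_add_right, real_inner_smul_right]
      refine ⟨by nlinarith, fun h => ?_⟩
      have e1 : ⟪x, y1⟫_ℝ = 1 := by
        apply le_antisymm a1; nlinarith
      have e2 : ⟪x, y2⟫_ℝ = 1 := by
        apply le_antisymm a2; nlinarith
      exact hconv (b1 e1) (b2 e2) ha.le hb.le hab
  constructor
  · exact (convex_convexHull ℝ _).segment_subset (subset_convexHull _ _ ⟨i, rfl⟩) (subset_convexHull _ _ ⟨j, rfl⟩)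
  · intro y1 h1 y2 h2 z hz hz'
    have hzx : ⟪x, z⟫_ℝ = 1 := by
      obtain ⟨a, b, ha, hb, hab, rfl⟩ := hz
      rw [inner_add_right, real_inner_smul_right, real_inner_smul_right, hx1 i (by simp), hx1 j (by simp)]
      linarith
    obtain ⟨a, b, ha, hb, hab, rfl⟩ := hz'
    rw [inner_add_right, real_inner_smul_right, real_inner_smul_right] at hzx
    have a1 := (hsub h1).1
    have a2 := (hsub h2).1
    apply (hsub h1).2
    apply le_antisymm a1; nlinarith

lemma isF_of_edge (hb : ∀ y : E, y ≠ 0 → ∃ i, 0 < ⟪y, p i⟫_ℝ) (hinj : Function.Injective p)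
    (hvert : ∀ i, p i ∈ Set.extremePoints ℝ (convexHull ℝ (Set.range p))) {i j : ι}
    (he : IsExtreme ℝ (convexHull ℝ (Set.range p)) (segment ℝ (p i) (p j)))
    (hk : ∃ k, k ∉ ({i, j} : Finset ι)) : IsF p {i, j} := by
  set C : Set E := convexHull ℝ (p '' {k | k ∉ ({i, j} : Finset ι)}) with hC
  have hCP : C ⊆ convexHull ℝ (Set.range p) := convexHull_mono (Set.image_subset_range _ _)
  have hpP : ∀ k, p k ∈ convexHull ℝ (Set.range p) := fun k => subset_convexHull _ _ ⟨k, rfl⟩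
  have hCdiff : C ⊆ convexHull ℝ (Set.range p) \ segment ℝ (p i) (p j) := by
    apply convexHull_min
    · rintro _ ⟨k, hk, rfl⟩
      refine ⟨hpP k, fun hs => hk ?_⟩
      rcases (mem_extremePoints_iff_forall_segment.1 (hvert k)).2 _ (hpP i) _ (hpP j) hs with h | h
      · rw [← hinj h]; simp
      · rw [← hinj h]; simp
    · exact he.convex_sdiff (convex_convexHull ℝ _)
  have hdisj : Disjoint C (line[ℝ, p i, p j] : Set E) := by
    rw [Set.disjoint_left]
    intro z hz hl
    refine (hCdiff hz).2 ?_
    obtain ⟨r, rfl⟩ := _root_.mem_affineSpan_pair_iff_exists_lineMap_eq.1 hl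
    set z := AffineMap.lineMap (p i) (p j) r with hzdef
    have hze : z = (1 - r) • p i + r • p j := by rw [hzdef, AffineMap.lineMap_apply_module]
    rcases lt_trichotomy r 1 with h1 | h1 | h1
    · rcases lt_or_ge r 0 with h2 | h2
      · refine he.right_mem_of_mem_openSegment (hpP j) (hCP hz) (left_mem_segment ℝ (p i) (p j))
          ⟨-r / (1 - r), 1 / (1 - r), ?_, ?_, ?_, ?_⟩
        · apply div_pos <;> linarith
        · apply div_pos <;> linarith
        · have : 1 - r ≠ 0 := by linarith
          field_simp; ring
        · have : 1 - r ≠ 0 := by linarith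
          rw [hze, smul_add, smul_smul, smul_smul, one_div_mul_cancel this, one_smul, add_comm, add_assoc,
            ← add_smul]
          have : 1 / (1 - r) * r + -r / (1 - r) = 0 := by field_simp; ring
          rw [this, zero_smul, add_zero]
      · exact ⟨1 - r, r, by linarith, h2, by ring, hze.symm⟩
    · rw [hze, h1]; simp [right_mem_segment]
    · refine he.right_mem_of_mem_openSegment (hpP i) (hCP hz) (right_mem_segment ℝ (p i) (p j))
          ⟨(r - 1) / r, 1 / r, ?_, ?_, ?_, ?_⟩
      · apply div_pos <;> linarith
      · apply div_pos <;> linarith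
      · have : r ≠ 0 := by linarith
        field_simp; ring
      · have : r ≠ 0 := by linarith
        rw [hze, smul_add, smul_smul, smul_smul, one_div_mul_cancel this, one_smul, ← add_assoc,
            ← add_smul]
        have : (r - 1) / r + 1 / r * (1 - r) = 0 := by field_simp; ring
        rw [this, zero_smul, zero_add]
  obtain ⟨f, u, v, h1, h2, h3⟩ := geometric_hahn_banach_compact_closed (convex_convexHull ℝ _)
    ((Set.toFinite _).isCompact_convexHull ℝ) (AffineSubspace.convex _)
    (AffineSubspace.closed_of_finiteDimensional (line[ℝ, p i, p j])) hdisj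
  set y := (InnerProductSpace.toDual ℝ E).symm f with hy
  have hf : ∀ z, f z = ⟪y, z⟫_ℝ := fun z => by rw [hy, InnerProductSpace.toDual_symm_apply]
  have hij : f (p j) = f (p i) := by
    by_contra hne
    have hne' : f (p j) - f (p i) ≠ 0 := sub_ne_zero.2 hne
    have := h3 (AffineMap.lineMap (p i) (p j) ((v - f (p i)) / (f (p j) - f (p i))))
      (_root_.mem_affineSpan_pair_iff_exists_lineMap_eq.2 ⟨_, rfl⟩)
    rw [AffineMap.lineMap_apply_module, map_add, map_smul, map_smul, smul_eq_mul, smul_eq_mul] at this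
    have e : (1 - (v - f (p i)) / (f (p j) - f (p i))) * f (p i) + (v - f (p i)) / (f (p j) - f (p i)) * f (p j) = v := by
      field_simp; ring
    linarith
  have hiv : v < f (p i) := h3 _ (left_mem_affineSpan_pair ℝ (p i) (p j))
  have hlt : ∀ k, k ∉ ({i, j} : Finset ι) → f (p k) < f (p i) := fun k hk => by
    have := h1 (p k) (subset_convexHull _ _ ⟨k, hk, rfl⟩)
    linarith
  have heq : ∀ k, k ∈ ({i, j} : Finset ι) → f (p k) = f (p i) := fun k hk => by
    rw [Finset.mem_insert, Finset.mem_singleton] at hk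
    rcases hk with rfl | rfl
    · rfl
    · exact hij
  have hy0 : y ≠ 0 := by
    intro h
    obtain ⟨k, hk⟩ := hk
    have := hlt k hk
    rw [hf, hf, h] at this
    simp at this
  have hpos : 0 < f (p i) := by
    obtain ⟨k, hk⟩ := hb y hy0
    rw [← hf] at hk
    by_cases hm : k ∈ ({i, j} : Finset ι)
    · rwa [← heq k hm]
    · exact hk.trans (hlt k hm)
  refine ⟨(f (p i))⁻¹ • y, fun k hk => ?_, fun k hk => ?_⟩
  · rw [real_inner_smul_left, ← hf, heq k hk, inv_mul_cancel₀ hpos.ne']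
  · rw [real_inner_smul_left, ← hf, ← div_eq_inv_mul, div_lt_one hpos]
    exact hlt k hk

lemma isF_single (hb : ∀ y : E, y ≠ 0 → ∃ i, 0 < ⟪y, p i⟫_ℝ) (hinj : Function.Injective p)
    (hvert : ∀ i, p i ∈ Set.extremePoints ℝ (convexHull ℝ (Set.range p))) (hd : 1 ≤ finrank ℝ E) (i : ι) :
    IsF p {i} := by
  have := isF_of_edge hb hinj hvert (i := i) (j := i) (by rw [segment_same, isExtreme_singleton]; exact hvert i) ?_
  · simpa using this
  · by_contra! hc
    have hc' : ∀ k, k = i := fun k => by simpa using hc k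
    have : Nontrivial E := Module.finrank_pos_iff.1 hd
    obtain ⟨y, hy⟩ := exists_ne (0 : E)
    obtain ⟨k, hk⟩ := hb y hy
    obtain ⟨l, hl⟩ := hb (-y) (neg_ne_zero.2 hy)
    rw [hc' k] at hk
    rw [hc' l, inner_neg_left] at hl
    linarith

lemma rk_le_card (S : Finset ι) : rk p S ≤ S.card := by
  classical
  have := finrank_span_finset_le_card (R := ℝ) (S.image p)
  rw [Finset.coe_image] at this
  exact this.trans Finset.card_image_le

lemma isF_pair_iff (hb : ∀ y : E, y ≠ 0 → ∃ i, 0 < ⟪y, p i⟫_ℝ) (hinj : Function.Injective p)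
    (hvert : ∀ i, p i ∈ Set.extremePoints ℝ (convexHull ℝ (Set.range p))) (hd : 2 ≤ finrank ℝ E) (i j : ι) :
    IsF p {i, j} ↔ IsExtreme ℝ (convexHull ℝ (Set.range p)) (segment ℝ (p i) (p j)) := by
  refine ⟨edge_of_isF, fun h => isF_of_edge hb hinj hvert h ?_⟩
  by_contra! hc
  have hF := isF_single hb hinj hvert (by omega) i
  -- use a vector orthogonal to `p i`
  have h1 : rk p {i} < finrank ℝ E := by
    have := rk_le_card (p := p) {i}
    rw [Finset.card_singleton] at this; omega
  obtain ⟨y, hy0, hy⟩ := exists_perp h1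
  have hyi := hy _ (mem_sp (Finset.mem_singleton_self i))
  obtain ⟨k, hk⟩ := hb y hy0
  obtain ⟨l, hl⟩ := hb (-y) (neg_ne_zero.2 hy0)
  rw [inner_neg_left] at hl
  have hk' := hc k
  have hl' := hc l
  rw [Finset.mem_insert, Finset.mem_singleton] at hk' hl'
  rcases hk' with rfl | rfl
  · linarith
  · rcases hl' with rfl | rfl <;> linarith

end faces
end Izm

namespace Izm

lemma one_pos {n : ℕ} (M : Matrix (Fin n) (Fin n) ℝ) (hM : M.IsHermitian) (h : Fin n → ℝ)
    (h1 : 0 < h ⬝ᵥ (M.mulVec h)) (h2 : ∀ v, h ⬝ᵥ (M.mulVec v) = 0 → v ⬝ᵥ (M.mulVec v) ≤ 0) :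
    (Finset.univ.filter fun i => 0 < hM.eigenvalues i).card = 1 := by
  set b := hM.eigenvectorBasis with hb
  have hMb : ∀ i, M.mulVec (b i).ofLp = hM.eigenvalues i • (b i).ofLp := fun i =>
    hM.mulVec_eigenvectorBasis i
  have hMT : M.transpose = M := by
    have := hM.eq
    rwa [Matrix.conjTranspose_eq_transpose_of_trivial] at this
  have sym : ∀ v w : Fin n → ℝ, v ⬝ᵥ (M.mulVec w) = w ⬝ᵥ (M.mulVec v) := by
    intro v w
    rw [Matrix.dotProduct_mulVec, ← Matrix.mulVec_transpose, hMT, dotProduct_comm]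
  have inn : ∀ v w : EuclideanSpace ℝ (Fin n), ⟪v, w⟫_ℝ = v.ofLp ⬝ᵥ w.ofLp := by
    intro v w
    rw [PiLp.inner_apply, dotProduct]
    refine Finset.sum_congr rfl fun i _ => ?_
    simp [mul_comm]
  have bb : ∀ i j, (b i).ofLp ⬝ᵥ (b j).ofLp = if i = j then 1 else 0 := fun i j => by
    rw [← inn, orthonormal_iff_ite.1 b.orthonormal]
  apply le_antisymm
  · rw [Finset.card_le_one]
    intro i hi j hj
    simp only [Finset.mem_filter, Finset.mem_univ, true_and] at hi hj
    by_contra hne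
    set s := h ⬝ᵥ (M.mulVec (b i).ofLp)
    set t := h ⬝ᵥ (M.mulVec (b j).ofLp)
    have key : ∀ a c : ℝ, a * s + c * t = 0 → a ^ 2 * hM.eigenvalues i + c ^ 2 * hM.eigenvalues j ≤ 0 := by
      intro a c hac
      have := h2 (a • (b i).ofLp + c • (b j).ofLp) (by
        rw [Matrix.mulVec_add, Matrix.mulVec_smul, Matrix.mulVec_smul, dotProduct_add, dotProduct_smul,
          dotProduct_smul]
        exact hac)
      rw [Matrix.mulVec_add, Matrix.mulVec_smul, Matrix.mulVec_smul, hMb, hMb] at this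
      simp only [dotProduct_add, add_dotProduct, dotProduct_smul, smul_dotProduct, bb, smul_eq_mul] at this
      simp only [if_true, if_neg hne, if_neg (Ne.symm hne)] at this
      linarith
    by_cases hs : s = 0
    · have := key 1 0 (by rw [hs]; ring)
      linarith
    · have := key t (-s) (by ring)
      have hs2 : 0 < s ^ 2 := by positivity
      have := mul_pos hs2 hj
      have := mul_nonneg (sq_nonneg t) hi.le
      linarith
  · rw [Nat.one_le_iff_ne_zero, Finset.card_ne_zero]
    by_contra hne
    rw [Finset.not_nonempty_iff_eq_empty, Finset.filter_eq_empty_iff] at hne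
    have := b.sum_inner_mul_inner (WithLp.toLp 2 h) (WithLp.toLp 2 (M.mulVec h))
    rw [inn] at this
    simp only at this
    rw [← this] at h1
    refine absurd h1 (not_lt.2 (Finset.sum_nonpos fun i _ => ?_))
    rw [inn, inn]
    simp only
    rw [sym, hMb, dotProduct_smul, smul_eq_mul, dotProduct_comm]
    have := not_lt.1 (hne (Finset.mem_univ i))
    nlinarith [mul_self_nonneg ((b i).ofLp ⬝ᵥ h)]

lemma finish {n d : ℕ} (p : Fin n → EuclideanSpace ℝ (Fin d))
    (hb : ∀ y : EuclideanSpace ℝ (Fin d), y ≠ 0 → ∃ i, 0 < ⟪y, p i⟫_ℝ)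
    (M : Matrix (Fin n) (Fin n) ℝ) (hM : M.IsHermitian)
    (hker : ∀ v, M.mulVec v = 0 → ∃ y, ∀ i, v i = ⟪y, p i⟫_ℝ)
    (hlin : ∀ y, M.mulVec (fun i => ⟪y, p i⟫_ℝ) = 0) :
    Module.finrank ℝ ↥(LinearMap.ker M.mulVecLin) = d ∧ (∀ i, ∑ j, M i j • p j = 0) := by
  constructor
  · let Φ : EuclideanSpace ℝ (Fin d) →ₗ[ℝ] (Fin n → ℝ) :=
      { toFun := fun y i => ⟪y, p i⟫_ℝ
        map_add' := fun y z => by funext i; simp [inner_add_left]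
        map_smul' := fun a y => by funext i; simp [real_inner_smul_left] }
    have hΦ : ∀ y i, Φ y i = ⟪y, p i⟫_ℝ := fun y i => rfl
    have hinj : Function.Injective Φ := by
      rw [injective_iff_map_eq_zero]
      intro y hy
      by_contra hne
      obtain ⟨i, hi⟩ := hb y hne
      rw [← hΦ, hy] at hi
      exact lt_irrefl _ hi
    have hr : LinearMap.ker M.mulVecLin = LinearMap.range Φ := by
      ext v
      rw [LinearMap.mem_ker, Matrix.mulVecLin_apply, LinearMap.mem_range]
      constructor
      · intro h
        obtain ⟨y, hy⟩ := hker v h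
        exact ⟨y, funext fun i => (hy i).symm⟩
      · rintro ⟨y, rfl⟩
        exact hlin y
    rw [hr, LinearMap.finrank_range_of_inj hinj, finrank_euclideanSpace_fin]
  · intro i
    apply ext_inner_left ℝ
    intro y
    have := congrFun (hlin y) i
    rw [inner_sum, inner_zero_right]
    simp only [Matrix.mulVec, dotProduct, Pi.zero_apply] at this
    rw [← this]
    refine Finset.sum_congr rfl fun j _ => ?_
    rw [real_inner_smul_right]

section struct
variable {ι E : Type*} [Fintype ι] [DecidableEq ι] [NormedAddCommGroup E] [InnerProductSpace ℝ E]
  [FiniteDimensional ℝ E]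
variable {p : ι → E} {S T U W : Finset ι}

lemma isF_empty : IsF p (∅ : Finset ι) := ⟨0, by simp, by simp⟩

lemma rk_empty : rk p (∅ : Finset ι) = 0 := by
  rw [rk, sp, Finset.coe_empty, Set.image_empty, Submodule.span_empty, finrank_bot]

lemma cov_single (h : ∀ i, IsF p {i}) (i : ι) : Cov p ∅ {i} := by
  refine ⟨isF_empty, h i, Finset.empty_subset _, ?_⟩
  have h1 := rk_lt isF_empty (h i) (Finset.ssubset_iff_subset_ne.2 ⟨Finset.empty_subset _, by simp⟩)
  have h2 := rk_le_card (p := p) {i}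
  rw [Finset.card_singleton] at h2
  rw [rk_empty] at *
  omega

lemma cov_empty_iff (h : ∀ i, IsF p {i}) : Cov p ∅ T ↔ ∃ i, T = {i} := by
  constructor
  · intro hT
    obtain ⟨i, hi, -⟩ := Finset.exists_of_ssubset hT.ssub
    refine ⟨i, (eq_of_rk_le (h i) hT.hT (by simpa using hi) ?_).symm⟩
    rw [hT.rk, (cov_single h i).rk]
  · rintro ⟨i, rfl⟩; exact cov_single h i

lemma sum_cv_empty (h : ∀ i, IsF p {i}) (f : Finset ι → ℝ) : ∑ T ∈ cv p ∅, f T = ∑ i, f {i} := by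
  have : cv p ∅ = Finset.univ.image (fun i : ι => ({i} : Finset ι)) := by
    ext T
    rw [mem_cv, cov_empty_iff h]
    simp [eq_comm]
  rw [this, Finset.sum_image]
  intro i _ j _ hij
  simpa using hij

lemma uu_single (h : ∀ i, IsF p {i}) (i : ι) : ∃ a : ℝ, 0 < a ∧ uu p ∅ {i} = a • p i := by
  have hc := cov_single h i
  have hm := hc.u_mem
  rw [sp, Finset.coe_singleton, Set.image_singleton, Submodule.mem_span_singleton] at hm
  obtain ⟨a, ha⟩ := hm
  refine ⟨a, ?_, ha.symm⟩
  have h1 := hc.u_pos (Finset.mem_singleton_self i) (by simp)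
  rw [← ha, real_inner_smul_left] at h1
  have h2 : 0 ≤ ⟪p i, p i⟫_ℝ := real_inner_self_nonneg
  by_contra hn
  nlinarith

lemma cov_pair (h : ∀ i, IsF p {i}) {i j : ι} (hij : i ≠ j) (hF : IsF p {i, j}) : Cov p {i} {i, j} := by
  refine ⟨h i, hF, by simp, ?_⟩
  have h1 := rk_lt (h i) hF (by
    rw [Finset.ssubset_iff_subset_ne]; refine ⟨by simp, fun he => hij ?_⟩
    have : j ∈ ({i} : Finset ι) := by rw [he]; simp
    exact (Finset.mem_singleton.1 this).symm)
  have h2 := rk_le_card (p := p) {i, j}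
  have h3 : ({i, j} : Finset ι).card ≤ 2 := Finset.card_le_two
  have h4 := (cov_single h i).rk
  rw [rk_empty] at h4
  omega

lemma cov_two (h : ∀ i, IsF p {i}) {i j : ι} (hU : Cov p {i} U) (hj : j ∈ U) : Cov p {j} U := by
  refine ⟨h j, hU.hT, by simpa using hj, ?_⟩
  rw [hU.rk, (cov_single h i).rk, (cov_single h j).rk]

/-- indicator -/
noncomputable def ee (j : ι) : Finset ι → ℝ := fun T => if T = {j} then 1 else 0

lemma res_ee (h : ∀ i, IsF p {i}) {i j : ι} (hij : i ≠ j) (hU : Cov p {i} U) :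
    (j ∈ U → 0 < res p ∅ (ee j) {i} U ∧ U = {i, j}) ∧ (j ∉ U → res p ∅ (ee j) {i} U = 0) := by
  obtain ⟨T', h1, h2, hne, hbt⟩ := btw_other (cov_single h i) hU
  obtain ⟨k, rfl⟩ := (cov_empty_iff h).1 h1
  have hmem : ∀ l ∈ U, l = i ∨ l = k := by
    intro l hl
    have : {l} ∈ btw p ∅ U := mem_btw.2 ⟨cov_single h l, cov_two h hU hl⟩
    rw [hbt] at this
    simpa using this
  have hiU : i ∈ U := hU.sub (by simp)
  have hkU : k ∈ U := h2.sub (by simp)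
  obtain ⟨c, s, hs, hr⟩ := res_two (cov_single h i) hU h1 h2 hne
  rw [(hr (ee j)).1]
  have e1 : ee j ({i} : Finset ι) = 0 := by simp [ee, hij]
  rw [e1]
  constructor
  · intro hj
    have : j = k := (hmem j hj).resolve_left (Ne.symm hij)
    subst this
    refine ⟨by simp [ee, hs], ?_⟩
    ext l
    rw [Finset.mem_insert, Finset.mem_singleton]
    exact ⟨hmem l, by rintro (rfl | rfl) <;> assumption⟩
  · intro hj
    have : k ≠ j := by rintro rfl; exact hj hkU
    simp [ee, this]

lemma al_ee_pos (hb : ∀ y : E, y ≠ 0 → ∃ i, 0 < ⟪y, p i⟫_ℝ) (h : ∀ i, IsF p {i}) {i j : ι} (hij : i ≠ j)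
    (hF : IsF p {i, j}) : 0 < al p ∅ (ee j) {i} := by
  unfold al
  apply Finset.sum_pos'
  · intro U hU
    rw [mem_cv] at hU
    have hc := cc_pos hb hU.hT
    by_cases hj : j ∈ U
    · exact (mul_pos hc ((res_ee h hij hU).1 hj).1).le
    · rw [(res_ee h hij hU).2 hj, mul_zero]
  · have hU := cov_pair h hij hF
    refine ⟨{i, j}, mem_cv.2 hU, ?_⟩
    exact mul_pos (cc_pos hb hF) ((res_ee h hij hU).1 (by simp)).1

lemma al_ee_zero (h : ∀ i, IsF p {i}) {i j : ι} (hij : i ≠ j)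
    (hF : ¬ IsF p {i, j}) : al p ∅ (ee j) {i} = 0 := by
  unfold al
  apply Finset.sum_eq_zero
  intro U hU
  rw [mem_cv] at hU
  by_cases hj : j ∈ U
  · have := ((res_ee h hij hU).1 hj).2
    rw [← this] at hF
    exact absurd hU.hT hF
  · rw [(res_ee h hij hU).2 hj, mul_zero]

/-- vectors to data -/
noncomputable def XX (a v : ι → ℝ) : Finset ι → ℝ := ∑ j, (a j * v j) • ee j

lemma XX_single (a v : ι → ℝ) (i : ι) : XX a v ({i} : Finset ι) = a i * v i := by
  rw [XX, Finset.sum_apply, Finset.sum_eq_single i]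
  · simp [ee]
  · intro j _ hj; simp [ee, hj.symm]
  · simp

lemma al_XX (h : ∀ i, IsF p {i}) (a v : ι → ℝ) (i : ι) :
    al p ∅ (XX a v) {i} = ∑ j, al p ∅ (ee j) {i} * (a j * v j) := by
  let L : (Finset ι → ℝ) →ₗ[ℝ] ℝ :=
    { toFun := fun x => al p ∅ x {i}
      map_add' := fun x y => al_add (cov_single h i) x y
      map_smul' := fun c x => al_smul (cov_single h i) c x }
  have : al p ∅ (XX a v) {i} = L (XX a v) := rfl
  rw [this, XX, map_sum]
  refine Finset.sum_congr rfl fun j _ => ?_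
  rw [map_smul, smul_eq_mul, mul_comm]; rfl

end struct
end Izm

namespace Izm

lemma low {n d : ℕ} (p : Fin n → EuclideanSpace ℝ (Fin d))
    (hb : ∀ y : EuclideanSpace ℝ (Fin d), y ≠ 0 → ∃ i, 0 < ⟪y, p i⟫_ℝ)
    (w : Fin n → ℝ) (hw : ∀ i, 0 < w i) (hn : 0 < n)
    (hedge : ∀ i j, i ≠ j → IsEdge p i j)
    (hker : ∀ v, w ⬝ᵥ v = 0 → ∃ y, ∀ i, v i = ⟪y, p i⟫_ℝ)
    (hlin : ∀ y, ∑ i, w i * ⟪y, p i⟫_ℝ = 0) :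
    ∃ (M : Matrix (Fin n) (Fin n) ℝ) (hM : M.IsHermitian),
      (∀ i j, IsEdge p i j → 0 < M i j) ∧
      (∀ i j, i ≠ j → ¬ IsEdge p i j → M i j = 0) ∧
      Module.finrank ℝ ↥(LinearMap.ker M.mulVecLin) = d ∧
      (∀ i, ∑ j, M i j • p j = 0) ∧
      (Finset.univ.filter fun i => 0 < hM.eigenvalues i).card = 1 := by
  let M : Matrix (Fin n) (Fin n) ℝ := Matrix.of fun i j => w i * w j
  have hMv : ∀ v, M.mulVec v = (w ⬝ᵥ v) • w := by
    intro v
    funext i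
    simp only [Matrix.mulVec, dotProduct, M, Matrix.of_apply, Pi.smul_apply, smul_eq_mul, Finset.sum_mul]
    refine Finset.sum_congr rfl fun j _ => by ring
  have hM : M.IsHermitian := by
    ext i j
    simp [M, Matrix.conjTranspose_apply, mul_comm]
  have hww : 0 < w ⬝ᵥ w := by
    have : Nonempty (Fin n) := ⟨⟨0, hn⟩⟩
    exact Finset.sum_pos (fun i _ => mul_pos (hw i) (hw i)) Finset.univ_nonempty
  have hf := finish p hb M hM (by
    intro v hv
    apply hker
    rw [hMv] at hv
    rcases smul_eq_zero.1 hv with h | h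
    · exact h
    · rw [h] at hww; simp at hww) (by
    intro y
    rw [hMv]
    have : w ⬝ᵥ (fun i => ⟪y, p i⟫_ℝ) = 0 := hlin y
    rw [this, zero_smul])
  refine ⟨M, hM, fun i j _ => mul_pos (hw i) (hw j), fun i j hij hne => absurd (hedge i j hij) hne,
    hf.1, hf.2, one_pos M hM w ?_ ?_⟩
  · rw [hMv, dotProduct_smul, smul_eq_mul]; positivity
  · intro v hv
    rw [hMv, dotProduct_smul, smul_eq_mul] at hv
    have := (mul_eq_zero.1 hv).resolve_right hww.ne'
    rw [hMv, this]; simp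

lemma high {n d : ℕ} (p : Fin n → EuclideanSpace ℝ (Fin d)) (hinj : Function.Injective p)
    (hvert : ∀ i, p i ∈ Set.extremePoints ℝ (convexHull ℝ (Set.range p)))
    (hb : ∀ y : EuclideanSpace ℝ (Fin d), y ≠ 0 → ∃ i, 0 < ⟪y, p i⟫_ℝ) {k : ℕ} (hd : d = k + 2) :
    ∃ (M : Matrix (Fin n) (Fin n) ℝ) (hM : M.IsHermitian),
      (∀ i j, IsEdge p i j → 0 < M i j) ∧
      (∀ i j, i ≠ j → ¬ IsEdge p i j → M i j = 0) ∧
      Module.finrank ℝ ↥(LinearMap.ker M.mulVecLin) = d ∧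
      (∀ i, ∑ j, M i j • p j = 0) ∧
      (Finset.univ.filter fun i => 0 < hM.eigenvalues i).card = 1 := by
  have hfr : finrank ℝ (EuclideanSpace ℝ (Fin d)) = d := finrank_euclideanSpace_fin
  have h : ∀ i, IsF p {i} := isF_single hb hinj hvert (by omega)
  have hRR : RR p ∅ = k + 2 := by unfold RR; rw [rk_empty, hfr]; omega
  have hK : KK p ∅ := KK_all hb isF_empty hRR
  have hE := isF_pair_iff hb hinj hvert (by omega)
  choose a ha hau using uu_single h
  let M : Matrix (Fin n) (Fin n) ℝ := Matrix.of fun i j => a i * (al p ∅ (ee j) {i} * a j)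
  have hMv : ∀ v i, M.mulVec v i = a i * al p ∅ (XX a v) {i} := by
    intro v i
    rw [al_XX h, Finset.mul_sum]
    simp only [Matrix.mulVec, dotProduct, M, Matrix.of_apply]
    refine Finset.sum_congr rfl fun j _ => by ring
  have hform : ∀ w v, w ⬝ᵥ M.mulVec v = AA p ∅ (XX a w) (XX a v) := by
    intro w v
    rw [AA, sum_cv_empty h, dotProduct]
    refine Finset.sum_congr rfl fun i _ => ?_
    rw [hMv, XX_single]; ring
  have hAe : ∀ i j, AA p ∅ (ee i) (ee j) = al p ∅ (ee j) {i} := by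
    intro i j
    rw [AA, sum_cv_empty h, Finset.sum_eq_single i]
    · simp [ee]
    · intro l _ hl; simp [ee, hl]
    · simp
  have hM : M.IsHermitian := by
    ext i j
    simp only [M, Matrix.conjTranspose_apply, Matrix.of_apply, star_trivial]
    rw [← hAe, ← hAe, AA_symm]; ring
  have hX : ∀ x : Finset (Fin n) → ℝ, ∀ T, Cov p ∅ T → XX a (fun i => x {i} / a i) T = x T := by
    intro x T hT
    obtain ⟨i, rfl⟩ := (cov_empty_iff h).1 hT
    rw [XX_single]
    have := ha i
    field_simp
  have hXl : ∀ y, ∀ T, Cov p ∅ T → XX a (fun i => ⟪y, p i⟫_ℝ) T = ⟪y, uu p ∅ T⟫_ℝ := by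
    intro y T hT
    obtain ⟨i, rfl⟩ := (cov_empty_iff h).1 hT
    rw [XX_single, hau, real_inner_smul_right]
  have hf := finish p hb M hM (by
    intro v hv
    have hal : ∀ i, al p ∅ (XX a v) {i} = 0 := by
      intro i
      have := congrFun hv i
      rw [hMv] at this
      exact (mul_eq_zero.1 this).resolve_left (ha i).ne'
    have hz : ∀ x, AA p ∅ x (XX a v) = 0 := by
      intro x
      rw [AA, sum_cv_empty h]
      exact Finset.sum_eq_zero fun i _ => by rw [hal, mul_zero]
    obtain ⟨y, hy⟩ := (hK (XX a v) (by rw [AA_symm, hz])).2 (hz _)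
    refine ⟨y, fun i => ?_⟩
    have := hy {i} (cov_single h i)
    rw [XX_single, hau, real_inner_smul_right] at this
    exact mul_left_cancel₀ (ha i).ne' this) (by
    intro y
    funext i
    rw [hMv, al_congr (cov_single h i) (hXl y), al_lin hb (cov_single h i) hRR]
    simp)
  have hAl : ∀ x, AA p ∅ (XX a (fun i => hh p ∅ {i} / a i)) x = AA p ∅ (hh p ∅) x := fun x =>
    AA_congr (hX (hh p ∅)) (fun _ _ => rfl)
  refine ⟨M, hM, ?_, ?_, hf.1, hf.2, one_pos M hM (fun i => hh p ∅ {i} / a i) ?_ ?_⟩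
  · intro i j hij
    exact mul_pos (ha i) (mul_pos (al_ee_pos hb h hij.1 ((hE i j).2 hij.2)) (ha j))
  · intro i j hij hne
    have : ¬ IsF p {i, j} := fun hF => hne ⟨hij, (hE i j).1 hF⟩
    simp only [M, Matrix.of_apply]
    rw [al_ee_zero h hij this]; ring
  · rw [hform, hAl, AA_symm, hAl]
    exact AA_hh_pos hb isF_empty hRR
  · intro v hv
    rw [hform, hAl, AA_symm] at hv
    rw [hform]
    exact (hK _ hv).1

end Izm

theorem izmestiev_matrix_exists {n d : ℕ}
    (p : Fin n → EuclideanSpace ℝ (Fin d)) (hinj : Function.Injective p)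
    (hvert : ∀ i, p i ∈ Set.extremePoints ℝ (convexHull ℝ (Set.range p)))
    (h0 : (0 : EuclideanSpace ℝ (Fin d)) ∈ interior (convexHull ℝ (Set.range p))) :
    ∃ (M : Matrix (Fin n) (Fin n) ℝ) (hM : M.IsHermitian),
      (∀ i j, IsEdge p i j → 0 < M i j) ∧
      (∀ i j, i ≠ j → ¬ IsEdge p i j → M i j = 0) ∧
      Module.finrank ℝ ↥(LinearMap.ker M.mulVecLin) = d ∧
      (∀ i, ∑ j, M i j • p j = 0) ∧
      (Finset.univ.filter fun i => 0 < hM.eigenvalues i).card = 1 := by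
  have hb := Izm.hb_of_interior h0
  have hn : 0 < n := by
    rcases Nat.eq_zero_or_pos n with rfl | h
    · have := interior_subset h0
      simp at this
    · exact h
  rcases d with _ | _ | k
  · have hsub : Subsingleton (Fin n) := ⟨fun i j => hinj (Subsingleton.elim _ _)⟩
    refine Izm.low p hb (fun _ => 1) (fun _ => one_pos) hn (fun i j hij => absurd (Subsingleton.elim i j) hij)
      ?_ ?_
    · intro v hv
      refine ⟨0, fun i => ?_⟩
      have : (Finset.univ : Finset (Fin n)) = {i} := by ext j; simp [Subsingleton.elim j i]
      rw [dotProduct, this, Finset.sum_singleton, one_mul] at hv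
      rw [hv, inner_zero_left]
    · intro y
      rw [Subsingleton.elim y 0]; simp
  · have hfr : finrank ℝ (EuclideanSpace ℝ (Fin (0 + 1))) = 1 := finrank_euclideanSpace_fin
    have h : ∀ i, Izm.IsF p {i} := Izm.isF_single hb hinj hvert (by omega)
    choose a ha hau using Izm.uu_single h
    let i : Fin n := ⟨0, hn⟩
    obtain ⟨T', h1, hne, hcv, hu⟩ := Izm.top_other hb (Izm.cov_single h i) (by
      rw [(Izm.cov_single h i).rk, Izm.rk_empty, hfr])
    obtain ⟨j, rfl⟩ := (Izm.cov_empty_iff h).1 h1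
    have hij : i ≠ j := fun he => hne (by rw [he])
    have hall : ∀ l, l = i ∨ l = j := by
      intro l
      have : {l} ∈ Izm.cv p ∅ := Izm.mem_cv.2 (Izm.cov_single h l)
      rw [hcv] at this
      simpa using this
    have huniv : (Finset.univ : Finset (Fin n)) = {i, j} := by
      ext l; simpa using hall l
    have hrel : a j • p j = - (a i • p i) := by rw [← hau, ← hau, hu]
    have hrel' : ∀ y, a j * ⟪y, p j⟫_ℝ = - (a i * ⟪y, p i⟫_ℝ) := fun y => by
      rw [← real_inner_smul_right, hrel, inner_neg_right, real_inner_smul_right]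
    have hrange : Set.range p = {p i, p j} := by
      ext z
      constructor
      · rintro ⟨l, rfl⟩
        rcases hall l with rfl | rfl <;> simp
      · rintro (rfl | rfl)
        exacts [⟨i, rfl⟩, ⟨j, rfl⟩]
    have hP : convexHull ℝ (Set.range p) = segment ℝ (p i) (p j) := by
      rw [hrange, convexHull_pair]
    refine Izm.low p hb a ha hn ?_ ?_ ?_
    · intro l m hlm
      refine ⟨hlm, ?_⟩
      have : segment ℝ (p l) (p m) = convexHull ℝ (Set.range p) := by
        rw [hP]
        rcases hall l with rfl | rfl <;> rcases hall m with rfl | rfl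
        · exact absurd rfl hlm
        · rfl
        · exact segment_symm _ _ _
        · exact absurd rfl hlm
      rw [this]
    · intro v hv
      rw [dotProduct, huniv, Finset.sum_pair hij] at hv
      have hpi : p i ≠ 0 := by
        intro h0
        have := (Izm.cov_single h i).u_self
        rw [hau, h0] at this
        simp at this
      have hpos : 0 < ⟪p i, p i⟫_ℝ := real_inner_self_pos.2 hpi
      have hi : v i = ⟪(v i / ⟪p i, p i⟫_ℝ) • p i, p i⟫_ℝ := by
        rw [real_inner_smul_left]; field_simp
      refine ⟨(v i / ⟪p i, p i⟫_ℝ) • p i, fun l => ?_⟩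
      rcases hall l with rfl | rfl
      · exact hi
      · apply mul_left_cancel₀ (ha l).ne'
        rw [hrel', ← hi]; linarith
    · intro y
      rw [huniv, Finset.sum_pair hij, hrel']; ring
  · exact Izm.high p hinj hvert hb rfl
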